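/- Let F : ℝ² → ℝ² be a lift of a homeomorphism f of the two-torus homotopic to the identity. Suppose f is non-wandering and the rotation set ρ(F) has non-empty interior. Then for every open, bounded and connected set U ⊆ T² one of the following holds: (i) ρ_U(F) = {ρ} for a single rational vector ρ ∈ ℚ², and there exist p ≥ 1 and an open, connected, simply connected set D ⊆ T² (an embedded topological open disk) with U ⊆ D, f^p(D) = D, and a point z ∈ D with f^p(z) = z; or (ii) the convex hull of ρ_U(F) has non-empty interior. -/

import Mathlib

noncomputable section
open Filter Topology Metric Set MeasureTheory

/-- Euclidean space `ℝ^d`. -/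
abbrev E (d : ℕ) := EuclideanSpace ℝ (Fin d)

/-- The integer lattice `ℤ^d` as an additive subgroup of `ℝ^d`. -/
def ZLat (d : ℕ) : AddSubgroup (E d) where
  carrier := {z | ∀ i, ∃ m : ℤ, z i = (m : ℝ)}
  zero_mem' := fun i => ⟨0, by simp⟩
  add_mem' := by
    intro x y hx hy i
    obtain ⟨m, hm⟩ := hx i
    obtain ⟨n, hn⟩ := hy i
    exact ⟨m + n, by simp [PiLp.add_apply, hm, hn]⟩
  neg_mem' := by
    intro x hx i
    obtain ⟨m, hm⟩ := hx i
    exact ⟨-m, by simp [PiLp.neg_apply, hm]⟩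

/-- The torus `T^d = ℝ^d / ℤ^d`. -/
abbrev T (d : ℕ) := E d ⧸ ZLat d

/-- The canonical projection `π : ℝ^d → T^d`. -/
def tpi (d : ℕ) : E d → T d := QuotientAddGroup.mk

/-- The set of rotation vectors of orbit segments starting in `W ⊆ ℝ^d`:
`{ρ | ∃ nᵢ → ∞, zᵢ ∈ W, (F^{nᵢ}(zᵢ) - zᵢ)/nᵢ → ρ}`. -/
def rotRel {d : ℕ} (F : E d → E d) (W : Set (E d)) : Set (E d) :=
  {ρ | ∃ (n : ℕ → ℕ) (z : ℕ → E d),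
    Tendsto n atTop atTop ∧ (∀ i, z i ∈ W) ∧
    Tendsto (fun i => (n i : ℝ)⁻¹ • (F^[n i] (z i) - z i)) atTop (𝓝 ρ)}

/-- The Misiurewicz–Ziemian rotation set `ρ(F)` of a lift `F`. -/
def rotSet {d : ℕ} (F : E d → E d) : Set (E d) := rotRel F Set.univ

/-- The rotation subset `ρ_U(F)` for `U ⊆ T^d` (starting points in `π⁻¹(U)`). -/
def rotU {d : ℕ} (F : E d → E d) (U : Set (T d)) : Set (E d) :=
  rotRel F (tpi d ⁻¹' U)

/-- `F` is a lift of the torus homeomorphism `f` (which is then homotopic to the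
identity, as expressed by commutation with the deck translations). -/
def IsLift {d : ℕ} (F : E d ≃ₜ E d) (f : T d ≃ₜ T d) : Prop :=
  (∀ z : E d, tpi d (F z) = f (tpi d z)) ∧ ∀ z : E d, ∀ m ∈ ZLat d, F (z + m) = F z + m

/-- `U ⊆ T^d` is bounded: the connected components of `π⁻¹(U)` are bounded. -/
def BoundedSet {d : ℕ} (U : Set (T d)) : Prop :=
  ∀ z ∈ tpi d ⁻¹' U, Bornology.IsBounded (connectedComponentIn (tpi d ⁻¹' U) z)

/-- `U ⊆ T^d` is recurrent: `f^n(U) ∩ U ≠ ∅` for infinitely many `n ≥ 1`. -/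
def Recurrent {d : ℕ} (f : T d ≃ₜ T d) (U : Set (T d)) : Prop :=
  {n : ℕ | 1 ≤ n ∧ ((⇑f)^[n] '' U ∩ U).Nonempty}.Infinite

/-- The Euclidean scalar product `⟨z, v⟩` in `ℝ²`. -/
def sdot (v z : E 2) : ℝ := z 0 * v 0 + z 1 * v 1

/-- `⟨z, v^⊥⟩` where `v^⊥ = (-v₂, v₁)`. -/
def pdot (v z : E 2) : ℝ := z 1 * v 0 - z 0 * v 1

/-- The affine line `L_{λ,v} = λv + {v}^⊥ = {z | ⟨z,v⟩ = λ⟨v,v⟩}`. -/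
def lineL (lam : ℝ) (v : E 2) : Set (E 2) := {z | sdot v z = lam * sdot v v}

/-- A vector of `ℝ²` is rational if both coordinates are rational. -/
def RatVec (z : E 2) : Prop := (∃ q : ℚ, z 0 = (q : ℝ)) ∧ ∃ q : ℚ, z 1 = (q : ℝ)



/-! ### Logarithm lifts and the crossing lemma -/

lemma ei_log_star {V : Type*} [AddCommGroup V] [Module ℝ V] [TopologicalSpace V]
    [IsTopologicalAddGroup V] [ContinuousSMul ℝ V] {S : Set V} {p : V} (hp : p ∈ S)
    (hS : StarConvex ℝ p S) {g : V → ℂ} (hg : ContinuousOn g S) (h0 : ∀ x ∈ S, g x ≠ 0) :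
    ∃ f : V → ℂ, ContinuousOn f S ∧ ∀ x ∈ S, Complex.exp (f x) = g x := by
  classical
  have hmem : ∀ (t : unitInterval) (x : S), p + (t : ℝ) • ((x : V) - p) ∈ S := by
    intro t x
    have := hS x.2 (a := 1 - (t : ℝ)) (b := t) (by linarith [t.2.2]) t.2.1 (by ring)
    convert this using 1
    rw [smul_sub, sub_smul, one_smul]; abel
  let H : C(unitInterval × S, {z : ℂ // z ≠ 0}) :=
    { toFun := fun q => ⟨g (p + (q.1 : ℝ) • ((q.2 : V) - p)), h0 _ (hmem q.1 q.2)⟩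
      continuous_toFun := by
        refine Continuous.subtype_mk ?_ _
        refine hg.comp_continuous ?_ (fun q => hmem q.1 q.2)
        fun_prop }
  let f0 : C(S, ℂ) := ContinuousMap.const S (Complex.log (g p))
  have H0 : ∀ a, H (0, a) = ⟨Complex.exp (f0 a), Complex.exp_ne_zero _⟩ := by
    intro a
    apply Subtype.ext
    simp [H, f0, Complex.exp_log (h0 p hp)]
  let G := Complex.isCoveringMap_exp.liftHomotopy H f0 H0
  have hG := Complex.isCoveringMap_exp.liftHomotopy_lifts H f0 H0
  refine ⟨fun x => if hx : x ∈ S then G (1, ⟨x, hx⟩) else 0, ?_, ?_⟩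
  · rw [continuousOn_iff_continuous_domRestrict]
    have : S.domRestrict (fun x => if hx : x ∈ S then G (1, ⟨x, hx⟩) else 0)
        = fun x : S => G (1, x) := by
      ext x; simp [Set.domRestrict]
    rw [this]
    exact G.continuous.comp (by fun_prop)
  · intro x hx
    have := congrArg Subtype.val (congrFun hG (1, ⟨x, hx⟩))
    simp only [Function.comp, H, ContinuousMap.coe_mk] at this
    simp only [hx, dite_true]
    rw [this]
    simp

lemma ei_exp_const {X : Type*} [TopologicalSpace X] {S : Set X} (hS : IsPreconnected S)
    {f g : X → ℂ} (hf : ContinuousOn f S) (hg : ContinuousOn g S)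
    (h : ∀ x ∈ S, Complex.exp (f x) = Complex.exp (g x)) {x y : X} (hx : x ∈ S) (hy : y ∈ S) :
    f x - g x = f y - g y := by
  -- the difference takes values in a discrete set
  have hd : ContinuousOn (fun x => (f x - g x).im / (2 * Real.pi)) S :=
    (Complex.continuous_im.comp_continuousOn (hf.sub hg)).div_const _
  have hv : ∀ x ∈ S, ∃ n : ℤ, f x - g x = n * (2 * Real.pi * Complex.I) := by
    intro x hx
    obtain ⟨n, hn⟩ := Complex.exp_eq_exp_iff_exists_int.1 (h x hx)
    exact ⟨n, by rw [hn]; ring⟩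
  have hv2 : ∀ x ∈ S, ∀ n : ℤ, f x - g x = n * (2 * Real.pi * Complex.I) →
      (f x - g x).im / (2 * Real.pi) = n := by
    intro x hx n hn
    rw [hn]
    have : (2 * Real.pi) ≠ 0 := by positivity
    simp
  obtain ⟨n, hn⟩ := hv x hx
  obtain ⟨m, hm⟩ := hv y hy
  have hpc := hS.image _ hd
  have hsub : (fun x => (f x - g x).im / (2 * Real.pi)) '' S ⊆ range (fun n : ℤ => (n : ℝ)) := by
    rintro _ ⟨z, hz, rfl⟩
    obtain ⟨k, hk⟩ := hv z hz
    exact ⟨k, (hv2 z hz k hk).symm⟩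
  have hone : (fun x => (f x - g x).im / (2 * Real.pi)) '' S |>.Subsingleton := by
    have hco : ((fun n : ℤ => (n : ℝ)) '' ((fun n : ℤ => (n : ℝ)) ⁻¹'
        ((fun x => (f x - g x).im / (2 * Real.pi)) '' S))) =
        ((fun x => (f x - g x).im / (2 * Real.pi)) '' S) := image_preimage_eq_of_subset hsub
    rw [← hco]
    refine Set.Subsingleton.image ?_ _
    exact ((Int.isClosedEmbedding_coe_real.isInducing.isPreconnected_image).1
      (by rw [hco]; exact hpc)).subsingleton
  have := hone (mem_image_of_mem _ hx) (mem_image_of_mem _ hy)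
  simp only [hv2 x hx n hn, hv2 y hy m hm] at this
  have : n = m := by exact_mod_cast this
  rw [hn, hm, this]

lemma ei_log_rot {w : ℂ} (h1 : 0 < w.re) (h2 : 0 < w.im) :
    Complex.log (-Complex.I * w) = Complex.log w - Complex.I * (Real.pi / 2) := by
  have hw : w ≠ 0 := by rintro rfl; simp at h1
  have ha : |w.arg| < Real.pi / 2 := Complex.abs_arg_lt_pi_div_two_iff.2 (Or.inl h1)
  have hI : Complex.arg (-Complex.I) = -(Real.pi/2) := Complex.arg_neg_I
  rw [abs_lt] at ha
  have h0 : 0 ≤ w.arg := Complex.arg_nonneg_iff.2 h2.le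
  rw [Complex.log_mul (by simp) hw]
  · rw [Complex.log_neg_I]; ring
  · rw [hI]; constructor <;> linarith [Real.pi_pos]

/-- Crossing lemma. -/
lemma ei_crossing {γ δ : ℝ → ℂ} (hγ : ContinuousOn γ (Icc 0 1)) (hδ : ContinuousOn δ (Icc 0 1))
    (h1 : ∀ t ∈ Icc (0:ℝ) 1, (γ 0).re < (δ t).re) (h2 : ∀ t ∈ Icc (0:ℝ) 1, (δ t).re < (γ 1).re)
    (h3 : ∀ s ∈ Icc (0:ℝ) 1, (δ 0).im < (γ s).im) (h4 : ∀ s ∈ Icc (0:ℝ) 1, (γ s).im < (δ 1).im) :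
    ∃ s ∈ Icc (0:ℝ) 1, ∃ t ∈ Icc (0:ℝ) 1, γ s = δ t := by
  by_contra! hne
  set S : Set (ℝ × ℝ) := Icc 0 1 ×ˢ Icc 0 1 with hS
  let g : ℝ × ℝ → ℂ := fun q => γ q.1 - δ q.2
  have hg : ContinuousOn g S :=
    (hγ.comp continuousOn_fst (fun q hq => hq.1)).sub (hδ.comp continuousOn_snd (fun q hq => hq.2))
  have hconv : Convex ℝ S := (convex_Icc _ _).prod (convex_Icc _ _)
  have h00 : ((0:ℝ), (0:ℝ)) ∈ S := by simp [hS]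
  have h10 : ((1:ℝ), (0:ℝ)) ∈ S := by simp [hS]
  have h01 : ((0:ℝ), (1:ℝ)) ∈ S := by simp [hS]
  have h11 : ((1:ℝ), (1:ℝ)) ∈ S := by simp [hS]
  obtain ⟨f, hf, hfe⟩ := ei_log_star h00 (hconv.starConvex h00) hg
    (fun q hq => sub_ne_zero.2 (hne q.1 hq.1 q.2 hq.2))
  -- on a side where `c * g` has positive real part
  have key : ∀ (c : ℂ) (A : Set (ℝ × ℝ)), A ⊆ S → IsPreconnected A →
      (∀ q ∈ A, 0 < (c * g q).re) → ∀ x ∈ A, ∀ y ∈ A,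
      f x - Complex.log (c * g x) = f y - Complex.log (c * g y) := by
    intro c A hA hAc hpos x hx y hy
    have hc : c ≠ 0 := by rintro rfl; have := hpos x hx; simp at this
    have := ei_exp_const hAc (f := f) (g := fun q => Complex.log (c * g q) - Complex.log c)
      (hf.mono hA) ?_ ?_ hx hy
    · linear_combination this
    · refine ContinuousOn.sub ?_ continuousOn_const
      exact (continuousOn_const.mul (hg.mono hA)).clog
        (fun q hq => Complex.mem_slitPlane_iff.2 (Or.inl (hpos q hq)))
    · intro q hq
      have : c * g q ≠ 0 := by intro h; have := hpos q hq; rw [h] at this; simp at this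
      rw [Complex.exp_sub, Complex.exp_log this, Complex.exp_log hc, hfe q (hA hq)]
      field_simp
  have m0 : (0:ℝ) ∈ Icc (0:ℝ) 1 := by simp
  have m1 : (1:ℝ) ∈ Icc (0:ℝ) 1 := by simp
  have pc : IsPreconnected (Icc (0:ℝ) 1) := isPreconnected_Icc
  have s1 := key 1 ({1} ×ˢ Icc 0 1) (prod_mono (by simp) le_rfl) (isPreconnected_singleton.prod pc)
    (by rintro ⟨a, b⟩ ⟨ha, hb⟩; simp only [mem_singleton_iff] at ha; subst ha
        simpa [g] using h2 b hb) (1, 0) ⟨rfl, m0⟩ (1, 1) ⟨rfl, m1⟩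
  have s2 := key (-Complex.I) (Icc 0 1 ×ˢ {0}) (prod_mono le_rfl (by simp))
    (pc.prod isPreconnected_singleton)
    (by rintro ⟨a, b⟩ ⟨ha, hb⟩; simp only [mem_singleton_iff] at hb; subst hb
        simpa [g] using h3 a ha) (1, 0) ⟨m1, rfl⟩ (0, 0) ⟨m0, rfl⟩
  have s3 := key (-1) ({0} ×ˢ Icc 0 1) (prod_mono (by simp) le_rfl)
    (isPreconnected_singleton.prod pc)
    (by rintro ⟨a, b⟩ ⟨ha, hb⟩; simp only [mem_singleton_iff] at ha; subst ha
        simpa [g] using h1 b hb) (0, 0) ⟨rfl, m0⟩ (0, 1) ⟨rfl, m1⟩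
  have s4 := key (Complex.I) (Icc 0 1 ×ˢ {1}) (prod_mono le_rfl (by simp))
    (pc.prod isPreconnected_singleton)
    (by rintro ⟨a, b⟩ ⟨ha, hb⟩; simp only [mem_singleton_iff] at hb; subst hb
        simpa [g] using h4 a ha) (0, 1) ⟨m0, rfl⟩ (1, 1) ⟨m1, rfl⟩
  have c1 := ei_log_rot (w := 1 * g (1, 0)) (by simpa [g] using h2 0 m0) (by simpa [g] using h3 1 m1)
  have c2 := ei_log_rot (w := -Complex.I * g (0, 0)) (by simpa [g] using h3 0 m0)
    (by simpa [g] using h1 0 m0)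
  have c3 := ei_log_rot (w := -1 * g (0, 1)) (by simpa [g] using h1 1 m1)
    (by simpa [g] using h4 0 m0)
  have c4 := ei_log_rot (w := Complex.I * g (1, 1)) (by simpa [g] using h4 1 m1)
    (by simpa [g] using h2 1 m1)
  have e1 : -Complex.I * (1 * g (1, 0)) = -Complex.I * g (1, 0) := by ring
  have e2 : -Complex.I * (-Complex.I * g (0, 0)) = -1 * g (0, 0) := by
    linear_combination g (0,0) * Complex.I_mul_I
  have e3 : -Complex.I * (-1 * g (0, 1)) = Complex.I * g (0, 1) := by ring
  have e4 : -Complex.I * (Complex.I * g (1, 1)) = 1 * g (1, 1) := by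
    linear_combination -g (1,1) * Complex.I_mul_I
  rw [e1] at c1; rw [e2] at c2; rw [e3] at c3; rw [e4] at c4
  have : (Complex.I * (Real.pi / 2) : ℂ) * 4 = 0 := by
    linear_combination c1 + c2 + c3 + c4 - s1 + s2 + s3 + s4
  simp [Real.pi_ne_zero] at this


/-! ### The Brouwer type lemma -/

lemma ei_tau {h : ℂ → ℂ} (hc : Continuous h) (hi : Function.Injective h) {M : ℝ}
    (hM : ∀ z, ‖h z - z‖ ≤ M) :
    ∃ L : ℂ × ℂ → ℂ, Continuous L ∧
      (∀ z ζ, Complex.exp (L (z, ζ)) = (h z - h (z - Complex.exp ζ)) / Complex.exp ζ) ∧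
      (∀ z ζ, L (z, ζ) = L (z - Complex.exp ζ, ζ + Real.pi * Complex.I)) ∧
      (∀ z ζ ζ', Complex.exp ζ = Complex.exp ζ' → L (z, ζ) = L (z, ζ')) := by
  let g : ℂ × ℂ → ℂ := fun q => (h q.1 - h (q.1 - Complex.exp q.2)) / Complex.exp q.2
  have hg : Continuous g := by
    refine Continuous.div ?_ (by fun_prop) (fun q => Complex.exp_ne_zero _)
    fun_prop
  have hg0 : ∀ q, g q ≠ 0 := by
    intro q
    refine div_ne_zero (sub_ne_zero.2 fun e => ?_) (Complex.exp_ne_zero _)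
    have := hi e
    have h2 : Complex.exp q.2 = 0 := by linear_combination this
    exact Complex.exp_ne_zero _ h2
  obtain ⟨L, hL, hLe⟩ := ei_log_star (S := (univ : Set (ℂ × ℂ))) (p := (0, 0)) (mem_univ _)
    (convex_univ.starConvex (mem_univ _)) hg.continuousOn (fun q _ => hg0 q)
  rw [continuousOn_univ] at hL
  have hexp : ∀ ζ : ℂ, Complex.exp (ζ + Real.pi * Complex.I) = - Complex.exp ζ := by
    intro ζ; rw [Complex.exp_add, Complex.exp_pi_mul_I]; ring
  have hgs : ∀ z ζ, g (z - Complex.exp ζ, ζ + Real.pi * Complex.I) = g (z, ζ) := by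
    intro z ζ
    have := Complex.exp_ne_zero ζ
    simp only [g, hexp]
    rw [show z - Complex.exp ζ - -Complex.exp ζ = z by ring]
    field_simp
    ring
  have hsym : ∀ z ζ, L (z, ζ) = L (z - Complex.exp ζ, ζ + Real.pi * Complex.I) := by
    set R : ℝ := Real.log (2 * |M| + 1) with hR
    let Rg : Set (ℂ × ℂ) := univ ×ˢ {ζ | R < ζ.re}
    have hRc : IsPreconnected Rg :=
      isPreconnected_univ.prod (convex_halfSpace_re_gt R).isPreconnected
    have hre : ∀ q ∈ Rg, g q ∈ Complex.slitPlane := by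
      rintro ⟨z, ζ⟩ ⟨-, hζ⟩
      simp only [mem_setOf_eq] at hζ
      have hE := Complex.exp_ne_zero ζ
      have h1 : g (z, ζ) - 1 = ((h z - z) - (h (z - Complex.exp ζ) - (z - Complex.exp ζ)))
          / Complex.exp ζ := by
        simp only [g]; field_simp; ring
      have h2 : 2 * |M| + 1 < ‖Complex.exp ζ‖ := by
        rw [Complex.norm_exp, ← Real.exp_log (show (0:ℝ) < 2 * |M| + 1 by positivity)]
        exact Real.exp_lt_exp.2 hζ
      have h3 : ‖g (z, ζ) - 1‖ < 1 := by
        rw [h1, norm_div, div_lt_one (by positivity)]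
        calc _ ≤ M + M := (norm_sub_le _ _).trans (add_le_add (hM _) (hM _))
          _ < _ := by linarith [le_abs_self M]
      refine Complex.mem_slitPlane_iff.2 (Or.inl ?_)
      have h4 := (abs_lt.1 ((Complex.abs_re_le_norm _).trans_lt h3)).1
      simp at h4; linarith
    have q0 : (((0:ℂ), ((R:ℂ) + 1)) : ℂ × ℂ) ∈ Rg := ⟨mem_univ _, by simp⟩
    have q1 : (((0:ℂ) - Complex.exp ((R:ℂ)+1), ((R:ℂ) + 1) + Real.pi * Complex.I) : ℂ × ℂ) ∈ Rg :=
      ⟨mem_univ _, by simp⟩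
    have h5 := ei_exp_const hRc (f := L) (g := fun q => Complex.log (g q)) hL.continuousOn
      (hg.continuousOn.clog hre) (fun q _ => by rw [hLe q (mem_univ _), Complex.exp_log (hg0 q)])
      q0 q1
    simp only [hgs] at h5
    intro z ζ
    have h6 := ei_exp_const (isPreconnected_univ (α := ℂ × ℂ)) (f := L)
      (g := fun q => L (q.1 - Complex.exp q.2, q.2 + Real.pi * Complex.I)) hL.continuousOn
      (Continuous.continuousOn (by fun_prop)) (fun q _ => by
        rw [hLe q (mem_univ _), hLe _ (mem_univ _)]
        exact (hgs q.1 q.2).symm) (mem_univ (z, ζ)) (mem_univ ((0:ℂ), ((R:ℂ) + 1)))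
    simp only at h6
    linear_combination h6 + h5
  refine ⟨L, hL, fun z ζ => hLe (z, ζ) (mem_univ _), hsym, ?_⟩
  intro z ζ ζ' hh
  have hper : Function.Periodic (fun ζ => L (z, ζ)) (2 * Real.pi * Complex.I) := by
    intro ζ
    simp only
    rw [hsym z ζ, hsym (z - Complex.exp ζ), hexp]
    congr 2 <;> ring
  obtain ⟨n, hn⟩ := Complex.exp_eq_exp_iff_exists_int.1 hh
  rw [hn]
  have := hper.int_mul n ζ'
  simpa using this

lemma ei_brouwer {h : ℂ → ℂ} (hc : Continuous h) (hi : Function.Injective h) {M : ℝ}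
    (hM : ∀ z, ‖h z - z‖ ≤ M) {D : Set ℂ} (hDs : IsSimplyConnected D) (hDo : IsOpen D)
    (hD : MapsTo h D D) (hfix : ∀ z ∈ D, h z ≠ z) {σ : ℝ → ℂ} (hσ : ContinuousOn σ (Ici 0))
    (hσD : ∀ t, 0 ≤ t → σ t ∈ D) (hstep : ∀ t, 0 ≤ t → σ (t + 1) = h (σ t))
    (hinj : InjOn σ (Ico 0 2)) : InjOn σ (Ici 0) := by
  by_contra hcon
  have hshift : ∀ n : ℕ, ∀ a b : ℝ, 0 ≤ a → 0 ≤ b → σ (a + n) = σ (b + n) → σ a = σ b := by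
    intro n
    induction n with
    | zero => intro a b _ _ hab; simpa using hab
    | succ n ih =>
      intro a b ha hb hab
      apply ih a b ha hb
      apply hi
      rw [← hstep _ (by positivity), ← hstep _ (by positivity)]
      push_cast at hab
      rw [← add_assoc, ← add_assoc] at hab
      exact hab
  have hgap : ∀ a b : ℝ, 0 ≤ a → a < b → σ a = σ b → a + 1 < b ∧ 2 ≤ b := by
    intro a b ha hab he
    set n := ⌊a⌋₊
    have h1 : (n : ℝ) ≤ a := Nat.floor_le ha
    have h2 : a < n + 1 := Nat.lt_floor_add_one a
    have h3 : σ (a - n) = σ (b - n) :=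
      hshift n _ _ (by linarith) (by linarith) (by simpa using he)
    have h4 : 2 ≤ b - n := by
      by_contra! h5
      have := hinj (show a - n ∈ Ico (0:ℝ) 2 from ⟨by linarith, by linarith⟩)
        (show b - n ∈ Ico (0:ℝ) 2 from ⟨by linarith, by linarith⟩) h3
      linarith
    have h5 : (0:ℝ) ≤ n := by positivity
    exact ⟨by linarith, by linarith⟩
  obtain ⟨a0, b0, ha0, hab0, he0⟩ : ∃ a b : ℝ, 0 ≤ a ∧ a < b ∧ σ a = σ b := by
    simp only [InjOn, not_forall] at hcon
    obtain ⟨a, ha, b, hb, he, hne⟩ := hcon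
    rcases lt_or_gt_of_ne hne with hl | hl
    · exact ⟨a, b, ha, hl, he⟩
    · exact ⟨b, a, hb, hl, he.symm⟩
  -- minimal return time
  obtain ⟨s, s', hs0, hss, hse, hmin⟩ : ∃ s s' : ℝ, 0 ≤ s ∧ s < s' ∧ σ s = σ s' ∧
      ∀ a b : ℝ, 0 ≤ a → a < b → σ a = σ b → s' ≤ b := by
    let P : Set (ℝ × ℝ) := (Icc 0 b0 ×ˢ Icc 0 b0) ∩ {q | q.1 + 1 ≤ q.2} ∩
      {q | σ q.1 - σ q.2 = 0}
    have hPc : IsCompact P := by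
      have hcl : IsClosed P := by
        have h1 : IsClosed ((Icc 0 b0 ×ˢ Icc 0 b0) ∩ {q : ℝ × ℝ | q.1 + 1 ≤ q.2}) :=
          (isClosed_Icc.prod isClosed_Icc).inter (isClosed_le (by fun_prop) (by fun_prop))
        have h2 : ContinuousOn (fun q : ℝ × ℝ => σ q.1 - σ q.2)
            ((Icc 0 b0 ×ˢ Icc 0 b0) ∩ {q : ℝ × ℝ | q.1 + 1 ≤ q.2}) :=
          (hσ.comp continuousOn_fst (fun q hq => hq.1.1.1)).sub
            (hσ.comp continuousOn_snd (fun q hq => hq.1.2.1))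
        exact h2.preimage_isClosed_of_isClosed h1 isClosed_singleton
      exact (isCompact_Icc.prod isCompact_Icc).of_isClosed_subset hcl (fun q hq => hq.1.1)
    have hPn : (a0, b0) ∈ P :=
      ⟨⟨⟨⟨ha0, hab0.le⟩, ⟨by linarith, le_rfl⟩⟩, (hgap _ _ ha0 hab0 he0).1.le⟩, by simp [he0]⟩
    obtain ⟨⟨s, s'⟩, hsP, hmin⟩ := hPc.exists_isMinOn ⟨_, hPn⟩ continuous_snd.continuousOn
    refine ⟨s, s', hsP.1.1.1.1, by have := hsP.1.2; simp at this; linarith, sub_eq_zero.1 hsP.2, ?_⟩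
    intro a b ha hab he
    by_cases hb : b ≤ b0
    · have : (a, b) ∈ P :=
        ⟨⟨⟨⟨ha, by linarith⟩, ⟨by linarith, hb⟩⟩, (hgap _ _ ha hab he).1.le⟩, by simp [he]⟩
      exact hmin this
    · have := hsP.1.1.2.2
      simp at this; linarith
  obtain ⟨hgap1, hgap2⟩ := hgap s s' hs0 hss hse
  have hs1 : s < 1 := by
    by_contra! h1
    have := hmin (s - 1) (s' - 1) (by linarith) (by linarith)
      (hshift 1 _ _ (by linarith) (by linarith) (by simpa using hse))
    linarith
  have hne : ∀ a b : ℝ, 0 ≤ a → a < b → b ≤ s' → (a, b) ≠ (s, s') → σ a ≠ σ b := by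
    intro a b ha hab hb hq he
    have h1 := hmin a b ha hab he
    have h2 : b = s' := le_antisymm hb h1
    subst h2
    have h3 : a ≠ s := fun h => hq (by rw [h])
    rcases lt_or_gt_of_ne h3 with hl | hl
    · have := hmin a s ha hl (he.trans hse.symm); linarith
    · have := hmin s a hs0 hl (hse.trans he.symm); linarith
  -- logarithm of differences
  let Δ : Set (ℝ × ℝ) := {q | 0 ≤ q.1 ∧ q.1 < q.2 ∧ q.2 ≤ s' ∧ q ≠ (s, s')}
  have hp : ((0:ℝ), (1:ℝ)) ∈ Δ := by
    refine ⟨le_rfl, by norm_num, by linarith, fun h => ?_⟩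
    have := congrArg Prod.snd h; simp at this; linarith
  have hstar : StarConvex ℝ ((0:ℝ), (1:ℝ)) Δ := by
    rintro ⟨x, y⟩ ⟨h1, h2, h3, h4⟩ a b ha hb hab
    simp only at h1 h2 h3
    have hne' : a • ((0:ℝ), (1:ℝ)) + b • (x, y) = (b * x, a + b * y) := by simp
    rw [hne']
    refine ⟨by positivity, ?_, ?_, ?_⟩
    · simp only
      rcases hb.eq_or_lt with h | h
      · subst h; simp; linarith
      · nlinarith
    · simp only; nlinarith
    · intro hh
      have e1 := congrArg Prod.snd hh
      simp only at e1
      rcases ha.eq_or_lt with h | h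
      · subst h
        have : b = 1 := by linarith
        subst this
        apply h4; simpa using hh
      · nlinarith
  have hσΔ : ContinuousOn (fun q : ℝ × ℝ => σ q.1 - σ q.2) Δ :=
    (hσ.comp continuousOn_fst (fun q hq => hq.1)).sub
      (hσ.comp continuousOn_snd (fun q hq => (hq.1.trans hq.2.1.le)))
  obtain ⟨T, hT, hTe⟩ := ei_log_star hp hstar hσΔ
    (fun q hq => sub_ne_zero.2 (hne q.1 q.2 hq.1 hq.2.1 hq.2.2.1 hq.2.2.2))
  obtain ⟨A, hA, hAe⟩ := Complex.exists_continuousOn_eqOn_exp_comp hDs hDo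
    (g := fun z => z - h z) (continuous_id.sub hc).continuousOn
    (by rintro ⟨z, hz, he⟩; exact hfix z hz (sub_eq_zero.1 he).symm)
  have hAe' : ∀ z ∈ D, Complex.exp (A z) = z - h z := fun z hz => hAe hz
  obtain ⟨L, hL, hLe, hLs, hLp⟩ := ei_tau hc hi hM
  have hDpre : IsPreconnected D := hDs.isPathConnected.isConnected.isPreconnected
  -- first constant
  have hκ : ∀ z ∈ D, ∀ w ∈ D, A (h z) - (A z + L (z, A z)) = A (h w) - (A w + L (w, A w)) := by
    intro z hz w hw
    refine ei_exp_const hDpre (f := fun z => A (h z)) (g := fun z => A z + L (z, A z))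
      (hA.comp hc.continuousOn hD)
      (hA.add (hL.comp_continuousOn (continuousOn_id.prodMk hA))) ?_ hz hw
    intro z hz
    rw [Complex.exp_add, hLe, hAe' z hz, hAe' _ (hD hz)]
    have : z - h z ≠ 0 := sub_ne_zero.2 (hfix z hz).symm
    rw [show z - (z - h z) = h z by ring]
    field_simp
  -- second constant
  let Δ' : Set (ℝ × ℝ) := {q | 0 ≤ q.1 ∧ q.1 < q.2 ∧ q.2 ≤ s' - 1}
  have hΔ'c : IsPreconnected Δ' := by
    apply Convex.isPreconnected
    rintro ⟨x, y⟩ ⟨h1, h2, h3⟩ ⟨x', y'⟩ ⟨h1', h2', h3'⟩ a b ha hb hab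
    simp only at h1 h2 h3 h1' h2' h3'
    have hne' : a • (x, y) + b • (x', y') = (a * x + b * x', a * y + b * y') := by simp
    rw [hne']
    refine ⟨by positivity, ?_, ?_⟩
    · simp only
      rcases hb.eq_or_lt with h | h
      · subst h; have : a = 1 := by linarith
        subst this; simpa using h2
      · nlinarith
    · simp only; nlinarith
  have hsub1 : Δ' ⊆ Δ := by
    rintro ⟨x, y⟩ ⟨h1, h2, h3⟩
    refine ⟨h1, h2, by simp at h3 ⊢; linarith, fun hh => ?_⟩
    have := congrArg Prod.snd hh; simp at this h3; linarith
  have hsub2 : ∀ q ∈ Δ', (q.1 + 1, q.2 + 1) ∈ Δ := by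
    rintro ⟨x, y⟩ ⟨h1, h2, h3⟩
    simp only at h1 h2 h3
    refine ⟨by simp; linarith, by simpa using h2, by simp; linarith, fun hh => ?_⟩
    have := congrArg Prod.fst hh; simp at this; linarith
  have hc' : ∀ q ∈ Δ', ∀ r ∈ Δ', T (q.1 + 1, q.2 + 1) - (T q + L (σ q.1, T q)) =
      T (r.1 + 1, r.2 + 1) - (T r + L (σ r.1, T r)) := by
    intro q hq r hr
    refine ei_exp_const hΔ'c (f := fun q => T (q.1 + 1, q.2 + 1)) (g := fun q => T q + L (σ q.1, T q))
      (hT.comp (Continuous.continuousOn (by fun_prop)) hsub2)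
      ((hT.mono hsub1).add (hL.comp_continuousOn
        ((hσ.comp continuousOn_fst (fun q hq => hq.1)).prodMk (hT.mono hsub1)))) ?_ hq hr
    intro q hq
    have h1 := hTe q (hsub1 hq)
    have h2 := hTe _ (hsub2 q hq)
    rw [Complex.exp_add, hLe, h1, h2]
    have h3 : σ q.1 - σ q.2 ≠ 0 := by rw [← h1]; exact Complex.exp_ne_zero _
    rw [show σ q.1 - (σ q.1 - σ q.2) = σ q.2 by ring]
    simp only
    rw [hstep _ hq.1, hstep _ (hq.1.trans hq.2.1.le)]
    field_simp
  -- third constant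
  have hmemj : ∀ t ∈ Icc (0:ℝ) (s' - 1), (t, t + 1) ∈ Δ := by
    intro t ht
    refine ⟨ht.1, by simp, by simp; linarith [ht.2], fun hh => ?_⟩
    have e1 := congrArg Prod.fst hh
    have e2 := congrArg Prod.snd hh
    simp at e1 e2; linarith
  have hj : ∀ t ∈ Icc (0:ℝ) (s' - 1), ∀ u ∈ Icc (0:ℝ) (s' - 1),
      A (σ t) - T (t, t + 1) = A (σ u) - T (u, u + 1) := by
    intro t ht u hu
    refine ei_exp_const isPreconnected_Icc (f := fun t => A (σ t)) (g := fun t => T (t, t + 1))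
      (hA.comp (hσ.mono (fun t ht => ht.1)) (fun t ht => hσD t ht.1))
      (hT.comp (Continuous.continuousOn (by fun_prop)) hmemj) ?_ ht hu
    intro t ht
    rw [hAe' _ (hσD t ht.1), hTe _ (hmemj t ht)]
    simp only; rw [hstep t ht.1]
  -- fourth constant
  have hm1 : ∀ t ∈ Ioo s s', (t, s') ∈ Δ := by
    intro t ht
    refine ⟨by simp; linarith [ht.1], ht.2, le_rfl, fun hh => ?_⟩
    have e1 := congrArg Prod.fst hh; simp at e1; linarith [ht.1]
  have hm2 : ∀ t ∈ Ioo s s', (s, t) ∈ Δ := by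
    intro t ht
    refine ⟨hs0, ht.1, ht.2.le, fun hh => ?_⟩
    have e1 := congrArg Prod.snd hh; simp at e1; linarith [ht.2]
  have hexp4 : ∀ t ∈ Ioo s s', Complex.exp (T (t, s')) =
      Complex.exp (T (s, t) + Real.pi * Complex.I) := by
    intro t ht
    rw [Complex.exp_add, Complex.exp_pi_mul_I, hTe _ (hm1 t ht), hTe _ (hm2 t ht)]
    simp only; rw [hse]; ring
  have t1 : s + 1 ∈ Ioo s s' := ⟨by linarith, hgap1⟩
  have t2 : s' - 1 ∈ Ioo s s' := ⟨by linarith, by linarith⟩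
  have hm := ei_exp_const (isPreconnected_Ioo (a := s) (b := s')) (f := fun t => T (t, s'))
    (g := fun t => T (s, t) + Real.pi * Complex.I)
    (hT.comp (Continuous.continuousOn (by fun_prop)) hm1)
    ((hT.comp (Continuous.continuousOn (by fun_prop)) hm2).add continuousOn_const) hexp4 t1 t2
  obtain ⟨k, hk⟩ := Complex.exp_eq_exp_iff_exists_int.1 (hexp4 _ t1)
  -- evaluate
  have m0 : (0:ℝ) ∈ Icc (0:ℝ) (s' - 1) := ⟨le_rfl, by linarith⟩
  have m1 : (1:ℝ) ∈ Icc (0:ℝ) (s' - 1) := ⟨by linarith, by linarith⟩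
  have ms : s ∈ Icc (0:ℝ) (s' - 1) := ⟨hs0, by linarith⟩
  have ms1 : s' - 1 ∈ Icc (0:ℝ) (s' - 1) := ⟨by linarith, le_rfl⟩
  have E1 := hκ _ (hσD 0 le_rfl) _ (hσD (s' - 1) (by linarith))
  rw [← hstep 0 le_rfl, ← hstep (s' - 1) (by linarith)] at E1
  rw [show s' - 1 + 1 = s' by ring, ← hse, zero_add] at E1
  have E2 := hc' (0, 1) ⟨le_rfl, by norm_num, by simp; linarith⟩ (s, s' - 1)
    ⟨hs0, by simp; linarith, le_rfl⟩
  simp only [zero_add, sub_add_cancel] at E2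
  have E3 := hj 0 m0 1 m1
  have E4 := hj 0 m0 s ms
  have E5 := hj 0 m0 (s' - 1) ms1
  simp only [zero_add, sub_add_cancel] at E3 E4 E5
  have E6 : L (σ 0, A (σ 0)) = L (σ 0, T (0, 1)) := by
    apply hLp
    rw [hAe' _ (hσD 0 le_rfl), hTe _ hp, ← hstep 0 le_rfl, zero_add]
  have E7 : L (σ (s' - 1), A (σ (s' - 1))) = L (σ s, T (s, s' - 1)) := by
    rw [hLs (σ s), hTe _ (hm2 _ t2)]
    simp only
    rw [show σ s - (σ s - σ (s' - 1)) = σ (s' - 1) by ring]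
    apply hLp
    rw [← hexp4 _ t2, hAe' _ (hσD _ ms1.1), hTe _ (hm1 _ t2), ← hstep _ ms1.1, sub_add_cancel]
  rw [E6, E7] at E1
  norm_num at E2 E3
  have hfin : ((2 * k + 1 : ℤ) : ℂ) * (2 * Real.pi * Complex.I) = 0 := by
    push_cast
    have R : T (s, s + 1) + T (s, s' - 1) = T (s + 1, s') + T (s' - 1, s') := by
      linear_combination E2 - E1 - E3 + E4 - E5
    linear_combination -2 * hk + hm - R
  rw [mul_eq_zero] at hfin
  rcases hfin with h1 | h1
  · have : 2 * k + 1 = 0 := by exact_mod_cast h1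
    omega
  · simp [Real.pi_ne_zero] at h1


/-! ### Arcs, perturbations and fixed points -/

lemma ei_arc {W : Set ℂ} (hWo : IsOpen W) (hWc : IsPreconnected W) {x y : ℂ} (hx : x ∈ W)
    (hy : y ∈ W) : ∃ (T : ℝ) (a : ℝ → ℂ), 0 ≤ T ∧ ContinuousOn a (Icc 0 T) ∧ InjOn a (Icc 0 T) ∧
      MapsTo a (Icc 0 T) W ∧ a 0 = x ∧ a T = y := by
  let R : Set ℂ := {y | ∃ (T : ℝ) (a : ℝ → ℂ), 0 ≤ T ∧ ContinuousOn a (Icc 0 T) ∧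
    InjOn a (Icc 0 T) ∧ MapsTo a (Icc 0 T) W ∧ a 0 = x ∧ a T = y}
  have key : ∀ y ∈ R, ∀ y', closedBall y' (dist y y') ⊆ W → y' ∈ R := by
    rintro y ⟨T, a, hT, hac, hai, haW, h0, h1⟩ y' hb
    set ρ := dist y y' with hρ
    have hcl : IsCompact {t ∈ Icc 0 T | dist (a t) y' ≤ ρ} := by
      refine isCompact_Icc.of_isClosed_subset ?_ (fun t ht => ht.1)
      exact ((continuous_id.dist continuous_const).comp_continuousOn hac).preimage_isClosed_of_isClosed
        isClosed_Icc isClosed_Iic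
    obtain ⟨t, ⟨ht, htρ⟩, htm⟩ := hcl.exists_isMinOn ⟨T, ⟨hT, le_rfl⟩, by rw [h1]⟩ continuousOn_id
    have htm' : ∀ s, 0 ≤ s → s < t → ρ < dist (a s) y' := by
      intro s hs hst
      by_contra! hcon
      have := htm ⟨⟨hs, hst.le.trans ht.2⟩, hcon⟩
      simp at this; linarith
    by_cases hty : a t = y'
    · exact ⟨t, a, ht.1, hac.mono (Icc_subset_Icc_right ht.2), hai.mono (Icc_subset_Icc_right ht.2),
        haW.mono_left (Icc_subset_Icc_right ht.2), h0, hty⟩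
    let b : ℝ → ℂ := fun s => a (min s t) + ((max 0 (s - t) : ℝ) : ℂ) * (y' - a t)
    have b1 : ∀ s, s ≤ t → b s = a s := by
      intro s hs
      simp [b, min_eq_left hs, max_eq_left (sub_nonpos.2 hs)]
    have b2 : ∀ s, t ≤ s → b s = a t + ((s - t : ℝ) : ℂ) * (y' - a t) := by
      intro s hs
      simp [b, min_eq_right hs, max_eq_right (sub_nonneg.2 hs)]
    have b3 : ∀ s, t ≤ s → s ≤ t + 1 → dist (b s) y' = (1 - (s - t)) * dist (a t) y' := by
      intro s hs hs'
      rw [b2 s hs, dist_eq_norm, dist_eq_norm]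
      rw [show a t + ((s - t : ℝ) : ℂ) * (y' - a t) - y' = ((1 - (s - t) : ℝ) : ℂ) * (a t - y') by
        push_cast; ring]
      rw [norm_mul, Complex.norm_real, Real.norm_of_nonneg (by linarith)]
    have hpos : 0 < dist (a t) y' := dist_pos.2 hty
    refine ⟨t + 1, b, by linarith [ht.1], ?_, ?_, ?_, by rw [b1 0 ht.1, h0], ?_⟩
    · refine ContinuousOn.add ?_ (Continuous.continuousOn (by fun_prop))
      refine hac.comp (Continuous.continuousOn (by fun_prop)) ?_
      intro s hs
      exact ⟨le_min hs.1 ht.1, (min_le_right _ _).trans ht.2⟩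
    · have aux : ∀ s ∈ Icc 0 (t+1), ∀ s' ∈ Icc 0 (t+1), s < s' → b s ≠ b s' := by
        intro s hs s' hs' hlt he
        rcases le_or_gt s' t with h | h
        · rw [b1 s (hlt.le.trans h), b1 s' h] at he
          exact hlt.ne (hai ⟨hs.1, by linarith [ht.2]⟩ ⟨hs'.1, by linarith [ht.2]⟩ he)
        rcases lt_or_ge s t with h2 | h2
        · have e1 := htm' s hs.1 h2
          rw [← b1 s h2.le, he, b3 s' h.le hs'.2] at e1
          have : (1 - (s' - t)) * dist (a t) y' ≤ 1 * ρ :=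
            mul_le_mul (by linarith) htρ dist_nonneg (by norm_num)
          linarith
        · have e1 := b3 s h2 hs.2
          rw [he, b3 s' h.le hs'.2] at e1
          have := mul_right_cancel₀ hpos.ne' e1
          linarith
      intro s hs s' hs' he
      by_contra hne
      rcases lt_or_gt_of_ne hne with h | h
      · exact aux s hs s' hs' h he
      · exact aux s' hs' s hs h he.symm
    · intro s hs
      rcases le_or_gt s t with h | h
      · rw [b1 s h]; exact haW ⟨hs.1, h.trans ht.2⟩
      · apply hb
        rw [mem_closedBall, b3 s h.le hs.2]
        have : (1 - (s - t)) * dist (a t) y' ≤ 1 * ρ :=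
            mul_le_mul (by linarith) htρ dist_nonneg (by norm_num)
        linarith
    · rw [b2 _ (by linarith)]; simp
  have hball : ∀ y ∈ W, ∃ r > 0, ∀ y' ∈ ball y r, closedBall y' (dist y y') ⊆ W ∧
      closedBall y (dist y' y) ⊆ W := by
    intro y hy
    obtain ⟨r, hr, hrW⟩ := Metric.isOpen_iff.1 hWo y hy
    refine ⟨r / 3, by positivity, fun y' hy' => ⟨fun z hz => hrW ?_, fun z hz => hrW ?_⟩⟩
    · rw [mem_ball] at *; rw [mem_closedBall] at hz
      have := dist_triangle z y' y
      rw [dist_comm y y'] at hz; linarith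
    · rw [mem_ball] at *; rw [mem_closedBall] at hz; linarith
  have hxR : x ∈ R := ⟨0, fun _ => x, le_rfl, continuousOn_const, by simp, fun _ _ => hx, rfl, rfl⟩
  have hRo : IsOpen (W ∩ R) := by
    rw [Metric.isOpen_iff]
    rintro z ⟨hz, hzR⟩
    obtain ⟨r, hr, hrb⟩ := hball z hz
    refine ⟨r, hr, fun z' hz' => ⟨(hrb z' hz').1 (mem_closedBall_self dist_nonneg),
      key z hzR z' (hrb z' hz').1⟩⟩
  have hNo : IsOpen (W ∩ Rᶜ) := by
    rw [Metric.isOpen_iff]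
    rintro z ⟨hz, hzR⟩
    obtain ⟨r, hr, hrb⟩ := hball z hz
    refine ⟨r, hr, fun z' hz' => ⟨(hrb z' hz').1 (mem_closedBall_self dist_nonneg),
      fun hz'R => hzR (key z' hz'R z (hrb z' hz').2)⟩⟩
  have := hWc.subset_left_of_subset_union hRo hNo
    (Set.disjoint_left.2 fun z hz hz' => hz'.2 hz.2)
    (fun z hz => by by_cases h : z ∈ R <;> [left; right] <;> exact ⟨hz, h⟩) ⟨x, hx, hx, hxR⟩
  exact (this hy).2

lemma ei_trans_arc {h : ℂ → ℂ} (hc : Continuous h) {W : Set ℂ} (hWo : IsOpen W)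
    (hWc : IsPreconnected W) (hWn : W.Nonempty) (hW : MapsTo h W W) (hfix : ∀ z ∈ W, h z ≠ z) :
    ∃ σ : ℝ → ℂ, ContinuousOn σ (Icc 0 1) ∧ InjOn σ (Icc 0 1) ∧ MapsTo σ (Icc 0 1) W ∧
      σ 1 = h (σ 0) ∧ ∀ a ∈ Icc (0:ℝ) 1, ∀ b ∈ Ico (0:ℝ) 1, σ a = h (σ b) → a = 1 := by
  obtain ⟨x, hx⟩ := hWn
  obtain ⟨T, a, hT, hac, hai, haW, h0, h1⟩ := ei_arc hWo hWc hx (hW hx)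
  let P : Set (ℝ × ℝ) := {q ∈ Icc 0 T ×ˢ Icc 0 T | a q.1 - h (a q.2) = 0}
  have hPc : IsCompact P := by
    refine (isCompact_Icc.prod isCompact_Icc).of_isClosed_subset ?_ (fun t ht => ht.1)
    refine ContinuousOn.preimage_isClosed_of_isClosed (t := {0}) ?_
      (isClosed_Icc.prod isClosed_Icc) isClosed_singleton
    exact (hac.comp continuousOn_fst (fun q hq => hq.1)).sub
      (hc.comp_continuousOn (hac.comp continuousOn_snd (fun q hq => hq.2)))
  obtain ⟨⟨u, v⟩, huvP, huvm⟩ := hPc.exists_isMinOn (f := fun q : ℝ × ℝ => max q.1 q.2)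
    ⟨(T, 0), ⟨⟨hT, le_rfl⟩, ⟨le_rfl, hT⟩⟩, by simp [h0, h1]⟩ (Continuous.continuousOn (by fun_prop))
  have hmin : ∀ p ∈ Icc 0 T, ∀ q ∈ Icc 0 T, a p = h (a q) → max u v ≤ max p q := by
    intro p hp q hq he
    exact huvm (show (p, q) ∈ P from ⟨⟨hp, hq⟩, by simp [he]⟩)
  have huv : a u = h (a v) := sub_eq_zero.1 huvP.2
  have hu : u ∈ Icc 0 T := huvP.1.1
  have hv : v ∈ Icc 0 T := huvP.1.2
  have hne : ∀ p ∈ Icc 0 T, a p ≠ h (a p) := fun p hp he => hfix _ (haW hp) he.symm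
  have main : ∀ α ∈ Icc 0 T, ∀ β ∈ Icc 0 T, α ≠ β → a β = h (a α) →
      (∀ p ∈ uIcc α β, ∀ q ∈ uIcc α β, q ≠ β → a p = h (a q) → p = β) →
      ∃ σ : ℝ → ℂ, ContinuousOn σ (Icc 0 1) ∧ InjOn σ (Icc 0 1) ∧ MapsTo σ (Icc 0 1) W ∧
      σ 1 = h (σ 0) ∧ ∀ a ∈ Icc (0:ℝ) 1, ∀ b ∈ Ico (0:ℝ) 1, σ a = h (σ b) → a = 1 := by
    intro α hα β hβ hαβ he hpq
    have hmem : ∀ r ∈ Icc (0:ℝ) 1, α + r * (β - α) ∈ uIcc α β := by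
      intro r hr
      rcases lt_or_gt_of_ne hαβ with h | h
      · rw [uIcc_of_le h.le]; constructor <;> nlinarith [hr.1, hr.2]
      · rw [uIcc_of_ge h.le]; constructor <;> nlinarith [hr.1, hr.2]
    have hsub : uIcc α β ⊆ Icc 0 T := Set.uIcc_subset_Icc hα hβ
    have hinj : ∀ r r' : ℝ, α + r * (β - α) = α + r' * (β - α) → r = r' := by
      intro r r' h
      have := add_left_cancel h
      exact mul_right_cancel₀ (sub_ne_zero.2 hαβ.symm) this
    refine ⟨fun r => a (α + r * (β - α)), ?_, ?_, ?_, by simpa using he, ?_⟩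
    · exact hac.comp (Continuous.continuousOn (by fun_prop)) (fun r hr => hsub (hmem r hr))
    · intro r hr r' hr' h
      exact hinj _ _ (hai (hsub (hmem r hr)) (hsub (hmem r' hr')) h)
    · intro r hr; exact haW (hsub (hmem r hr))
    · intro r hr r' hr' h
      have := hpq _ (hmem r hr) _ (hmem r' ⟨hr'.1, hr'.2.le⟩) ?_ h
      · exact hinj r 1 (by rw [this]; ring)
      · intro hh
        have := hinj r' 1 (by rw [hh]; ring)
        linarith [hr'.2]
  by_cases hA : ∃ v' ∈ Icc 0 T, v' ≤ max u v ∧ a (max u v) = h (a v')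
  · obtain ⟨v', hv', hle, he⟩ := hA
    have hm : max u v ∈ Icc 0 T := by rcases max_choice u v with h | h <;> rw [h] <;> assumption
    have hlt : v' < max u v := lt_of_le_of_ne hle (fun hh => hne _ hm (by rw [← hh] at he ⊢; exact he))
    refine main v' hv' (max u v) hm hlt.ne he ?_
    intro p hp q hq hqne hpq
    rw [uIcc_of_le hle] at hp hq
    have hq' : q < max u v := lt_of_le_of_ne hq.2 hqne
    have := hmin p ⟨hv'.1.trans hp.1, hp.2.trans hm.2⟩ q ⟨hv'.1.trans hq.1, hq.2.trans hm.2⟩ hpq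
    rcases le_max_iff.1 this with h | h
    · exact le_antisymm hp.2 h
    · linarith
  · push Not at hA
    have huv' : u < v := by
      by_contra! hle
      exact hA v hv (le_max_right _ _) (by rw [max_eq_left hle]; exact huv)
    rw [max_eq_right huv'.le] at hmin hA
    refine main v hv u hu huv'.ne' huv ?_
    intro p hp q hq hqne hpq
    rw [uIcc_of_ge huv'.le] at hp hq
    have hp' : p ∈ Icc 0 T := ⟨hu.1.trans hp.1, hp.2.trans hv.2⟩
    have hq' : q ∈ Icc 0 T := ⟨hu.1.trans hq.1, hq.2.trans hv.2⟩
    rcases le_max_iff.1 (hmin p hp' q hq' hpq) with h | h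
    · have : p = v := le_antisymm hp.2 h
      subst this
      exact absurd hpq (hA q hq' hq.2)
    · have : q = v := le_antisymm hq.2 h
      subst this
      exact hai hp' hu (hpq.trans huv.symm)

lemma ei_perturb (c b : ℂ) {r : ℝ} (hr : 0 < r) (hb : b ∈ ball c r) :
    ∃ ψ : ℂ ≃ₜ ℂ, ψ c = b ∧ (∀ z, z ∉ ball c r → ψ z = z) ∧ (∀ z, ψ z ∈ ball c r ↔ z ∈ ball c r) := by
  let f : ℂ → ℂ := fun z => z + ((max 0 (1 - ‖z - c‖ / r) : ℝ) : ℂ) * (b - c)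
  have hbr : ‖b - c‖ < r := by rwa [mem_ball, dist_eq_norm] at hb
  set k : NNReal := (‖b - c‖ / r).toNNReal with hk
  have hkc : (k : ℝ) = ‖b - c‖ / r := Real.coe_toNNReal _ (by positivity)
  have happ : ApproximatesLinearOn f ((ContinuousLinearEquiv.refl ℝ ℂ : ℂ ≃L[ℝ] ℂ) : ℂ →L[ℝ] ℂ)
      univ k := by
    intro x _ y _
    have : f x - f y - ((ContinuousLinearEquiv.refl ℝ ℂ : ℂ ≃L[ℝ] ℂ) : ℂ →L[ℝ] ℂ) (x - y) =
        ((max 0 (1 - ‖x - c‖ / r) - max 0 (1 - ‖y - c‖ / r) : ℝ) : ℂ) * (b - c) := by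
      simp [f]; ring
    rw [this, norm_mul, Complex.norm_real, Real.norm_eq_abs]
    have h1 : |max 0 (1 - ‖x - c‖ / r) - max 0 (1 - ‖y - c‖ / r)| ≤ ‖x - y‖ / r := by
      refine (abs_max_sub_max_le_max _ _ _ _).trans ?_
      simp only [sub_self, abs_zero]
      refine max_le (by positivity) ?_
      rw [show 1 - ‖x - c‖ / r - (1 - ‖y - c‖ / r) = (‖y - c‖ - ‖x - c‖) / r by ring,
        abs_div, abs_of_pos hr]
      gcongr
      rw [abs_sub_comm]
      refine (abs_norm_sub_norm_le _ _).trans ?_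
      simp
    calc _ ≤ ‖x - y‖ / r * ‖b - c‖ := by gcongr
      _ = (k : ℝ) * ‖x - y‖ := by rw [hkc]; ring
  have hk1 : k < ‖((ContinuousLinearEquiv.refl ℝ ℂ).symm : ℂ →L[ℝ] ℂ)‖₊⁻¹ := by
    have : ‖((ContinuousLinearEquiv.refl ℝ ℂ).symm : ℂ →L[ℝ] ℂ)‖₊ = 1 := by
      have := ContinuousLinearMap.nnnorm_id (𝕜 := ℝ) (E := ℂ)
      exact this
    rw [this, inv_one, ← NNReal.coe_lt_coe]
    rw [hkc, NNReal.coe_one]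
    rw [div_lt_one hr]; exact hbr
  let ψ := happ.toHomeomorph f (Or.inr hk1)
  have hψ : ∀ z, ψ z = f z := fun z => rfl
  have hout : ∀ z, z ∉ ball c r → ψ z = z := by
    intro z hz
    rw [mem_ball, dist_eq_norm, not_lt] at hz
    have : 1 - ‖z - c‖ / r ≤ 0 := by rw [sub_nonpos, one_le_div hr]; exact hz
    simp [hψ, f, max_eq_left this]
  refine ⟨ψ, by simp [hψ, f], hout, ?_⟩
  have hin : ∀ z ∈ ball c r, ψ z ∈ ball c r := by
    intro z hz
    by_contra hcon
    have := ψ.injective (hout _ hcon)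
    rw [this] at hcon; exact hcon hz
  intro z
  refine ⟨fun h => ?_, hin z⟩
  by_contra hcon
  rw [hout z hcon] at h
  exact hcon h

lemma ei_extend {h : ℂ → ℂ} (hc : Continuous h) {σ : ℝ → ℂ} (hσ : ContinuousOn σ (Icc 0 1))
    (h1 : σ 1 = h (σ 0)) : ∃ s : ℝ → ℂ, ContinuousOn s (Ici 0) ∧ EqOn s σ (Icc 0 1) ∧
      ∀ t, 0 ≤ t → s (t + 1) = h (s t) := by
  let s : ℝ → ℂ := fun t => h^[⌊t⌋₊] (σ (t - ⌊t⌋₊))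
  have hs : ∀ n : ℕ, ∀ t ∈ Icc (n : ℝ) (n + 1), s t = h^[n] (σ (t - n)) := by
    intro n t ht
    rcases ht.2.lt_or_eq with h2 | h2
    · have : ⌊t⌋₊ = n := by
        rw [Nat.floor_eq_iff ((Nat.cast_nonneg n).trans ht.1)]; exact ⟨ht.1, h2⟩
      simp only [s, this]
    · have : ⌊t⌋₊ = n + 1 := by
        rw [h2]; exact_mod_cast Nat.floor_natCast (n + 1)
      simp only [s, this]
      rw [h2]
      push_cast
      rw [sub_self, Function.iterate_succ_apply, ← h1]
      congr 2; ring
  have hstep : ∀ t, 0 ≤ t → s (t + 1) = h (s t) := by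
    intro t ht
    simp only [s, Nat.floor_add_one ht]
    push_cast
    rw [Function.iterate_succ_apply']
    congr 3; ring
  have hpiece : ∀ n : ℕ, ContinuousOn s (Icc (n:ℝ) (n+1)) := by
    intro n
    refine ContinuousOn.congr ?_ (hs n)
    refine (hc.iterate n).comp_continuousOn (hσ.comp (Continuous.continuousOn (by fun_prop)) ?_)
    intro t ht
    constructor <;> simp <;> linarith [ht.1, ht.2]
  have hinit : ∀ n : ℕ, ContinuousOn s (Icc (0:ℝ) n) := by
    intro n
    induction n with
    | zero => simp
    | succ n ih =>
      have := ih.union_of_isClosed (hpiece n) isClosed_Icc isClosed_Icc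
      rw [Icc_union_Icc_eq_Icc (by positivity) (by linarith)] at this
      exact_mod_cast this
  refine ⟨s, ?_, ?_, hstep⟩
  · intro t ht
    obtain ⟨n, hn⟩ := exists_nat_gt t
    refine ((hinit n) t ⟨ht, hn.le⟩).mono_of_mem_nhdsWithin ?_
    have : Iio (n:ℝ) ∈ 𝓝 t := Iio_mem_nhds hn
    filter_upwards [self_mem_nhdsWithin, mem_nhdsWithin_of_mem_nhds this] with u hu hu'
    exact ⟨hu, le_of_lt hu'⟩
  · intro t ht
    have := hs 0 t (by simpa using ht)
    simpa using this

lemma ei_fixed {h : ℂ → ℂ} (hc : Continuous h) (hi : Function.Injective h) {M : ℝ}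
    (hM : ∀ z, ‖h z - z‖ ≤ M) {D : Set ℂ} (hDs : IsSimplyConnected D) (hDo : IsOpen D)
    (hD : MapsTo h D D) {W : Set ℂ} (hWD : W ⊆ D) (hWo : IsOpen W) (hWc : IsConnected W)
    (hW : MapsTo h W W)
    (hnw : ∀ V ⊆ W, IsOpen V → V.Nonempty → ∃ n : ℕ, 1 ≤ n ∧ ∃ b ∈ V, h^[n] b ∈ V) :
    ∃ z ∈ D, h z = z := by
  by_contra! hfix
  obtain ⟨σ, hσc, hσi, hσW, hσ1, hσt⟩ := ei_trans_arc hc hWo hWc.isPreconnected hWc.nonempty hW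
    (fun z hz => hfix z (hWD hz))
  obtain ⟨u, hu0, hu1, hu⟩ : ∃ u : ℝ, 0 < u ∧ u < 1 ∧ σ u ≠ h (σ 1) := by
    by_cases h2 : σ (1/2) = h (σ 1)
    · refine ⟨1/3, by norm_num, by norm_num, fun h3 => ?_⟩
      have := hσi (x₁ := 1/2) (x₂ := 1/3) (by constructor <;> norm_num)
        (by constructor <;> norm_num) (h2.trans h3.symm)
      norm_num at this
    · exact ⟨1/2, by norm_num, by norm_num, h2⟩
  have huI : u ∈ Icc (0:ℝ) 1 := ⟨hu0.le, hu1.le⟩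
  set c := σ u with hcdef
  have hcW : c ∈ W := hσW huI
  set arc := σ '' Icc 0 1 with harc
  have harcc : IsCompact arc := isCompact_Icc.image_of_continuousOn hσc
  have hc1 : c ∉ h '' arc := by
    rintro ⟨_, ⟨t, ht, rfl⟩, he⟩
    rcases ht.2.lt_or_eq with h2 | h2
    · have := hσt u huI t ⟨ht.1, h2⟩ he.symm
      linarith
    · subst h2
      exact hu he.symm
  have hc2 : h c ∉ arc := by
    rintro ⟨t, ht, he⟩
    have h1 := hσt t ht u ⟨hu0.le, hu1⟩ he
    subst h1
    rw [hσ1] at he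
    have := hσi ⟨le_rfl, zero_le_one⟩ huI (hi he)
    linarith
  obtain ⟨r, hr, hrW, hr1, hr2, hr3⟩ : ∃ r > 0, ball c r ⊆ W ∧ (∀ z ∈ ball c r, z ∉ h '' arc) ∧
      (∀ z ∈ ball c r, h z ∉ arc) ∧ (∀ z ∈ ball c r, h z ∉ ball c r) := by
    have e1 : ∀ᶠ z in 𝓝 c, z ∈ W := hWo.mem_nhds hcW
    have e2 : ∀ᶠ z in 𝓝 c, z ∉ h '' arc :=
      ((harcc.image hc).isClosed.isOpen_compl).mem_nhds hc1
    have e3 : ∀ᶠ z in 𝓝 c, h z ∉ arc :=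
      (harcc.isClosed.isOpen_compl.preimage hc).mem_nhds hc2
    obtain ⟨U, V, hU, hV, hcU, hcV, hUV⟩ := t2_separation (hfix c (hWD hcW)).symm
    have e4 : ∀ᶠ z in 𝓝 c, z ∈ U ∩ h ⁻¹' V := (hU.inter (hV.preimage hc)).mem_nhds ⟨hcU, hcV⟩
    obtain ⟨r, hr, hb⟩ := Metric.eventually_nhds_iff_ball.1 (e1.and (e2.and (e3.and e4)))
    exact ⟨r, hr, fun z hz => (hb z hz).1, fun z hz => (hb z hz).2.1, fun z hz => (hb z hz).2.2.1,
      fun z hz hz' => Set.disjoint_left.1 hUV (hb _ hz').2.2.2.1 (hb z hz).2.2.2.2⟩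
  set B := ball c r with hB
  have hcB : c ∈ B := mem_ball_self hr
  have hex : ∃ n : ℕ, 1 ≤ n ∧ ∃ b ∈ B, h^[n] b ∈ B := hnw B hrW isOpen_ball ⟨c, hcB⟩
  classical
  set n := Nat.find hex with hn
  obtain ⟨hn1, b, hbB, hnb⟩ := Nat.find_spec hex
  rw [← hn] at hn1 hnb
  have hmin : ∀ j, 1 ≤ j → j < n → h^[j] b ∉ B := fun j hj hjn hh =>
    Nat.find_min hex hjn ⟨hj, b, hbB, hh⟩
  obtain ⟨ψ, hψ1, hψ2, hψ3⟩ := ei_perturb c b hr hbB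
  obtain ⟨φ, hφ1, hφ2, hφ3⟩ := ei_perturb c (h^[n] b) hr hnb
  have hφs : ∀ z, z ∉ B → φ.symm z = z := by
    intro z hz
    rw [Homeomorph.symm_apply_eq]; exact (hφ2 z hz).symm
  have hφs' : ∀ z, φ.symm z ∈ B ↔ z ∈ B := by
    intro z
    have := hφ3 (φ.symm z)
    rw [φ.apply_symm_apply] at this; exact this.symm
  have hsmall : ∀ z w, (z ∈ B ∧ w ∈ B) ∨ w = z → ‖w - z‖ ≤ 2 * r := by
    rintro z w (⟨hz, hw⟩ | rfl)
    · rw [← dist_eq_norm]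
      have := dist_triangle_right w z c
      rw [hB, mem_ball] at hz hw; linarith
    · simp; exact hr.le
  let h' : ℂ → ℂ := fun z => φ.symm (h (ψ z))
  have hc' : Continuous h' := φ.symm.continuous.comp (hc.comp ψ.continuous)
  have hi' : Function.Injective h' := φ.symm.injective.comp (hi.comp ψ.injective)
  have hM' : ∀ z, ‖h' z - z‖ ≤ M + 4 * r := by
    intro z
    have a1 : ‖φ.symm (h (ψ z)) - h (ψ z)‖ ≤ 2 * r := by
      apply hsmall
      by_cases hz : h (ψ z) ∈ B
      · exact Or.inl ⟨hz, (hφs' _).2 hz⟩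
      · exact Or.inr (hφs _ hz)
    have a2 : ‖ψ z - z‖ ≤ 2 * r := by
      apply hsmall
      by_cases hz : z ∈ B
      · exact Or.inl ⟨hz, (hψ3 _).2 hz⟩
      · exact Or.inr (hψ2 _ hz)
    have : h' z - z = (φ.symm (h (ψ z)) - h (ψ z)) + (h (ψ z) - ψ z) + (ψ z - z) := by
      simp only [h']; ring
    rw [this]
    refine (norm_add₃_le).trans ?_
    linarith [hM (ψ z)]
  have hD' : MapsTo h' D D := by
    intro z hz
    have a1 : ψ z ∈ D := by
      by_cases hz' : z ∈ B
      · exact hWD (hrW ((hψ3 _).2 hz'))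
      · rw [hψ2 _ hz']; exact hz
    have a2 := hD a1
    by_cases hz' : h (ψ z) ∈ B
    · exact hWD (hrW ((hφs' _).2 hz'))
    · simp only [h']; rw [hφs _ hz']; exact a2
  have hfix' : ∀ z ∈ D, h' z ≠ z := by
    intro z hz he
    have he : h (ψ z) = φ z := by rw [← Homeomorph.symm_apply_eq]; exact he
    by_cases hz' : z ∈ B
    · have := hr3 _ ((hψ3 _).2 hz')
      rw [he] at this
      exact this ((hφ3 _).2 hz')
    · rw [hψ2 _ hz', hφ2 _ hz'] at he
      exact hfix z hz he
  have h0B : σ 0 ∉ B := fun hh => hr2 _ hh (by rw [← hσ1]; exact mem_image_of_mem _ ⟨zero_le_one, le_rfl⟩)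
  have h1B : σ 1 ∉ B := fun hh => hr1 _ hh (by
    rw [hσ1]; exact mem_image_of_mem _ (mem_image_of_mem _ ⟨le_rfl, zero_le_one⟩))
  have hσ1' : σ 1 = h' (σ 0) := by
    simp only [h']; rw [hψ2 _ h0B, ← hσ1, hφs _ h1B]
  obtain ⟨s, hsc, hse, hss⟩ := ei_extend hc' hσc hσ1'
  have hsD : ∀ t, 0 ≤ t → s t ∈ D := by
    have : ∀ n : ℕ, ∀ t : ℝ, 0 ≤ t → t ≤ n → s t ∈ D := by
      intro n
      induction n with
      | zero =>
        intro t h0 h1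
        have : t ∈ Icc (0:ℝ) 1 := ⟨h0, by simp at h1; linarith⟩
        rw [hse this]; exact hWD (hσW this)
      | succ n ih =>
        intro t h0 h1
        rcases le_or_gt t 1 with h2 | h2
        · rw [hse ⟨h0, h2⟩]; exact hWD (hσW ⟨h0, h2⟩)
        · have := hD' (ih (t - 1) (by linarith) (by push_cast at h1; linarith))
          rw [← hss _ (by linarith)] at this
          simpa using this
    intro t ht
    obtain ⟨n, hn⟩ := exists_nat_ge t
    exact this n t ht hn
  have hs2 : ∀ t, 1 ≤ t → t < 2 → s t = h' (σ (t - 1)) := by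
    intro t h1 h2
    have := hss (t - 1) (by linarith)
    rw [hse (x := t - 1) ⟨by linarith, by linarith⟩] at this
    simpa using this
  have hmix : ∀ a ∈ Ico (0:ℝ) 2, ∀ d ∈ Ico (0:ℝ) 2, a < 1 → 1 ≤ d → s a ≠ s d := by
    intro a ha d hd ha1 hd1 he
    have haI : a ∈ Icc (0:ℝ) 1 := ⟨ha.1, ha1.le⟩
    have hdI : d - 1 ∈ Icc (0:ℝ) 1 := ⟨by linarith, by linarith [hd.2]⟩
    rw [hse haI, hs2 d hd1 hd.2] at he
    by_cases hz : σ (d - 1) ∈ B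
    · have b1 := (hψ3 _).2 hz
      have b2 := hφs _ (hr3 _ b1)
      simp only [h'] at he
      rw [b2] at he
      exact hr2 _ b1 ⟨a, haI, he⟩
    · have b2 : h (σ (d - 1)) ∉ B := fun hh => hr1 _ hh (mem_image_of_mem _ (mem_image_of_mem _ hdI))
      simp only [h'] at he
      rw [hψ2 _ hz, hφs _ b2] at he
      have := hσt a haI (d - 1) ⟨hdI.1, by linarith [hd.2]⟩ he
      linarith
  have hsi : InjOn s (Ico 0 2) := by
    intro a ha d hd he
    rcases lt_or_ge a 1 with h1 | h1 <;> rcases lt_or_ge d 1 with h2 | h2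
    · have haI : a ∈ Icc (0:ℝ) 1 := ⟨ha.1, h1.le⟩
      have hdI : d ∈ Icc (0:ℝ) 1 := ⟨hd.1, h2.le⟩
      rw [hse haI, hse hdI] at he
      exact hσi haI hdI he
    · exact absurd he (hmix a ha d hd h1 h2)
    · exact absurd he.symm (hmix d hd a ha h2 h1)
    · rw [hs2 a h1 ha.2, hs2 d h2 hd.2] at he
      have := hσi ⟨by linarith, by linarith [ha.2]⟩ ⟨by linarith, by linarith [hd.2]⟩ (hi' he)
      linarith
  have hfin := ei_brouwer hc' hi' hM' hDs hDo hD' hfix' hsc hsD hss hsi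
  have hiter : ∀ j : ℕ, s (u + j) = h'^[j] c := by
    intro j
    induction j with
    | zero => simp [hse huI, hcdef]
    | succ j ih =>
      rw [Function.iterate_succ_apply', ← ih, ← hss _ (by positivity)]
      push_cast; congr 1; ring
  have hψiter : ∀ j : ℕ, j < n → ψ (h'^[j] c) = h^[j] b := by
    intro j
    induction j with
    | zero => intro _; simpa using hψ1
    | succ j ih =>
      intro hj
      rw [Function.iterate_succ_apply']
      have h3 := hmin (j+1) (by omega) hj
      have : h' (h'^[j] c) = h^[j+1] b := by
        simp only [h']; rw [ih (by omega), ← Function.iterate_succ_apply' h, hφs _ h3]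
      rw [this, hψ2 _ h3]
  have hper : h'^[n] c = c := by
    obtain ⟨m, hm⟩ : ∃ m, n = m + 1 := ⟨n - 1, by omega⟩
    have h4 := hψiter m (by omega)
    rw [hm, Function.iterate_succ_apply']
    simp only [h']
    rw [h4, ← Function.iterate_succ_apply' h, Homeomorph.symm_apply_eq, hφ1, hm]
  have h5 := hiter n
  rw [hper] at h5
  have h6 : s u = c := hse huI
  have h7 := hfin (show u ∈ Ici (0:ℝ) from hu0.le) (show u + n ∈ Ici (0:ℝ) from by
    simp only [mem_Ici]; positivity) (h6.trans h5.symm)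
  have : (1:ℝ) ≤ n := by exact_mod_cast hn1
  linarith


/-! ### Simple connectivity of plane domains whose complement has no bounded component -/

lemma ei_comb {Γ : Type*} [Group Γ] (H V : ℤ × ℤ → Γ) (bH bV bs : ℤ × ℤ → Prop)
    (hflat : ∀ i j, ¬ bs (i, j) → H (i, j) * V (i + 1, j) = V (i, j) * H (i, j + 1))
    (hHb : ∀ i j, bH (i, j) → bs (i, j) ∧ bs (i, j - 1))
    (hVb : ∀ i j, bV (i, j) → bs (i, j) ∧ bs (i - 1, j))
    (S : Finset (ℤ × ℤ)) (hacc : ∀ S' ⊆ S, S'.Nonempty → ∃ i j : ℤ,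
      (bH (i, j) ∧ (((i, j) ∈ S' ∧ (i, j - 1) ∉ S') ∨ ((i, j) ∉ S' ∧ (i, j - 1) ∈ S'))) ∨
      (bV (i, j) ∧ (((i, j) ∈ S' ∧ (i - 1, j) ∉ S') ∨ ((i, j) ∉ S' ∧ (i - 1, j) ∈ S')))) :
    ∃ H' V' : ℤ × ℤ → Γ, (∀ q, ¬ bH q → H' q = H q) ∧ (∀ q, ¬ bV q → V' q = V q) ∧
      ∀ i j, (¬ bs (i, j) ∨ (i, j) ∈ S) → H' (i, j) * V' (i + 1, j) = V' (i, j) * H' (i, j + 1) := by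
  classical
  induction S using Finset.strongInduction with
  | H S ih =>
    rcases S.eq_empty_or_nonempty with rfl | hne
    · exact ⟨H, V, fun _ _ => rfl, fun _ _ => rfl, fun i j h => hflat i j (by simpa using h)⟩
    obtain ⟨i, j, hij⟩ := hacc S subset_rfl hne
    have IH : ∀ Q ∈ S, ∃ H' V' : ℤ × ℤ → Γ, (∀ q, ¬ bH q → H' q = H q) ∧ (∀ q, ¬ bV q → V' q = V q) ∧
        ∀ i j, (¬ bs (i, j) ∨ (i, j) ∈ S.erase Q) →
        H' (i, j) * V' (i + 1, j) = V' (i, j) * H' (i, j + 1) := fun Q hQ =>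
      ih _ (Finset.erase_ssubset hQ) (fun S' hS' => hacc S' (hS'.trans (Finset.erase_subset _ _)))
    rcases hij with ⟨hb, hS⟩ | ⟨hb, hS⟩
    · obtain ⟨hb1, hb2⟩ := hHb i j hb
      rcases hS with ⟨h1, h2⟩ | ⟨h2, h1⟩
      · obtain ⟨H', V', hH, hV, hf⟩ := IH _ h1
        refine ⟨Function.update H' (i, j) (V' (i, j) * H' (i, j + 1) * (V' (i + 1, j))⁻¹), V',
          fun q hq => ?_, hV, ?_⟩
        · rw [Function.update_of_ne (by rintro rfl; exact hq hb)]; exact hH q hq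
        · intro k l hkl
          by_cases e1 : (k, l) = (i, j)
          · obtain ⟨rfl, rfl⟩ := Prod.mk.inj e1
            rw [Function.update_self, Function.update_of_ne (by simp)]
            group
          by_cases e2 : (k, l + 1) = (i, j)
          · obtain ⟨rfl, rfl⟩ := Prod.mk.inj e2
            rw [add_sub_cancel_right] at h2 hb2
            tauto
          rw [Function.update_of_ne e1, Function.update_of_ne e2]
          exact hf k l (by rw [Finset.mem_erase]; tauto)
      · obtain ⟨H', V', hH, hV, hf⟩ := IH _ h1
        refine ⟨Function.update H' (i, j) ((V' (i, j - 1))⁻¹ * H' (i, j - 1) * V' (i + 1, j - 1)), V',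
          fun q hq => ?_, hV, ?_⟩
        · rw [Function.update_of_ne (by rintro rfl; exact hq hb)]; exact hH q hq
        · intro k l hkl
          by_cases e1 : (k, l) = (i, j)
          · obtain ⟨rfl, rfl⟩ := Prod.mk.inj e1
            tauto
          by_cases e2 : (k, l + 1) = (i, j)
          · obtain ⟨rfl, rfl⟩ := Prod.mk.inj e2
            rw [add_sub_cancel_right] at h1 hb2
            rw [Function.update_self, Function.update_of_ne (by simp), add_sub_cancel_right]
            group
          rw [Function.update_of_ne e1, Function.update_of_ne e2]
          refine hf k l (hkl.imp id fun h => ?_)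
          rw [Finset.mem_erase]
          refine ⟨fun e => e2 ?_, h⟩
          obtain ⟨rfl, rfl⟩ := Prod.mk.inj e
          simp
    · obtain ⟨hb1, hb2⟩ := hVb i j hb
      rcases hS with ⟨h1, h2⟩ | ⟨h2, h1⟩
      · obtain ⟨H', V', hH, hV, hf⟩ := IH _ h1
        refine ⟨H', Function.update V' (i, j) (H' (i, j) * V' (i + 1, j) * (H' (i, j + 1))⁻¹),
          hH, fun q hq => ?_, ?_⟩
        · rw [Function.update_of_ne (by rintro rfl; exact hq hb)]; exact hV q hq
        · intro k l hkl
          by_cases e1 : (k, l) = (i, j)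
          · obtain ⟨rfl, rfl⟩ := Prod.mk.inj e1
            rw [Function.update_self, Function.update_of_ne (by simp)]
            group
          by_cases e2 : (k + 1, l) = (i, j)
          · obtain ⟨rfl, rfl⟩ := Prod.mk.inj e2
            rw [add_sub_cancel_right] at h2 hb2
            tauto
          rw [Function.update_of_ne e1, Function.update_of_ne e2]
          exact hf k l (by rw [Finset.mem_erase]; tauto)
      · obtain ⟨H', V', hH, hV, hf⟩ := IH _ h1
        refine ⟨H', Function.update V' (i, j) ((H' (i - 1, j))⁻¹ * V' (i - 1, j) * H' (i - 1, j + 1)),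
          hH, fun q hq => ?_, ?_⟩
        · rw [Function.update_of_ne (by rintro rfl; exact hq hb)]; exact hV q hq
        · intro k l hkl
          by_cases e1 : (k, l) = (i, j)
          · obtain ⟨rfl, rfl⟩ := Prod.mk.inj e1
            tauto
          by_cases e2 : (k + 1, l) = (i, j)
          · obtain ⟨rfl, rfl⟩ := Prod.mk.inj e2
            rw [add_sub_cancel_right] at h1 hb2
            rw [Function.update_self, Function.update_of_ne (by simp), add_sub_cancel_right]
            group
          rw [Function.update_of_ne e1, Function.update_of_ne e2]
          refine hf k l (hkl.imp id fun h => ?_)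
          rw [Finset.mem_erase]
          refine ⟨fun e => e2 ?_, h⟩
          obtain ⟨rfl, rfl⟩ := Prod.mk.inj e
          simp

/-- The closed box with lower left corner at grid position `(i, j)`, `a` by `b` cells. -/
def eiBox (s : ℝ) (i j a b : ℤ) : Set ℂ :=
  {z | i * s ≤ z.re ∧ z.re ≤ (i + a) * s ∧ j * s ≤ z.im ∧ z.im ≤ (j + b) * s}

/-- The grid vertex `(i, j)`. -/
def eiV (s : ℝ) (i j : ℤ) : ℂ := ⟨i * s, j * s⟩

lemma ei_box_convex (s : ℝ) (i j a b : ℤ) : Convex ℝ (eiBox s i j a b) := by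
  have : eiBox s i j a b = Complex.reLm ⁻¹' (Icc (i * s) ((i + a) * s)) ∩
      Complex.imLm ⁻¹' (Icc (j * s) ((j + b) * s)) := by
    ext z; simp [eiBox, and_assoc]
  rw [this]
  exact ((convex_Icc _ _).linear_preimage _).inter ((convex_Icc _ _).linear_preimage _)

lemma ei_box_closed (s : ℝ) (i j a b : ℤ) : IsClosed (eiBox s i j a b) := by
  have : eiBox s i j a b = ((Icc (i * s) ((i + a) * s)) ×ℂ (Icc (j * s) ((j + b) * s))) := by
    ext z; simp [eiBox, Complex.mem_reProdIm, and_assoc]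
  rw [this]
  exact isClosed_Icc.reProdIm isClosed_Icc

lemma ei_cell_loc {s : ℝ} (hs : 0 < s) (z : ℂ) : z ∈ eiBox s ⌊z.re / s⌋ ⌊z.im / s⌋ 1 1 := by
  have h1 := Int.floor_le (z.re / s)
  have h2 := (Int.lt_floor_add_one (z.re / s)).le
  have h3 := Int.floor_le (z.im / s)
  have h4 := (Int.lt_floor_add_one (z.im / s)).le
  rw [le_div_iff₀ hs] at h1 h3
  rw [div_le_iff₀ hs] at h2 h4
  exact ⟨h1, by push_cast; exact h2, h3, by push_cast; exact h4⟩

/-- A union of cells is closed. -/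
lemma ei_cells_closed {s : ℝ} (hs : 0 < s) (A : Set (ℤ × ℤ)) :
    IsClosed (⋃ q ∈ A, eiBox s q.1 q.2 1 1) := by
  have : LocallyFinite (fun q : A => eiBox s q.1.1 q.1.2 1 1) := by
    intro z
    refine ⟨ball z s, ball_mem_nhds z hs, ?_⟩
    have hfin : (Icc (⌊z.re / s⌋ - 3) (⌊z.re / s⌋ + 3) ×ˢ Icc (⌊z.im / s⌋ - 3) (⌊z.im / s⌋ + 3) :
      Set (ℤ × ℤ)).Finite := (finite_Icc _ _).prod (finite_Icc _ _)
    refine Set.Finite.subset (hfin.preimage Subtype.val_injective.injOn) ?_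
    rintro ⟨⟨i, j⟩, hq⟩ ⟨w, hw, hwz⟩
    rw [mem_ball, dist_eq_norm] at hwz
    have r1 := abs_lt.1 ((Complex.abs_re_le_norm (w - z)).trans_lt hwz)
    have r2 := abs_lt.1 ((Complex.abs_im_le_norm (w - z)).trans_lt hwz)
    rw [Complex.sub_re] at r1
    rw [Complex.sub_im] at r2
    obtain ⟨a1, a2, a3, a4⟩ := hw
    obtain ⟨b1, b2, b3, b4⟩ := ei_cell_loc hs z
    push_cast at *
    have key : ∀ m n : ℤ, (m : ℝ) * s < (n + 3) * s → m < n + 3 := by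
      intro m n h
      have := lt_of_mul_lt_mul_right h hs.le
      exact_mod_cast this
    have k1 := key i ⌊z.re / s⌋ (by nlinarith)
    have k2 := key ⌊z.re / s⌋ i (by nlinarith)
    have k3 := key j ⌊z.im / s⌋ (by nlinarith)
    have k4 := key ⌊z.im / s⌋ j (by nlinarith)
    simp only [mem_preimage, mem_prod, mem_Icc]
    omega
  have h2 := this.isClosed_iUnion (fun q => ei_box_closed _ _ _ _ _)
  rwa [biUnion_eq_iUnion]


lemma ei_access {D : Set ℂ} (hunb : ∀ z ∉ D, ∃ Z ⊆ Dᶜ, z ∈ Z ∧ IsPreconnected Z ∧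
    ¬ Bornology.IsBounded Z) {s : ℝ} (hs : 0 < s) (S : Finset (ℤ × ℤ)) (hne : S.Nonempty)
    (hbad : ∀ q ∈ S, ¬ eiBox s q.1 q.2 1 1 ⊆ D) :
    ∃ i j : ℤ, (¬ eiBox s i j 1 0 ⊆ D ∧ (((i, j) ∈ S ∧ (i, j - 1) ∉ S) ∨
        ((i, j) ∉ S ∧ (i, j - 1) ∈ S))) ∨
      (¬ eiBox s i j 0 1 ⊆ D ∧ (((i, j) ∈ S ∧ (i - 1, j) ∉ S) ∨ ((i, j) ∉ S ∧ (i - 1, j) ∈ S))) := by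
  obtain ⟨q, hq⟩ := hne
  obtain ⟨z, hzq, hzD⟩ := not_subset.1 (hbad q hq)
  obtain ⟨Z, hZD, hzZ, hZc, hZu⟩ := hunb z hzD
  set A : Set ℂ := ⋃ q ∈ {q | q ∈ S}, eiBox s q.1 q.2 1 1 with hA
  set B : Set ℂ := ⋃ q ∈ {q | q ∉ S}, eiBox s q.1 q.2 1 1 with hB
  have hcov : Z ⊆ A ∪ B := by
    intro w hw
    by_cases h : (⌊w.re / s⌋, ⌊w.im / s⌋) ∈ S
    · exact Or.inl (mem_biUnion (show _ ∈ {q | q ∈ S} from h) (ei_cell_loc hs w))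
    · exact Or.inr (mem_biUnion (show _ ∈ {q | q ∉ S} from h) (ei_cell_loc hs w))
  have hAb : Bornology.IsBounded A := by
    refine (Bornology.isBounded_biUnion S.finite_toSet).2 fun q _ => ?_
    refine ((isCompact_Icc (a := (q.1 * s)) (b := ((q.1 + 1) * s))).reProdIm
      (isCompact_Icc (a := (q.2 * s)) (b := ((q.2 + 1) * s)))).isBounded.subset ?_
    intro w hw
    simp only [eiBox, mem_ofPred_eq, Int.cast_one] at hw
    simp [Complex.mem_reProdIm, hw]
  have hZB : (Z ∩ B).Nonempty := by
    by_contra hcon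
    refine hZu (hAb.subset fun w hw => (hcov hw).resolve_right fun hwB => hcon ⟨w, hw, hwB⟩)
  have hZA : (Z ∩ A).Nonempty := ⟨z, hzZ, mem_biUnion (show _ ∈ {q | q ∈ S} from hq) hzq⟩
  obtain ⟨w, hwZ, hwA, hwB⟩ := isPreconnected_closed_iff.1 hZc A B (ei_cells_closed hs _)
    (ei_cells_closed hs _) hcov hZA hZB
  have hwD : w ∉ D := hZD hwZ
  simp only [hA, hB, mem_iUnion, exists_prop, mem_ofPred_eq] at hwA hwB
  obtain ⟨⟨i1, j1⟩, hS1, h1⟩ := hwA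
  obtain ⟨⟨i2, j2⟩, hS2, h2⟩ := hwB
  have adj : ∀ m n : ℤ, ∀ x : ℝ, m * s ≤ x → x ≤ (m + 1) * s → n * s ≤ x → x ≤ (n + 1) * s →
      m ≠ n → (m = n + 1 ∧ x = m * s) ∨ (n = m + 1 ∧ x = n * s) := by
    intro m n x a1 a2 a3 a4 hne
    have b1 : m ≤ n + 1 := by
      have := le_of_mul_le_mul_right (a1.trans a4) hs; exact_mod_cast this
    have b2 : n ≤ m + 1 := by
      have := le_of_mul_le_mul_right (a3.trans a2) hs; exact_mod_cast this
    rcases lt_or_gt_of_ne hne with h | h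
    · have : n = m + 1 := by omega
      subst this; push_cast at a3 ⊢; exact Or.inr ⟨rfl, le_antisymm a2 a3⟩
    · have : m = n + 1 := by omega
      subst this; push_cast at a1 ⊢; exact Or.inl ⟨rfl, le_antisymm a4 a1⟩
  simp only [eiBox, mem_ofPred_eq, Int.cast_one] at h1 h2
  by_cases h3 : (i1, j2) ∈ S
  · have hne : i1 ≠ i2 := by rintro rfl; exact hS2 h3
    rcases adj i1 i2 w.re h1.1 h1.2.1 h2.1 h2.2.1 hne with ⟨e, hx⟩ | ⟨e, hx⟩
    · refine ⟨i1, j2, Or.inr ⟨fun hsub => hwD (hsub ?_), Or.inl ⟨h3, ?_⟩⟩⟩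
      · simp only [eiBox, mem_ofPred_eq, Int.cast_one, Int.cast_zero, add_zero]
        exact ⟨hx.ge, hx.le, h2.2.2⟩
      · rw [e, add_sub_cancel_right]; exact hS2
    · refine ⟨i2, j2, Or.inr ⟨fun hsub => hwD (hsub ?_), Or.inr ⟨hS2, ?_⟩⟩⟩
      · simp only [eiBox, mem_ofPred_eq, Int.cast_one, Int.cast_zero, add_zero]
        exact ⟨hx.ge, hx.le, h2.2.2⟩
      · rw [e, add_sub_cancel_right]; exact h3
  · have hne : j1 ≠ j2 := by rintro rfl; exact h3 hS1
    rcases adj j1 j2 w.im h1.2.2.1 h1.2.2.2 h2.2.2.1 h2.2.2.2 hne with ⟨e, hx⟩ | ⟨e, hx⟩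
    · refine ⟨i1, j1, Or.inl ⟨fun hsub => hwD (hsub ?_), Or.inl ⟨hS1, ?_⟩⟩⟩
      · simp only [eiBox, mem_ofPred_eq, Int.cast_one, Int.cast_zero, add_zero]
        exact ⟨h1.1, h1.2.1, hx.ge, hx.le⟩
      · rw [e, add_sub_cancel_right]; exact h3
    · refine ⟨i1, j2, Or.inl ⟨fun hsub => hwD (hsub ?_), Or.inr ⟨h3, ?_⟩⟩⟩
      · simp only [eiBox, mem_ofPred_eq, Int.cast_one, Int.cast_zero, add_zero]
        exact ⟨h1.1, h1.2.1, hx.ge, hx.le⟩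
      · rw [e, add_sub_cancel_right]; exact hS1

lemma ei_pot_box {Γ : Type*} [Group Γ] (H V : ℤ × ℤ → Γ) (n : ℤ)
    (hf : ∀ i j, -n ≤ i → i < n → -n ≤ j → j < n →
      H (i, j) * V (i + 1, j) = V (i, j) * H (i, j + 1)) :
    ∃ φ : ℤ → ℤ → Γ, (∀ i j, -n ≤ i → i < n → -n ≤ j → j < n → φ i j * H (i, j) = φ (i + 1) j) ∧
      (∀ i j, -n ≤ j → φ i j * V (i, j) = φ i (j + 1)) := by
  let X : ℕ → Γ := fun k => Nat.rec 1 (fun k x => x * H (k - n, -n)) k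
  have hX : ∀ k : ℕ, X (k + 1) = X k * H (k - n, -n) := fun k => rfl
  let Y : ℤ → ℕ → Γ := fun i k => Nat.rec (X (i + n).toNat) (fun k y => y * V (i, k - n)) k
  have hY0 : ∀ i, Y i 0 = X (i + n).toNat := fun i => rfl
  have hY : ∀ i, ∀ k : ℕ, Y i (k + 1) = Y i k * V (i, k - n) := fun i k => rfl
  have hVp : ∀ i j : ℤ, -n ≤ j → Y i (j + n).toNat * V (i, j) = Y i (j + 1 + n).toNat := by
    intro i j hj
    have e : (j + 1 + n).toNat = (j + n).toNat + 1 := by omega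
    rw [e, hY]
    congr 3; omega
  refine ⟨fun i j => Y i (j + n).toNat, ?_, hVp⟩
  intro i j hi hi' hj hj'
  have main : ∀ k : ℕ, (k : ℤ) - n < n → Y i k * H (i, k - n) = Y (i + 1) k := by
    intro k
    induction k with
    | zero =>
      intro _
      rw [hY0, hY0]
      have e : (i + 1 + n).toNat = (i + n).toNat + 1 := by omega
      rw [e, hX]
      congr 3
      · omega
      · simp
    | succ k ih =>
      intro hk
      push_cast at hk
      have h1 := ih (by omega)
      have h2 := hf i (k - n) hi hi' (by omega) (by omega)
      rw [hY, hY, ← h1, mul_assoc, mul_assoc, h2]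
      congr 4; push_cast; ring
  have := main (j + n).toNat (by omega)
  rw [show (((j + n).toNat : ℕ) : ℤ) - n = j by omega] at this
  exact this


lemma ei_potential {Γ : Type*} [Group Γ] {D : Set ℂ} (hDo : IsOpen D)
    (hunb : ∀ z ∉ D, ∃ Z ⊆ Dᶜ, z ∈ Z ∧ IsPreconnected Z ∧ ¬ Bornology.IsBounded Z)
    (g : ℂ → ℂ → Γ)
    (hg : ∀ K ⊆ D, Convex ℝ K → ∀ a ∈ K, ∀ b ∈ K, ∀ c ∈ K, g a b * g b c = g a c)
    {K : Set ℂ} (hK : IsCompact K) (hKD : K ⊆ D) :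
    ∃ ε > 0, ∃ Φ : ℂ → Γ, ∀ a ∈ K, ∀ b ∈ K, dist a b < ε → Φ a * g a b = Φ b := by
  classical
  obtain ⟨δ, hδ, hthick⟩ := hK.exists_thickening_subset_open hDo hKD
  have hball : ∀ a ∈ K, ball a δ ⊆ D := fun a ha => (ball_subset_thickening ha δ).trans hthick
  set s := δ / 10 with hsdef
  have hs : 0 < s := by positivity
  have hδs : δ = 10 * s := by rw [hsdef]; ring
  obtain ⟨R, hR⟩ := hK.isBounded.subset_closedBall 0
  obtain ⟨n, hn⟩ := exists_nat_gt (R / s + 3)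
  have hns : R + 3 * s < n * s := by
    have := mul_lt_mul_of_pos_right hn hs
    rw [add_mul, div_mul_cancel₀ _ hs.ne'] at this
    linarith
  let H : ℤ × ℤ → Γ := fun q => g (eiV s q.1 q.2) (eiV s (q.1 + 1) q.2)
  let V : ℤ × ℤ → Γ := fun q => g (eiV s q.1 q.2) (eiV s q.1 (q.2 + 1))
  let bH : ℤ × ℤ → Prop := fun q => ¬ eiBox s q.1 q.2 1 0 ⊆ D
  let bV : ℤ × ℤ → Prop := fun q => ¬ eiBox s q.1 q.2 0 1 ⊆ D
  let bs : ℤ × ℤ → Prop := fun q => ¬ eiBox s q.1 q.2 1 1 ⊆ D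
  let S : Finset (ℤ × ℤ) := (Finset.Ico (-(n:ℤ)) n ×ˢ Finset.Ico (-(n:ℤ)) n).filter bs
  obtain ⟨H', V', hH', hV', hfl⟩ := ei_comb H V bH bV bs (by
      intro i j hb
      simp only [bs, not_not] at hb
      have v : ∀ a b : ℤ, 0 ≤ a → a ≤ 1 → 0 ≤ b → b ≤ 1 →
          eiV s (i + a) (j + b) ∈ eiBox s i j 1 1 := by
        intro a b h1 h2 h3 h4
        have h1' : (0:ℝ) ≤ a := by exact_mod_cast h1
        have h2' : (a:ℝ) ≤ 1 := by exact_mod_cast h2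
        have h3' : (0:ℝ) ≤ b := by exact_mod_cast h3
        have h4' : (b:ℝ) ≤ 1 := by exact_mod_cast h4
        simp only [eiV, eiBox, mem_ofPred_eq]
        push_cast
        refine ⟨?_, ?_, ?_, ?_⟩ <;> gcongr <;> linarith
      have v00 := v 0 0 (by simp) (by simp) (by simp) (by simp)
      have v10 := v 1 0 (by simp) (by simp) (by simp) (by simp)
      have v01 := v 0 1 (by simp) (by simp) (by simp) (by simp)
      have v11 := v 1 1 (by simp) (by simp) (by simp) (by simp)
      simp only [add_zero] at v00 v10 v01 v11
      simp only [H, V]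
      rw [hg _ hb (ei_box_convex _ _ _ _ _) _ v00 _ v10 _ v11,
        hg _ hb (ei_box_convex _ _ _ _ _) _ v00 _ v01 _ v11])
    (by
      intro i j hb
      simp only [bH] at hb
      constructor <;> intro hh <;> apply hb <;> refine Subset.trans ?_ hh <;> rintro w ⟨a1, a2, a3, a4⟩ <;>
        push_cast at * <;> refine ⟨?_, ?_, ?_, ?_⟩ <;> push_cast <;> linarith)
    (by
      intro i j hb
      simp only [bV] at hb
      constructor <;> intro hh <;> apply hb <;> refine Subset.trans ?_ hh <;> rintro w ⟨a1, a2, a3, a4⟩ <;>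
        push_cast at * <;> refine ⟨?_, ?_, ?_, ?_⟩ <;> push_cast <;> linarith)
    S (by
      intro S' hS' hne
      exact ei_access hunb hs S' hne (fun q hq => (Finset.mem_filter.1 (hS' hq)).2))
  obtain ⟨φ, hφH, hφV⟩ := ei_pot_box H' V' n (by
    intro i j h1 h2 h3 h4
    refine hfl i j ?_
    by_cases hb : bs (i, j)
    · right
      simp only [S, Finset.mem_filter, Finset.mem_product, Finset.mem_Ico]
      exact ⟨⟨⟨h1, h2⟩, ⟨h3, h4⟩⟩, hb⟩
    · exact Or.inl hb)
  refine ⟨s, hs, fun a => φ ⌊a.re / s⌋ ⌊a.im / s⌋ * g (eiV s ⌊a.re / s⌋ ⌊a.im / s⌋) a, ?_⟩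
  intro a ha b hb hab
  set B := ball a δ with hB
  have hBD : B ⊆ D := hball a ha
  have hBc : Convex ℝ B := convex_ball _ _
  have hBm : ∀ w : ℂ, |w.re - a.re| ≤ 4 * s → |w.im - a.im| ≤ 4 * s → w ∈ B := by
    intro w h1 h2
    rw [hB, mem_ball, dist_eq_norm, hδs]
    have := Complex.norm_le_abs_re_add_abs_im (w - a)
    rw [Complex.sub_re, Complex.sub_im] at this
    linarith
  rw [dist_eq_norm] at hab
  have r1 := abs_lt.1 ((Complex.abs_re_le_norm (a - b)).trans_lt hab)
  have r2 := abs_lt.1 ((Complex.abs_im_le_norm (a - b)).trans_lt hab)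
  rw [Complex.sub_re] at r1
  rw [Complex.sub_im] at r2
  obtain ⟨a1, a2, a3, a4⟩ := ei_cell_loc hs a
  obtain ⟨b1, b2, b3, b4⟩ := ei_cell_loc hs b
  have hna : ‖a‖ ≤ R := by simpa using hR ha
  have hnb : ‖b‖ ≤ R := by simpa using hR hb
  have ra1 := abs_le.1 ((Complex.abs_re_le_norm a).trans hna)
  have ra2 := abs_le.1 ((Complex.abs_im_le_norm a).trans hna)
  have rb1 := abs_le.1 ((Complex.abs_re_le_norm b).trans hnb)
  have rb2 := abs_le.1 ((Complex.abs_im_le_norm b).trans hnb)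
  set i := ⌊a.re / s⌋ with hi
  set j := ⌊a.im / s⌋ with hj
  set i' := ⌊b.re / s⌋ with hi'
  set j' := ⌊b.im / s⌋ with hj'
  push_cast at a2 a4 b2 b4
  have key : ∀ (p q : ℤ), (p : ℝ) * s < q * s → p < q := by
    intro p q h
    have := lt_of_mul_lt_mul_right h hs.le
    exact_mod_cast this
  have rng : ∀ (p : ℤ) (x : ℝ), p * s ≤ x → x ≤ (p + 1) * s → -R ≤ x → x ≤ R → -(n:ℤ) ≤ p ∧ p < n := by
    intro p x h1 h2 h3 h4
    constructor
    · have := key (-n) (p+1) (by push_cast; linarith)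
      omega
    · exact key _ _ (by push_cast; linarith)
  have ni := rng i a.re a1 a2 ra1.1 ra1.2
  have nj := rng j a.im a3 a4 ra2.1 ra2.2
  have ni' := rng i' b.re b1 b2 rb1.1 rb1.2
  have nj' := rng j' b.im b3 b4 rb2.1 rb2.2
  have di1 : i < i' + 3 := key _ _ (by push_cast; linarith)
  have near : ∀ (p : ℤ) (x y : ℝ), p * s ≤ x → x ≤ (p + 1) * s → |x - y| ≤ s → ∀ t : ℝ, p * s ≤ t →
      t ≤ (p + 1) * s → |t - y| ≤ 4 * s := by
    intro p x y h1 h2 h3 t h4 h5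
    rw [abs_le] at *
    constructor <;> linarith
  have nearI := near i a.re a.re a1 a2 (by simp [hs.le])
  have nearJ := near j a.im a.im a3 a4 (by simp [hs.le])
  have nearI' := near i' b.re a.re b1 b2 (by rw [abs_le]; constructor <;> linarith)
  have nearJ' := near j' b.im a.im b3 b4 (by rw [abs_le]; constructor <;> linarith)
  have vI := nearI (i * s) le_rfl (by linarith)
  have vJ := nearJ (j * s) le_rfl (by linarith)
  have vI' := nearI' (i' * s) le_rfl (by linarith)
  have vJ' := nearJ' (j' * s) le_rfl (by linarith)
  have m1 : eiV s i j ∈ B := hBm _ vI vJ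
  have m2 : eiV s i' j ∈ B := hBm _ vI' vJ
  have m3 : eiV s i' j' ∈ B := hBm _ vI' vJ'
  have ma : a ∈ B := mem_ball_self hδ
  have mb : b ∈ B := by
    rw [hB, mem_ball, dist_comm, dist_eq_norm]; linarith
  have gid : ∀ x ∈ B, g x x = 1 := by
    intro x hx
    have := hg B hBD hBc x hx x hx x hx
    simpa using this
  have gin : ∀ x ∈ B, ∀ y ∈ B, g y x = (g x y)⁻¹ := by
    intro x hx y hy
    have := hg B hBD hBc y hy x hx y hy
    rw [gid y hy] at this
    exact eq_inv_of_mul_eq_one_left this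
  have adj : ∀ (p q : ℤ) (x y : ℝ), p * s ≤ x → x ≤ (p + 1) * s → q * s ≤ y → y ≤ (q + 1) * s →
      -s < x - y → x - y < s → q = p ∨ q = p + 1 ∨ p = q + 1 := by
    intro p q x y h1 h2 h3 h4 h5 h6
    have c1 : p < q + 2 := key _ _ (by push_cast; linarith)
    have c2 : q < p + 2 := key _ _ (by push_cast; linarith)
    omega
  have e1 : φ i j * g (eiV s i j) (eiV s i' j) = φ i' j := by
    rcases adj i i' a.re b.re a1 a2 b1 b2 r1.1 r1.2 with h | h | h
    · rw [h, gid _ m1, mul_one]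
    · rw [h, ← hφH i j ni.1 ni.2 nj.1 nj.2, hH']
      simp only [bH, not_not]
      rintro w ⟨c1, c2, c3, c4⟩
      push_cast at c2 c4
      rw [add_zero] at c4
      exact hBD (hBm w (nearI _ c1 c2) (by rw [le_antisymm c4 c3]; exact vJ))
    · rw [gin _ m2 _ m1, h, ← hφH i' j ni'.1 ni'.2 nj.1 nj.2, hH', mul_assoc]
      · simp only [H]; simp
      simp only [bH, not_not]
      rintro w ⟨c1, c2, c3, c4⟩
      push_cast at c2 c4
      rw [add_zero] at c4
      exact hBD (hBm w (nearI' _ c1 c2) (by rw [le_antisymm c4 c3]; exact vJ))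
  have e2 : φ i' j * g (eiV s i' j) (eiV s i' j') = φ i' j' := by
    rcases adj j j' a.im b.im a3 a4 b3 b4 r2.1 r2.2 with h | h | h
    · rw [h, gid _ m2, mul_one]
    · rw [h, ← hφV i' j nj.1, hV']
      simp only [bV, not_not]
      rintro w ⟨c1, c2, c3, c4⟩
      push_cast at c2 c4
      rw [add_zero] at c2
      exact hBD (hBm w (by rw [le_antisymm c2 c1]; exact vI') (nearJ _ c3 c4))
    · rw [gin _ m3 _ m2, h, ← hφV i' j' nj'.1, hV', mul_assoc]
      · simp only [V]; simp
      simp only [bV, not_not]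
      rintro w ⟨c1, c2, c3, c4⟩
      push_cast at c2 c4
      rw [add_zero] at c2
      exact hBD (hBm w (by rw [le_antisymm c2 c1]; exact vI') (nearJ' _ c3 c4))
  change φ i j * g (eiV s i j) a * g a b = φ i' j' * g (eiV s i' j') b
  rw [← e2, ← e1]
  have h1 := hg B hBD hBc _ m1 _ ma _ mb
  have h2 := hg B hBD hBc _ m1 _ m2 _ m3
  have h3 := hg B hBD hBc _ m1 _ m3 _ mb
  rw [mul_assoc, h1, mul_assoc (φ i j), h2, mul_assoc, h3]


lemma ei_convex_homotopic {D : Set ℂ} {a b : D} (p p' : Path a b) {K : Set ℂ} (hKD : K ⊆ D)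
    (hK : Convex ℝ K) (hp : ∀ t, (p t : ℂ) ∈ K) (hp' : ∀ t, (p' t : ℂ) ∈ K) : p.Homotopic p' := by
  refine ⟨{ toFun := fun x => ⟨AffineMap.lineMap (p x.2 : ℂ) (p' x.2 : ℂ) (x.1 : ℝ),
              hKD (hK.lineMap_mem (hp _) (hp' _) x.1.2)⟩
            continuous_toFun := ?_, map_zero_left := ?_, map_one_left := ?_, prop' := ?_ }⟩
  · refine Continuous.subtype_mk ?_ _
    simp only [AffineMap.lineMap_apply_module]
    fun_prop
  · intro t; ext; simp
  · intro t; ext; simp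
  · intro t x hx
    rcases hx with rfl | rfl <;> ext <;> simp

lemma ei_simply {D : Set ℂ} (hDo : IsOpen D) (hDc : IsConnected D)
    (hunb : ∀ z ∉ D, ∃ Z ⊆ Dᶜ, z ∈ Z ∧ IsPreconnected Z ∧ ¬ Bornology.IsBounded Z) :
    IsSimplyConnected D := by
  classical
  have hpc : IsPathConnected D := hDo.isConnected_iff_isPathConnected.1 hDc
  have hps : PathConnectedSpace D := isPathConnected_iff_pathConnectedSpace.1 hpc
  rw [IsSimplyConnected, simply_connected_iff_loops_nullhomotopic]
  refine ⟨hps, fun x γ => ?_⟩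
  let Γ := Path.Homotopic.Quotient x x
  letI : Group Γ :=
    { mul := Path.Homotopic.Quotient.trans
      one := Path.Homotopic.Quotient.refl x
      inv := Path.Homotopic.Quotient.symm
      mul_assoc := fun a b c => Path.Homotopic.Quotient.trans_assoc a b c
      one_mul := fun a => Path.Homotopic.Quotient.refl_trans a
      mul_one := fun a => Path.Homotopic.Quotient.trans_refl a
      inv_mul_cancel := fun a => Path.Homotopic.Quotient.symm_trans a }
  have hmul : ∀ a b : Γ, a * b = Path.Homotopic.Quotient.trans a b := fun _ _ => rfl
  have hone : (1 : Γ) = Path.Homotopic.Quotient.refl x := rfl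
  let C : ∀ a : D, Path.Homotopic.Quotient x a := fun a =>
    Path.Homotopic.Quotient.mk (PathConnectedSpace.somePath x a)
  let seg : ∀ a b : D, segment ℝ (a:ℂ) b ⊆ D → Path a b := fun a b h =>
    { toFun := fun t => ⟨AffineMap.lineMap (a:ℂ) (b:ℂ) (t:ℝ), h (by
        rw [segment_eq_image_lineMap]; exact mem_image_of_mem _ t.2)⟩
      continuous_toFun := by
        refine Continuous.subtype_mk ?_ _
        simp only [AffineMap.lineMap_apply_module]
        fun_prop
      source' := by ext; simp
      target' := by ext; simp }
  let Ee : ∀ a b : D, Path.Homotopic.Quotient a b := fun a b =>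
    if h : segment ℝ (a:ℂ) b ⊆ D then Path.Homotopic.Quotient.mk (seg a b h)
    else Path.Homotopic.Quotient.mk (PathConnectedSpace.somePath a b)
  have hE : ∀ (a b : D) (p : Path a b) (K : Set ℂ), K ⊆ D → Convex ℝ K → (∀ t, (p t : ℂ) ∈ K) →
      Ee a b = Path.Homotopic.Quotient.mk p := by
    intro a b p K hKD hK hp
    have ha : (a:ℂ) ∈ K := by simpa using hp 0
    have hb : (b:ℂ) ∈ K := by simpa using hp 1
    have hs : segment ℝ (a:ℂ) b ⊆ D := (hK.segment_subset ha hb).trans hKD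
    simp only [Ee, dif_pos hs]
    rw [Path.Homotopic.Quotient.eq]
    exact ei_convex_homotopic _ _ hKD hK (fun t => hK.lineMap_mem ha hb t.2) hp
  let conj : ∀ a b : D, Path.Homotopic.Quotient a b → Γ := fun a b p =>
    Path.Homotopic.Quotient.trans (Path.Homotopic.Quotient.trans (C a) p) (C b).symm
  have hconj : ∀ (a b c : D) (p : Path.Homotopic.Quotient a b) (q : Path.Homotopic.Quotient b c),
      conj a b p * conj b c q = conj a c (p.trans q) := by
    intro a b c p q
    simp only [hmul, conj, Path.Homotopic.Quotient.trans_assoc]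
    congr 2
    rw [← Path.Homotopic.Quotient.trans_assoc, Path.Homotopic.Quotient.symm_trans,
      Path.Homotopic.Quotient.refl_trans]
  let g : ℂ → ℂ → Γ := fun a b =>
    if h : a ∈ D ∧ b ∈ D then conj ⟨a, h.1⟩ ⟨b, h.2⟩ (Ee _ _) else 1
  have hgD : ∀ a b : D, g a b = conj a b (Ee a b) := by
    intro a b
    simp only [g, a.2, b.2, and_self, dite_true]
  obtain ⟨ε, hε, Φ, hΦ⟩ := ei_potential (K := range (fun t => (γ t : ℂ))) hDo hunb g (by
      intro K hKD hK a ha b hb c hc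
      lift a to D using hKD ha
      lift b to D using hKD hb
      lift c to D using hKD hc
      rw [hgD, hgD, hgD, hconj]
      congr 1
      have h1 : segment ℝ (a:ℂ) b ⊆ K := hK.segment_subset ha hb
      have h2 : segment ℝ (b:ℂ) c ⊆ K := hK.segment_subset hb hc
      have s1 : ∀ t, (seg a b (h1.trans hKD) t : ℂ) ∈ K := fun t => hK.lineMap_mem ha hb t.2
      have s2 : ∀ t, (seg b c (h2.trans hKD) t : ℂ) ∈ K := fun t => hK.lineMap_mem hb hc t.2
      rw [hE a b _ K hKD hK s1, hE b c _ K hKD hK s2, ← Path.Homotopic.Quotient.mk_trans]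
      symm
      refine hE a c _ K hKD hK ?_
      intro t
      rw [Path.trans_apply]
      split_ifs
      · exact s1 _
      · exact s2 _)
    (isCompact_range (by fun_prop)) (by rintro _ ⟨t, rfl⟩; exact (γ t).2)
  let k : unitInterval → Γ := fun t =>
    conj (γ 0) (γ t) (Path.Homotopic.Quotient.mk (γ.subpath 0 t)) * (Φ (γ t))⁻¹
  have hk : IsLocallyConstant k := by
    rw [IsLocallyConstant.iff_eventually_eq]
    intro t
    obtain ⟨r, hr, hrD⟩ := Metric.isOpen_iff.1 hDo _ (γ t).2
    have hc : Continuous fun t => (γ t : ℂ) := by fun_prop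
    obtain ⟨η, hη, hηb⟩ := Metric.eventually_nhds_iff.1
      (hc.continuousAt.eventually (ball_mem_nhds (γ t : ℂ) (lt_min hr hε)) : ∀ᶠ u in 𝓝 t, _)
    refine Metric.eventually_nhds_iff.2 ⟨η, hη, fun t' ht' => ?_⟩
    have hsub : ∀ u, (γ.subpath t t' u : ℂ) ∈ ball (γ t : ℂ) (min r ε) := by
      intro u
      have hu : γ.subpath t t' u ∈ γ '' uIcc t t' := by
        rw [← Path.range_subpath]; exact mem_range_self _
      obtain ⟨v, hv, hve⟩ := hu
      rw [← hve]
      refine hηb (lt_of_le_of_lt ?_ ht')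
      rw [Subtype.dist_eq, Subtype.dist_eq]
      have hv' : (v : ℝ) ∈ uIcc (t:ℝ) t' := by
        rw [mem_uIcc] at hv ⊢; exact hv
      rw [dist_comm, Real.dist_eq, dist_comm, Real.dist_eq, abs_sub_comm, abs_sub_comm (t:ℝ) t']
      exact abs_sub_left_of_mem_uIcc hv'
    have e1 : Φ (γ t) * g (γ t) (γ t') = Φ (γ t') := by
      refine hΦ _ ⟨t, rfl⟩ _ ⟨t', rfl⟩ ?_
      rw [dist_comm]
      exact lt_of_lt_of_le (hηb ht') (min_le_right _ _)
    have e2 : Ee (γ t) (γ t') = Path.Homotopic.Quotient.mk (γ.subpath t t') :=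
      hE _ _ _ (ball (γ t : ℂ) (min r ε)) ((ball_subset_ball (min_le_left _ _)).trans hrD)
        (convex_ball _ _) hsub
    have e3 : Path.Homotopic.Quotient.mk (γ.subpath 0 t') =
        (Path.Homotopic.Quotient.mk (γ.subpath 0 t)).trans
          (Path.Homotopic.Quotient.mk (γ.subpath t t')) := by
      rw [← Path.Homotopic.Quotient.mk_trans]
      symm
      rw [Path.Homotopic.Quotient.eq]
      exact ⟨Path.Homotopy.subpathTransSubpath γ 0 t t'⟩
    simp only [k]
    rw [e3, ← hconj, ← e1, hgD, e2]
    group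
  have h01 := hk.apply_eq_of_isPreconnected isPreconnected_univ (mem_univ (0 : unitInterval))
    (mem_univ (1 : unitInterval))
  have hcast : ∀ (a b : D) (ha : a = x) (hb : b = x),
      conj a b (Path.Homotopic.Quotient.mk (γ.cast ha hb)) =
        conj x x (Path.Homotopic.Quotient.mk γ) := by
    intro a b ha hb
    subst ha
    subst hb
    rfl
  simp only [k] at h01
  rw [Path.subpath_zero_one, hcast _ _ γ.source γ.target, Path.subpath_self] at h01
  rw [γ.target, γ.source] at h01
  have h02 := mul_right_cancel h01
  have h03 : conj x x (Path.Homotopic.Quotient.refl x) = 1 := by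
    simp only [conj, Path.Homotopic.Quotient.trans_refl, Path.Homotopic.Quotient.trans_symm]
    rfl
  have h04 : ∀ q : Γ, conj x x q = (C x : Γ) * q * (C x : Γ)⁻¹ := fun q => rfl
  rw [Path.Homotopic.Quotient.mk_refl, h03, h04] at h02
  have h05 : (Path.Homotopic.Quotient.mk γ : Γ) = 1 := by
    have := h02.symm
    rw [mul_inv_eq_one] at this
    exact mul_eq_left.1 this
  rw [hone, ← Path.Homotopic.Quotient.mk_refl, Path.Homotopic.Quotient.eq] at h05
  exact h05


/-- Boundary bumping / Sura-Bura. -/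
lemma ei_sura {C : Set ℂ} (hC : IsClosed C) {z : ℂ} (hz : z ∈ C) {G : Set ℂ} (hG : IsOpen G)
    (hGb : Bornology.IsBounded G) (hB : connectedComponentIn C z ⊆ G) :
    ∃ Q V : Set ℂ, IsCompact Q ∧ IsOpen V ∧ Q = V ∩ C ∧ z ∈ Q ∧ Q ⊆ G := by
  set K : Set ℂ := C ∩ closure G with hK
  have hKc : IsCompact K := (hGb.isCompact_closure).inter_left hC
  have hzG : z ∈ G := hB (mem_connectedComponentIn hz)
  have hzK : z ∈ K := ⟨hz, subset_closure hzG⟩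
  haveI : CompactSpace K := isCompact_iff_compactSpace.mp hKc
  let x : K := ⟨z, hzK⟩
  have hcc : Subtype.val '' (connectedComponent x) ⊆ G := by
    refine subset_trans ?_ hB
    refine IsPreconnected.subset_connectedComponentIn ?_ ⟨x, mem_connectedComponent, rfl⟩ ?_
    · exact isPreconnected_connectedComponent.image _ continuous_subtype_val.continuousOn
    · rintro _ ⟨y, _, rfl⟩; exact y.2.1
  have hGo : IsOpen ((Subtype.val : K → ℂ) ⁻¹' G) := hG.preimage continuous_subtype_val
  have hsub : (⋂ s : {s : Set K // IsClopen s ∧ x ∈ s}, (s : Set K)) ⊆ (Subtype.val : K → ℂ) ⁻¹' G := by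
    rw [← connectedComponent_eq_iInter_isClopen]
    intro y hy; exact hcc ⟨y, hy, rfl⟩
  haveI : Nonempty {s : Set K // IsClopen s ∧ x ∈ s} := ⟨⟨univ, isClopen_univ, mem_univ _⟩⟩
  obtain ⟨⟨s, hs, hxs⟩, hsG⟩ := exists_subset_nhds_of_isCompact (ι := {s : Set K // IsClopen s ∧ x ∈ s})
    (V := fun s => (s : Set K)) (U := (Subtype.val : K → ℂ) ⁻¹' G)
    (fun a b => ⟨⟨a.1 ∩ b.1, a.2.1.inter b.2.1, a.2.2, b.2.2⟩, inter_subset_left, inter_subset_right⟩)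
    (fun a => a.2.1.isClosed.isCompact) (fun y hy => hGo.mem_nhds (hsub hy))
  obtain ⟨V, hV, hVs⟩ := isOpen_induced_iff.mp hs.isOpen
  refine ⟨Subtype.val '' s, V ∩ G, hs.isClosed.isCompact.image continuous_subtype_val, hV.inter hG, ?_,
    ⟨x, hxs, rfl⟩, ?_⟩
  · ext y; constructor
    · rintro ⟨y, hy, rfl⟩
      have h2 := hsG hy
      rw [← hVs] at hy
      exact ⟨⟨hy, h2⟩, y.2.1⟩
    · rintro ⟨⟨h1, h2⟩, h3⟩
      refine ⟨⟨y, h3, subset_closure h2⟩, ?_, rfl⟩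
      rw [← hVs]; exact h1
  · rintro _ ⟨y, hy, rfl⟩; exact hsG hy

/-- The fill of a set: complement of the unbounded part of the complement. -/
def eiFill (W : Set ℂ) : Set ℂ :=
  {z | ∀ Z ⊆ Wᶜ, z ∈ Z → IsPreconnected Z → Bornology.IsBounded Z}

lemma eiFill_sub (W : Set ℂ) : W ⊆ eiFill W := fun z hz Z hZ hzZ _ => absurd hz (hZ hzZ)

lemma eiFill_compl {W : Set ℂ} {z : ℂ} (hz : z ∉ eiFill W) :
    ∃ Z ⊆ (eiFill W)ᶜ, z ∈ Z ∧ IsPreconnected Z ∧ ¬Bornology.IsBounded Z := by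
  simp only [eiFill, mem_ofPred_eq] at hz
  push Not at hz
  obtain ⟨Z, hZ, hzZ, hp, hb⟩ := hz
  exact ⟨Z, fun w hw hw2 => hb (hw2 Z hZ hw hp), hzZ, hp, hb⟩

lemma eiFill_absorb {W A : Set ℂ} (hA : IsPreconnected A) (hAW : A ⊆ Wᶜ) {z : ℂ} (hzA : z ∈ A)
    (hz : z ∈ eiFill W) : A ⊆ eiFill W := by
  intro w hw Z hZ hwZ hZp
  exact (hz (A ∪ Z) (union_subset hAW hZ) (Or.inl hzA) (hA.union w hw hwZ hZp)).subset subset_union_right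

lemma eiFill_open {W : Set ℂ} (hW : IsOpen W) : IsOpen (eiFill W) := by
  rw [isOpen_iff_mem_nhds]
  intro z hz
  by_cases hzW : z ∈ W
  · exact mem_of_superset (hW.mem_nhds hzW) (eiFill_sub W)
  have hB := hz _ (connectedComponentIn_subset Wᶜ z) (mem_connectedComponentIn hzW)
    isPreconnected_connectedComponentIn
  obtain ⟨R, hR⟩ := hB.subset_ball 0
  obtain ⟨Q, V, hQ, hV, hQV, hzQ, -⟩ := ei_sura hW.isClosed_compl hzW isOpen_ball isBounded_ball hR
  refine mem_of_superset (hV.mem_nhds (hQV ▸ hzQ).1) ?_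
  intro w hw
  by_cases hwW : w ∈ W
  · exact eiFill_sub W hwW
  intro Z hZ hwZ hZp
  refine hQ.isBounded.subset ?_
  have h1 : Z ⊆ V ∪ Qᶜ := fun y hy => by
    by_cases h : y ∈ Q
    · exact Or.inl (hQV ▸ h).1
    · exact Or.inr h
  have h2 := isPreconnected_iff_subset_of_disjoint.mp hZp V Qᶜ hV hQ.isClosed.isOpen_compl h1 (by
    rw [eq_empty_iff_forall_notMem]
    rintro y ⟨hy1, hy2, hy3⟩
    exact hy3 (hQV ▸ ⟨hy2, hZ hy1⟩))
  rcases h2 with h2 | h2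
  · intro y hy; rw [hQV]; exact ⟨h2 hy, hZ hy⟩
  · exact absurd (hQV ▸ ⟨hw, hwW⟩ : w ∈ Q) (h2 hwZ)

lemma eiFill_touch {W : Set ℂ} (hW : IsOpen W) {z : ℂ} (hz : z ∈ eiFill W)
    (hzW : z ∉ W) : ∃ b ∈ connectedComponentIn Wᶜ z, b ∈ closure W := by
  by_contra! hcon
  have hB := hz _ (connectedComponentIn_subset Wᶜ z) (mem_connectedComponentIn hzW)
    isPreconnected_connectedComponentIn
  obtain ⟨R, hR⟩ := hB.subset_ball 0
  obtain ⟨Q, V, hQ, hV, hQV, hzQ, hQG⟩ := ei_sura hW.isClosed_compl hzW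
    (isOpen_ball.inter isClosed_closure.isOpen_compl) (isBounded_ball.subset inter_subset_left)
    (subset_inter hR hcon)
  have hQo : IsOpen Q := by
    have : Q = V ∩ (closure W)ᶜ := by
      apply Subset.antisymm
      · intro y hy; exact ⟨(hQV ▸ hy).1, (hQG hy).2⟩
      · rintro y ⟨h1, h2⟩; rw [hQV]; exact ⟨h1, fun h => h2 (subset_closure h)⟩
    rw [this]; exact hV.inter isClosed_closure.isOpen_compl
  rcases isClopen_iff.mp ⟨hQ.isClosed, hQo⟩ with h | h
  · rw [h] at hzQ; exact hzQ
  · exact noncompact_univ ℂ (h ▸ hQ)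

lemma eiFill_touch2 {W : Set ℂ} (hW : IsOpen W) (hWc : IsPreconnected W) {z : ℂ} (hz : z ∈ eiFill W)
    (hzW : z ∉ W) : IsPreconnected (W ∪ connectedComponentIn Wᶜ z) := by
  obtain ⟨b, hb, hb2⟩ := eiFill_touch hW hz hzW
  have h1 : IsPreconnected (insert b W) := hWc.subset_closure (subset_insert _ _)
    (insert_subset hb2 subset_closure)
  have h2 := h1.union b (mem_insert _ _) hb isPreconnected_connectedComponentIn
  convert h2 using 1
  rw [insert_union, insert_eq_of_mem]
  exact Or.inr hb

lemma eiFill_conn {W : Set ℂ} (hW : IsOpen W) (hWc : IsConnected W) : IsConnected (eiFill W) := by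
  obtain ⟨w, hw⟩ := hWc.nonempty
  refine ⟨⟨w, eiFill_sub W hw⟩, ?_⟩
  refine isPreconnected_of_forall w ?_
  intro z hz
  by_cases hzW : z ∈ W
  · exact ⟨W, eiFill_sub W, hw, hzW, hWc.isPreconnected⟩
  · refine ⟨_, union_subset (eiFill_sub W) ?_, Or.inl hw, Or.inr (mem_connectedComponentIn hzW),
      eiFill_touch2 hW hWc.isPreconnected hz hzW⟩
    exact eiFill_absorb isPreconnected_connectedComponentIn (connectedComponentIn_subset _ _)
      (mem_connectedComponentIn hzW) hz

lemma eiFill_map_sub (h : ℂ ≃ₜ ℂ) {M : ℝ} (hM : ∀ z, ‖h z - z‖ ≤ M) (W : Set ℂ) :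
    h '' eiFill W ⊆ eiFill (h '' W) := by
  rintro _ ⟨z, hz, rfl⟩ Z hZ hzZ hZp
  have h1 := hz (h.symm '' Z) (by
    rintro _ ⟨y, hy, rfl⟩ hyW
    exact hZ hy ⟨_, hyW, by simp⟩) ⟨_, hzZ, by simp⟩ (hZp.image _ h.symm.continuous.continuousOn)
  obtain ⟨R, hR⟩ := h1.subset_closedBall 0
  refine (isBounded_closedBall (x := (0:ℂ)) (r := R + M)).subset ?_
  intro y hy
  have h2 := hR ⟨y, hy, rfl⟩
  have h3 := hM (h.symm y)
  simp only [mem_closedBall, dist_zero_right, Homeomorph.apply_symm_apply] at h2 h3 ⊢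
  calc ‖y‖ = ‖h.symm y + (y - h.symm y)‖ := by congr 1; ring
    _ ≤ _ := (norm_add_le _ _).trans (add_le_add h2 h3)

lemma eiFill_map (h : ℂ ≃ₜ ℂ) {M : ℝ} (hM : ∀ z, ‖h z - z‖ ≤ M) (W : Set ℂ) :
    h '' eiFill W = eiFill (h '' W) := by
  apply Subset.antisymm (eiFill_map_sub h hM W)
  have h1 := eiFill_map_sub h.symm (M := M) (fun z => by
    have := hM (h.symm z); rw [norm_sub_rev]; simpa using this) (h '' W)
  intro y hy
  have h2 := h1 ⟨y, hy, rfl⟩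
  rw [← image_comp] at h2
  simp at h2
  exact ⟨_, h2, by simp⟩

lemma eiFill_disj_aux {W1 W2 : Set ℂ} (h1 : IsOpen W1) (c1 : IsPreconnected W1)
    (c2 : IsPreconnected W2) (hd : Disjoint W1 W2) {z : ℂ} (hz1 : z ∈ eiFill W1)
    (hz2 : z ∈ eiFill W2) : W1 ⊆ eiFill W2 ∨ W2 ⊆ eiFill W1 := by
  by_cases hzW1 : z ∈ W1
  · exact Or.inl (eiFill_absorb c1 hd.subset_compl_right hzW1 hz2)
  by_cases hzW2 : z ∈ W2
  · exact Or.inr (eiFill_absorb c2 hd.symm.subset_compl_right hzW2 hz1)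
  by_cases hm : (connectedComponentIn W1ᶜ z ∩ W2).Nonempty
  · right
    obtain ⟨b, hb1, hb2⟩ := hm
    refine subset_trans subset_union_right (eiFill_absorb (z := z)
      (isPreconnected_connectedComponentIn.union b hb1 hb2 c2)
      (union_subset (connectedComponentIn_subset _ _) hd.symm.subset_compl_right)
      (Or.inl (mem_connectedComponentIn hzW1)) hz1)
  · left
    refine subset_trans subset_union_left (eiFill_absorb (z := z)
      (eiFill_touch2 h1 c1 hz1 hzW1)
      (union_subset hd.subset_compl_right ?_)
      (Or.inr (mem_connectedComponentIn hzW1)) hz2)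
    intro y hy hy2
    exact hm ⟨y, hy, hy2⟩

lemma eiFill_disj_aux2 {W : Set ℂ} (c1 : IsConnected W) {k : ℂ} (hk : k ≠ 0)
    (hd : Disjoint W ((· + k) '' W)) (hs : W ⊆ eiFill ((· + k) '' W)) : False := by
  obtain ⟨w0, hw0⟩ := c1.nonempty
  have hb : Bornology.IsBounded W := hs hw0 W hd.subset_compl_right hw0 c1.isPreconnected
  obtain ⟨R, hR⟩ := hb.subset_closedBall 0
  let l : ℂ → ℝ := fun z => inner ℝ k z
  have hkk : 0 < ‖k‖ ^ 2 := by positivity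
  have hbd : BddBelow (l '' W) := by
    refine ⟨-(‖k‖ * R), ?_⟩
    rintro _ ⟨z, hz, rfl⟩
    have h1 := abs_le.mp (abs_real_inner_le_norm k z)
    have h2 := hR hz
    simp only [mem_closedBall, dist_zero_right] at h2
    have := mul_le_mul_of_nonneg_left h2 (norm_nonneg k)
    have h3 : l z = inner ℝ k z := rfl
    linarith
  obtain ⟨_, ⟨w, hw, rfl⟩, hlt⟩ := exists_lt_of_csInf_lt (c1.nonempty.image l)
    (show sInf (l '' W) < sInf (l '' W) + ‖k‖ ^ 2 by linarith)
  have hray := hs hw ((fun t : ℝ => w - (t:ℂ) * k) '' Ici 0) (by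
    rintro _ ⟨t, ht, rfl⟩ ⟨y, hy, hyt⟩
    have h1 : sInf (l '' W) ≤ l y := csInf_le hbd ⟨y, hy, rfl⟩
    have h2 : l (y + k) = l y + ‖k‖ ^ 2 := by
      simp only [l, inner_add_right, real_inner_self_eq_norm_sq]
    have h3 : l (w - (t:ℂ) * k) = l w - t * ‖k‖ ^ 2 := by
      simp only [l, inner_sub_right, ← Complex.real_smul, real_inner_smul_right,
        real_inner_self_eq_norm_sq]
    have h4 : l (y + k) = l (w - (t:ℂ) * k) := congrArg l hyt
    have h5 : 0 ≤ t * ‖k‖ ^ 2 := mul_nonneg ht hkk.le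
    linarith) ⟨0, by simp, by simp⟩ (isPreconnected_Ici.image _ (by fun_prop))
  obtain ⟨R', hR'⟩ := hray.subset_closedBall w
  have hkp : 0 < ‖k‖ := norm_pos_iff.mpr hk
  have := hR' ⟨(|R'| + 1) / ‖k‖, by simp only [mem_Ici]; positivity, rfl⟩
  simp only [mem_closedBall, dist_eq_norm, sub_sub_cancel_left, norm_neg, norm_mul, Complex.norm_real,
    norm_div, norm_norm, Real.norm_eq_abs, abs_norm] at this
  rw [div_mul_cancel₀ _ hkp.ne', abs_of_nonneg (by positivity)] at this
  linarith [le_abs_self R']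

lemma eiFill_disj {W : Set ℂ} (hW : IsOpen W) (c1 : IsConnected W) {k : ℂ} (hk : k ≠ 0)
    (hd : Disjoint W ((· + k) '' W)) : Disjoint (eiFill W) ((· + k) '' (eiFill W)) := by
  have hm : ∀ c : ℂ, (· + c) '' eiFill W = eiFill ((· + c) '' W) := fun c =>
    eiFill_map (Homeomorph.addRight c) (M := ‖c‖) (fun z => by simp) W
  rw [Set.disjoint_left, hm]
  intro z hz1 hz2
  rcases eiFill_disj_aux hW c1.isPreconnected (c1.image (· + k) (by fun_prop)).isPreconnected hd hz1 hz2
    with h | h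
  · exact eiFill_disj_aux2 c1 hk hd h
  · have hm2 := eiFill_map (Homeomorph.addRight (-k)) (M := ‖k‖) (fun z => by simp) W
    refine eiFill_disj_aux2 (k := -k) c1 (neg_ne_zero.mpr hk) ?_ ?_
    · rw [Set.disjoint_left] at hd ⊢
      rintro _ ha ⟨b, hb, rfl⟩
      exact hd hb ⟨_, ha, by simp⟩
    · change W ⊆ eiFill ((Homeomorph.addRight (-k)) '' W)
      rw [← hm2]
      intro w hw
      exact ⟨w + k, h ⟨w, hw, rfl⟩, by simp⟩


/-- The lattice in the complex plane. -/
def eiL : AddSubgroup ℂ where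
  carrier := {z | (∃ m : ℤ, z.re = m) ∧ ∃ m : ℤ, z.im = m}
  zero_mem' := ⟨⟨0, by simp⟩, ⟨0, by simp⟩⟩
  add_mem' := by
    rintro x y ⟨⟨m, hm⟩, ⟨n, hn⟩⟩ ⟨⟨m', hm'⟩, ⟨n', hn'⟩⟩
    exact ⟨⟨m + m', by simp [hm, hm']⟩, ⟨n + n', by simp [hn, hn']⟩⟩
  neg_mem' := by
    rintro x ⟨⟨m, hm⟩, ⟨n, hn⟩⟩
    exact ⟨⟨-m, by simp [hm]⟩, ⟨-n, by simp [hn]⟩⟩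

lemma eiL_approx (x : ℂ) : ∃ m ∈ eiL, ‖x - m‖ ≤ 2 := by
  refine ⟨⟨⌊x.re⌋, ⌊x.im⌋⟩, ⟨⟨_, rfl⟩, ⟨_, rfl⟩⟩, ?_⟩
  refine (Complex.norm_le_abs_re_add_abs_im _).trans ?_
  simp only [Complex.sub_re, Complex.sub_im]
  have h1 := Int.floor_le x.re
  have h2 := Int.lt_floor_add_one x.re
  have h3 := Int.floor_le x.im
  have h4 := Int.lt_floor_add_one x.im
  rw [abs_of_nonneg (by linarith), abs_of_nonneg (by linarith)]
  linarith

lemma ei_it_add {F : ℂ → ℂ} (hF : ∀ z, ∀ m ∈ eiL, F (z + m) = F z + m) (n : ℕ) (z : ℂ) {m : ℂ}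
    (hm : m ∈ eiL) : F^[n] (z + m) = F^[n] z + m := by
  induction n generalizing z with
  | zero => simp
  | succ n ih => rw [Function.iterate_succ_apply, Function.iterate_succ_apply, hF z m hm, ih]

lemma ei_disp {F : ℂ → ℂ} {c : ℝ} (hc : ∀ z, ‖F z - z‖ ≤ c) (n : ℕ) (z : ℂ) :
    ‖F^[n] z - z‖ ≤ n * c := by
  induction n with
  | zero => simp
  | succ n ih =>
    rw [Function.iterate_succ_apply']
    have h := hc (F^[n] z)
    have e : F (F^[n] z) - z = (F (F^[n] z) - F^[n] z) + (F^[n] z - z) := by ring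
    rw [e]; push_cast
    refine (norm_add_le _ _).trans ?_
    linarith

lemma ei_disp_bound {F : ℂ → ℂ} (hc : Continuous F) (hF : ∀ z, ∀ m ∈ eiL, F (z + m) = F z + m) :
    ∃ c, 0 ≤ c ∧ ∀ z, ‖F z - z‖ ≤ c := by
  obtain ⟨c, hcb⟩ := (isCompact_closedBall (0:ℂ) 2).exists_bound_of_continuousOn
    (f := fun z => F z - z) (by fun_prop)
  refine ⟨c, (norm_nonneg _).trans (hcb 0 (by simp)), fun z => ?_⟩
  obtain ⟨m, hm, hzm⟩ := eiL_approx z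
  have h := hcb (z - m) (by simpa using hzm)
  have e : F z = F (z - m) + m := by rw [← hF _ m hm]; congr 1; ring
  rw [e]
  have e2 : F (z - m) + m - z = F (z - m) - (z - m) := by ring
  rw [e2]; exact h

/-- Rotation set over starting points in `W`. -/
def cRot (F : ℂ → ℂ) (W : Set ℂ) : Set ℂ :=
  {ρ | ∃ (n : ℕ → ℕ) (z : ℕ → ℂ), Tendsto n atTop atTop ∧ (∀ i, z i ∈ W) ∧
    Tendsto (fun i => (n i : ℝ)⁻¹ • (F^[n i] (z i) - z i)) atTop (𝓝 ρ)}

lemma ei_abs_re {a : ℂ} (ha : ‖a‖ = 1) (z : ℂ) : |(z * a).re| ≤ ‖z‖ := by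
  have := Complex.abs_re_le_norm (z * a)
  rwa [norm_mul, ha, mul_one] at this

lemma ei_abs_im {a : ℂ} (ha : ‖a‖ = 1) (z : ℂ) : |(z * a).im| ≤ ‖z‖ := by
  have := Complex.abs_im_le_norm (z * a)
  rwa [norm_mul, ha, mul_one] at this

/-- Displacements with almost maximal drift at every time. -/
lemma ei_drift {F : ℂ → ℂ} {c : ℝ} (hc : ∀ z, ‖F z - z‖ ≤ c) {a : ℂ}
    (ha : ‖a‖ = 1) {w : ℂ} (hw : w ∈ cRot F univ) {μ : ℝ} (hμ : μ < (w * a).re) {n : ℕ} (hn : 1 ≤ n) :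
    ∃ z, n * μ ≤ ((F^[n] z - z) * a).re := by
  by_contra! hcon
  have hc0 : 0 ≤ c := (norm_nonneg _).trans (hc 0)
  have h1 : ∀ (q : ℕ) (z : ℂ), ((F^[n * q] z - z) * a).re ≤ q * (n * μ) := by
    intro q
    induction q with
    | zero => intro z; simp
    | succ q ih =>
      intro z
      have h2 := ih (F^[n] z)
      have h3 := hcon z
      rw [Nat.mul_succ, Function.iterate_add_apply]
      have e : (F^[n * q] (F^[n] z) - z) * a
        = (F^[n * q] (F^[n] z) - F^[n] z) * a + (F^[n] z - z) * a := by ring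
      rw [e, Complex.add_re]; push_cast; linarith
  have h2 : ∀ (m : ℕ) (z : ℂ), ((F^[m] z - z) * a).re ≤ m * μ + n * (|μ| + c) := by
    intro m z
    set q := m / n
    set r := m % n
    have hm : m = r + n * q := (Nat.mod_add_div m n).symm
    have hr : r < n := Nat.mod_lt _ (by omega)
    have h3 := h1 q z
    have h4 := (abs_le.mp (ei_abs_re ha (F^[r] (F^[n * q] z) - F^[n * q] z))).2
    have h5 := ei_disp hc r (F^[n * q] z)
    have e : (F^[m] z - z) * a = (F^[r] (F^[n * q] z) - F^[n * q] z) * a + (F^[n * q] z - z) * a := by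
      rw [hm, Function.iterate_add_apply]; ring
    have hr' : (r:ℝ) ≤ n := by exact_mod_cast hr.le
    have h6 : (r:ℝ) * c ≤ n * c := mul_le_mul_of_nonneg_right hr' hc0
    have hm' : (m:ℝ) = r + n * q := by exact_mod_cast hm
    have h7 : -(n * |μ|) ≤ r * μ := by
      have := neg_abs_le μ
      have h0 : (0:ℝ) ≤ r := Nat.cast_nonneg r
      nlinarith [abs_nonneg μ]
    rw [e, Complex.add_re, hm']
    nlinarith
  obtain ⟨m, z, hm, -, hlim⟩ := hw
  have hl : Tendsto (fun i => (((m i : ℝ)⁻¹ • (F^[m i] (z i) - z i)) * a).re) atTop (𝓝 ((w * a).re)) :=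
    (Complex.continuous_re.tendsto _).comp (hlim.mul_const a)
  have hr : Tendsto (fun i => μ + (m i : ℝ)⁻¹ * (n * (|μ| + c))) atTop (𝓝 (μ + 0 * (n * (|μ| + c)))) :=
    ((tendsto_inv_atTop_zero.comp (tendsto_natCast_atTop_atTop.comp hm)).mul_const _).const_add _
  have hle := le_of_tendsto_of_tendsto hl hr (by
    filter_upwards [hm.eventually_ge_atTop 1] with i hi
    have hpos : (0:ℝ) < m i := by exact_mod_cast hi
    have h3 := h2 (m i) (z i)
    rw [smul_mul_assoc, Complex.smul_re, smul_eq_mul, inv_mul_le_iff₀ hpos]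
    calc _ ≤ _ := h3
      _ = _ := by field_simp)
  linarith

/-- Long connected sets transported with controlled drift. -/
def eiX (F : ℂ → ℂ) (a : ℂ) (lam : ℝ) : Prop :=
  ∀ δ > 0, ∀ N0 : ℝ, ∃ N ≥ N0, ∃ (A : Set ℂ) (x y : ℂ) (b : ℝ), JoinedIn A x y ∧
    (x * a).im + N ≤ (y * a).im ∧
    ∀ z ∈ A, ∀ n : ℕ, n ≤ N → |(F^[n] z * a).re - b - n * lam| ≤ δ * N

lemma eiX_neg {F : ℂ → ℂ} {a : ℂ} {lam : ℝ} (h : eiX F a lam) : eiX F (-a) (-lam) := by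
  intro δ hδ N0
  obtain ⟨N, hN, A, x, y, b, hj, hxy, he⟩ := h δ hδ N0
  refine ⟨N, hN, A, y, x, -b, hj.symm, by simp only [mul_neg, Complex.neg_im]; linarith, ?_⟩
  intro z hz n hn
  have := he z hz n hn
  rw [← abs_neg] at this
  convert this using 2
  simp only [mul_neg, Complex.neg_re]; ring

lemma ei_X_le {F : ℂ ≃ₜ ℂ} (hF : ∀ z, ∀ m ∈ eiL, F (z + m) = F z + m) {c : ℝ}
    (hc : ∀ z, ‖F z - z‖ ≤ c) {a : ℂ} (ha : ‖a‖ = 1) {lam : ℝ} (H : eiX F a lam) {w : ℂ}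
    (hw : w ∈ cRot F univ) : (w * a).re ≤ lam := by
  by_contra! hlt
  have hc0 : 0 ≤ c := (norm_nonneg _).trans (hc 0)
  obtain ⟨μ, hμ1, hμ2⟩ := exists_between hlt
  set ε : ℝ := 1 / (8 * (c + 1)) with hε
  have hεp : 0 < ε := by positivity
  have hε1 : ε ≤ 1 / 8 := by
    rw [hε]; apply one_div_le_one_div_of_le (by norm_num); linarith
  have hεc : ε * c ≤ 1 / 8 := by
    rw [hε, div_mul_eq_mul_div, div_le_div_iff₀ (by positivity) (by norm_num)]; linarith
  set κ := μ - lam with hκ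
  have hκp : 0 < κ := by linarith
  set N1 : ℝ := (2 * (8 + κ)) / (ε * κ) + 2 / ε + 20 with hN1
  obtain ⟨N, hN, A, x, y, b, hj, hxy, he⟩ := H (ε * κ / 4) (by positivity) N1
  have hNpos : 0 < N := by
    have : 0 < N1 := by positivity
    linarith
  have hNa : 2 * (8 + κ) ≤ ε * κ * N := by
    have h1 : (2 * (8 + κ)) / (ε * κ) ≤ N := by
      have : 0 < 2 / ε := by positivity
      linarith
    rw [div_le_iff₀ (by positivity)] at h1; linarith
  have hNb : 2 ≤ ε * N := by
    have h1 : 2 / ε ≤ N := by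
      have : 0 < (2 * (8 + κ)) / (ε * κ) := by positivity
      linarith
    rw [div_le_iff₀ (by positivity)] at h1; linarith
  have hNc : 20 ≤ N := by
    have h1 : 0 < 2 / ε := by positivity
    have : 0 < (2 * (8 + κ)) / (ε * κ) := by positivity
    linarith
  set n := ⌊ε * N⌋₊ with hn
  have hn1 : (n:ℝ) ≤ ε * N := Nat.floor_le (by positivity)
  have hn2 : ε * N < n + 1 := Nat.lt_floor_add_one _
  have hn3 : 1 ≤ n := by
    have : (1:ℝ) < n + 0 := by linarith
    have : (1:ℝ) < n := by simpa using this
    exact_mod_cast this.le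
  have hnN : (n:ℝ) ≤ N := by nlinarith
  have hnc : (n:ℝ) * c ≤ N / 8 := by
    calc (n:ℝ) * c ≤ ε * N * c := mul_le_mul_of_nonneg_right hn1 hc0
      _ = (ε * c) * N := by ring
      _ ≤ 1 / 8 * N := mul_le_mul_of_nonneg_right hεc hNpos.le
      _ = _ := by ring
  obtain ⟨y0, hy0⟩ := ei_drift hc ha hw hμ2 hn3
  set δN := ε * κ / 4 * N with hδN
  -- target point
  have haa : a * (starRingEnd ℂ) a = 1 := by
    rw [Complex.mul_conj, Complex.normSq_eq_norm_sq, ha]; norm_num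
  have haa' : (starRingEnd ℂ) a * a = 1 := by rw [mul_comm]; exact haa
  set tgt : ℂ := (⟨b - δN - 3, (x * a).im + N / 2⟩ : ℂ) * (starRingEnd ℂ) a with htgt
  obtain ⟨m, hm, hmn⟩ := eiL_approx (tgt - y0)
  set Y := y0 + m with hY
  have hYt : ‖Y - tgt‖ ≤ 2 := by
    have e3 : tgt - Y = tgt - y0 - m := by rw [hY]; ring
    rw [norm_sub_rev, e3]; exact hmn
  have htga : tgt * a = ⟨b - δN - 3, (x * a).im + N / 2⟩ := by
    rw [htgt, mul_assoc, haa', mul_one]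
  have e1 : Y * a = (Y - tgt) * a + tgt * a := by ring
  have hYre : (Y * a).re = ((Y - tgt) * a).re + (b - δN - 3) := by rw [e1, Complex.add_re, htga]
  have hYim : (Y * a).im = ((Y - tgt) * a).im + ((x * a).im + N / 2) := by rw [e1, Complex.add_im, htga]
  have hr := abs_le.mp ((ei_abs_re ha (Y - tgt)).trans hYt)
  have hi := abs_le.mp ((ei_abs_im ha (Y - tgt)).trans hYt)
  have hYd : n * μ ≤ ((F^[n] Y - Y) * a).re := by
    rw [hY, ei_it_add hF n y0 hm]; convert hy0 using 3; ring
  -- the ray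
  set Tt : ℝ := |lam| * n + N + δN + 1 with hTt
  have hδNp : 0 < δN := by positivity
  have hTp : 0 < Tt := by positivity
  let R : ℝ → ℂ := fun s => Y - (Tt * (1 - s) : ℝ) * (starRingEnd ℂ) a
  have hRc : Continuous R := by fun_prop
  have hRa : ∀ s, R s * a = Y * a - (Tt * (1 - s) : ℝ) := by
    intro s; simp only [R]; rw [sub_mul, mul_assoc, haa', mul_one]
  have hRim : ∀ s, (R s * a).im = (Y * a).im := by intro s; rw [hRa]; simp
  have hRre : ∀ s, (R s * a).re = (Y * a).re - Tt * (1 - s) := by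
    intro s; rw [hRa, Complex.sub_re, Complex.ofReal_re]
  obtain ⟨C, hC⟩ := hj
  have hFc : Continuous (F : ℂ → ℂ)^[n] := F.continuous.iterate n
  have hdre : ∀ z : ℂ, |((F^[n] z - z) * a).re| ≤ N / 8 := fun z =>
    (ei_abs_re ha _).trans ((ei_disp hc n z).trans hnc)
  have hdim : ∀ z : ℂ, |((F^[n] z - z) * a).im| ≤ N / 8 := fun z =>
    (ei_abs_im ha _).trans ((ei_disp hc n z).trans hnc)
  have hsre : ∀ z : ℂ, (F^[n] z * a).re = ((F^[n] z - z) * a).re + (z * a).re := by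
    intro z; rw [← Complex.add_re]; congr 1; ring
  have hsim : ∀ z : ℂ, (F^[n] z * a).im = ((F^[n] z - z) * a).im + (z * a).im := by
    intro z; rw [← Complex.add_im]; congr 1; ring
  have hCA : ∀ t, C.extend t ∈ A := fun t => hC _
  have hlam : -(|lam| * n) ≤ n * lam := by
    have := neg_abs_le lam
    have h0 : (0:ℝ) ≤ n := Nat.cast_nonneg n
    nlinarith
  obtain ⟨s, hs, t, ht, hst⟩ := ei_crossing (γ := fun s => F^[n] (R s) * a)
    (δ := fun t => F^[n] (C.extend t) * a)
    ((hFc.comp hRc).mul continuous_const).continuousOn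
    ((hFc.comp C.continuous_extend).mul continuous_const).continuousOn
    (by
      intro t ht
      have h1 := (abs_le.mp (he _ (hCA t) n hnN)).1
      have h2 := (abs_le.mp (hdre (R 0))).2
      rw [hsre (R 0), hRre 0, hYre]
      linarith)
    (by
      intro t ht
      have h1 := (abs_le.mp (he _ (hCA t) n hnN)).2
      have hR1 : R 1 = Y := by simp [R]
      simp only [hR1]
      rw [hsre Y, hYre]
      have h5 : 2 * δN + 5 < n * κ := by
        have : (ε * N - 1) * κ ≤ n * κ := mul_le_mul_of_nonneg_right (by linarith) hκp.le
        have : ε * κ * N / 2 ≥ 8 + κ := by linarith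
        have e2 : 2 * δN = ε * κ * N / 2 := by rw [hδN]; ring
        nlinarith
      have h6 : (n:ℝ) * κ = n * μ - n * lam := by rw [hκ]; ring
      linarith)
    (by
      intro s hs
      simp only [Path.extend_zero]
      have h1 := (abs_le.mp (hdim x)).2
      have h2 := (abs_le.mp (hdim (R s))).1
      rw [hsim x, hsim (R s), hRim, hYim]
      linarith)
    (by
      intro s hs
      simp only [Path.extend_one]
      have h1 := (abs_le.mp (hdim y)).1
      have h2 := (abs_le.mp (hdim (R s))).2
      rw [hsim y, hsim (R s), hRim, hYim]
      linarith)
  have hane : a ≠ 0 := by rintro rfl; simp at ha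
  have h1 : R s = C.extend t := (F.injective.iterate n) (mul_right_cancel₀ hane hst)
  have h2 := (abs_le.mp (he _ (hCA t) 0 (by simpa using hNpos.le))).1
  simp only [Function.iterate_zero, id, ← h1, Nat.cast_zero, zero_mul, sub_zero] at h2
  rw [hRre, hYre] at h2
  have : 0 ≤ Tt * (1 - s) := mul_nonneg hTp.le (by linarith [hs.2])
  linarith

/-- Lemma X. -/
lemma ei_X {F : ℂ ≃ₜ ℂ} (hF : ∀ z, ∀ m ∈ eiL, F (z + m) = F z + m) {a : ℂ} (ha : ‖a‖ = 1) {lam : ℝ}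
    (H : eiX F a lam) (hint : (interior (cRot F univ)).Nonempty) : False := by
  obtain ⟨c, -, hc⟩ := ei_disp_bound F.continuous hF
  have heq : ∀ w ∈ cRot F univ, (w * a).re = lam := by
    intro w hw
    apply le_antisymm (ei_X_le hF hc ha H hw)
    have := ei_X_le hF hc (a := -a) (by simpa using ha) (eiX_neg H) hw
    simp only [mul_neg, Complex.neg_re] at this
    linarith
  obtain ⟨w, hw⟩ := hint
  have h0 := heq w (interior_subset hw)
  have hcont : Continuous (fun t : ℝ => w + t * (starRingEnd ℂ) a) := by fun_prop
  have hmem : (fun t : ℝ => w + t * (starRingEnd ℂ) a) ⁻¹' (interior (cRot F univ)) ∈ 𝓝 (0:ℝ) :=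
    hcont.continuousAt.preimage_mem_nhds (by simpa using isOpen_interior.mem_nhds hw)
  obtain ⟨r, hr, hball⟩ := Metric.mem_nhds_iff.mp hmem
  have h1 := heq _ (interior_subset (hball (show r / 2 ∈ ball 0 r by
    rw [mem_ball, dist_zero_right, Real.norm_eq_abs, abs_of_pos (by linarith)]; linarith)))
  have haa' : (starRingEnd ℂ) a * a = 1 := by
    rw [mul_comm, Complex.mul_conj, Complex.normSq_eq_norm_sq, ha]; norm_num
  rw [add_mul, mul_assoc, haa', mul_one, Complex.add_re, Complex.ofReal_re] at h1
  linarith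


/-- Lattice saturation. -/
def eiS (U : Set ℂ) : Set ℂ := {z | ∃ u ∈ U, ∃ k ∈ eiL, z = u + k}

lemma eiL_nat {m : ℂ} (hm : m ∈ eiL) (j : ℕ) : (j : ℂ) * m ∈ eiL := by
  rw [← nsmul_eq_mul]; exact nsmul_mem hm j

lemma ei_unif {F : ℂ → ℂ} {c : ℝ} (hc : ∀ z, ‖F z - z‖ ≤ c) {W : Set ℂ} {g : ℂ → ℝ}
    (hg : Continuous g) (h : ∀ ρ ∈ cRot F W, g ρ = 0) {ε : ℝ} (hε : 0 < ε) :
    ∃ n0 : ℕ, 1 ≤ n0 ∧ ∀ n ≥ n0, ∀ u ∈ W, |g ((n:ℝ)⁻¹ • (F^[n] u - u))| < ε := by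
  by_contra! hcon
  choose n hn u hu hbad using fun i : ℕ => hcon (i + 1) (by omega)
  have hc0 : 0 ≤ c := (norm_nonneg _).trans (hc 0)
  have hnt : Tendsto n atTop atTop := tendsto_atTop_mono (fun i => (Nat.le_succ i).trans (hn i)) tendsto_id
  have hb : ∀ i, (n i : ℝ)⁻¹ • (F^[n i] (u i) - u i) ∈ closedBall (0:ℂ) c := by
    intro i
    have hpos : (0:ℝ) < n i := by
      have := hn i
      exact_mod_cast (by omega : 0 < n i)
    rw [mem_closedBall, dist_zero_right, norm_smul, norm_inv, Real.norm_natCast, inv_mul_le_iff₀ hpos]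
    exact ei_disp hc _ _
  obtain ⟨ρ, -, φ, hφ, hlim⟩ := (isCompact_closedBall (0:ℂ) c).tendsto_subseq hb
  have hρ : ρ ∈ cRot F W := ⟨fun i => n (φ i), fun i => u (φ i), hnt.comp hφ.tendsto_atTop,
    fun i => hu _, hlim⟩
  have h2 : Tendsto (fun i => |g ((n (φ i) : ℝ)⁻¹ • (F^[n (φ i)] (u (φ i)) - u (φ i)))|) atTop (𝓝 |g ρ|) :=
    (continuous_abs.tendsto _).comp ((hg.tendsto ρ).comp hlim)
  have := ge_of_tendsto' h2 (fun i => hbad (φ i))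
  rw [h ρ hρ, abs_zero] at this
  linarith

lemma ei_rot_nonempty {F : ℂ → ℂ} {c : ℝ} (hc : ∀ z, ‖F z - z‖ ≤ c) {W : Set ℂ} (hW : W.Nonempty) :
    (cRot F W).Nonempty := by
  by_contra hemp
  rw [not_nonempty_iff_eq_empty] at hemp
  obtain ⟨n0, -, h⟩ := ei_unif hc (W := W) (g := fun _ => 1) continuous_const (by simp [hemp]) one_pos
  obtain ⟨u, hu⟩ := hW
  simpa using h n0 le_rfl u hu

lemma ei_unif_re {F : ℂ → ℂ} {c : ℝ} (hc : ∀ z, ‖F z - z‖ ≤ c) {W : Set ℂ} {a : ℂ} (ha : ‖a‖ = 1)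
    {lam : ℝ} (h : ∀ ρ ∈ cRot F W, (ρ * a).re = lam) {ε : ℝ} (hε : 0 < ε) :
    ∃ A, 0 ≤ A ∧ ∀ n : ℕ, ∀ u ∈ W, |((F^[n] u - u) * a).re - n * lam| ≤ ε * n + A := by
  obtain ⟨n0, hn0, hn⟩ := ei_unif hc (W := W) (g := fun ρ => (ρ * a).re - lam) (by fun_prop)
    (fun ρ hρ => by rw [h ρ hρ, sub_self]) hε
  have hc0 : 0 ≤ c := (norm_nonneg _).trans (hc 0)
  refine ⟨n0 * (c + |lam|), by positivity, fun n u hu => ?_⟩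
  by_cases hnn : n0 ≤ n
  · have h1 := hn n hnn u hu
    have hpos : (0:ℝ) < n := by exact_mod_cast (by omega : 0 < n)
    have e : ((F^[n] u - u) * a).re - n * lam = n * ((((n:ℝ)⁻¹ • (F^[n] u - u)) * a).re - lam) := by
      rw [smul_mul_assoc, Complex.smul_re, smul_eq_mul]; field_simp
    rw [e, abs_mul, abs_of_pos hpos]
    have : 0 ≤ n0 * (c + |lam|) := by positivity
    nlinarith
  · have h1 := (ei_abs_re ha (F^[n] u - u)).trans (ei_disp hc n u)
    have h2 : (n:ℝ) ≤ n0 := by exact_mod_cast (by omega : n ≤ n0)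
    calc _ ≤ |((F^[n] u - u) * a).re| + |n * lam| := abs_sub _ _
      _ ≤ n * c + n * |lam| := by rw [abs_mul, Nat.abs_cast]; linarith
      _ = n * (c + |lam|) := by ring
      _ ≤ n0 * (c + |lam|) := mul_le_mul_of_nonneg_right h2 (by positivity)
      _ ≤ _ := by
        have : 0 ≤ ε * n := by positivity
        linarith

lemma ei_openMap_it (F : ℂ ≃ₜ ℂ) (n : ℕ) : IsOpenMap (F : ℂ → ℂ)^[n] := by
  induction n with
  | zero => simpa using IsOpenMap.id
  | succ n ih => rw [Function.iterate_succ]; exact ih.comp F.isOpenMap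

set_option maxHeartbeats 1000000 in
lemma ei_propA {F : ℂ ≃ₜ ℂ} (hF : ∀ z, ∀ m ∈ eiL, F (z + m) = F z + m)
    (hret : ∀ V : Set ℂ, IsOpen V → V.Nonempty → ∀ N : ℕ, ∃ n ≥ N, ∃ b ∈ V, ∃ b' ∈ V, ∃ m ∈ eiL,
      F^[n] b = b' + m)
    (hint : (interior (cRot F univ)).Nonempty) {U : Set ℂ} (hUo : IsOpen U) (hUc : IsConnected U)
    (hUb : Bornology.IsBounded U) {a : ℂ} (ha : ‖a‖ = 1) {lam : ℝ}
    (h : ∀ ρ ∈ cRot F (eiS U), (ρ * a).re = lam) : (cRot F (eiS U)).Subsingleton := by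
  obtain ⟨c, hc0, hc⟩ := ei_disp_bound F.continuous hF
  intro ρ1 h1 ρ2 h2
  by_contra hne
  have hane : a ≠ 0 := by rintro rfl; simp at ha
  have him : (ρ1 * a).im ≠ (ρ2 * a).im := by
    intro hi
    exact hne (mul_right_cancel₀ hane (Complex.ext ((h ρ1 h1).trans (h ρ2 h2).symm) hi))
  set κ : ℝ := |(ρ1 * a).im - (ρ2 * a).im| / 2 with hκ
  have hκp : 0 < κ := by
    have : 0 < |(ρ1 * a).im - (ρ2 * a).im| := abs_pos.mpr (sub_ne_zero.mpr him)
    positivity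
  refine ei_X hF ha (lam := lam) ?_ hint
  intro δ hδ N0
  obtain ⟨d, hd⟩ := Metric.isBounded_iff.mp hUb
  have hd' : ∀ u ∈ U, ∀ u' ∈ U, ‖u - u'‖ ≤ d := fun u hu u' hu' => by
    rw [← dist_eq_norm]; exact hd hu hu'
  have hd0 : 0 ≤ d := by
    obtain ⟨u, hu⟩ := hUc.nonempty
    exact (norm_nonneg _).trans (hd' u hu u hu)
  set ε : ℝ := δ * κ / (8 * (κ / 2 + 2)) with hε
  have hεp : 0 < ε := by positivity
  have hεe : ε * (κ / 2 + 2) = δ * κ / 8 := by rw [hε]; field_simp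
  obtain ⟨A0, hA0, hA⟩ := ei_unif_re hc ha h hεp
  have hUS : ∀ u ∈ U, u ∈ eiS U := fun u hu => ⟨u, hu, 0, eiL.zero_mem, by simp⟩
  obtain ⟨P, hP, b, hb, b', hb', M, hM, hret1⟩ := hret U hUo hUc.nonempty
    (⌈(d + A0) * 8 / (δ * κ)⌉₊ + 1)
  have hP1 : 1 ≤ P := by omega
  have hPpos : (0:ℝ) < P := by exact_mod_cast hP1
  have hPd : (d + A0) ≤ P * (δ * κ / 8) := by
    have h3 : (d + A0) * 8 / (δ * κ) ≤ P := (Nat.le_ceil _).trans (by exact_mod_cast (by omega))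
    rw [div_le_iff₀ (by positivity)] at h3
    linarith
  -- choose the rotation vector
  obtain ⟨ρ, hρ, hρκ⟩ : ∃ ρ ∈ cRot F (eiS U), κ ≤ |(ρ * a).im - (M * a).im / P| := by
    by_contra! hcon
    have h3 := hcon ρ1 h1
    have h4 := hcon ρ2 h2
    have h5 := abs_sub_le (ρ1 * a).im ((M * a).im / P) (ρ2 * a).im
    rw [abs_sub_comm ((M * a).im / P)] at h5
    have : |(ρ1 * a).im - (ρ2 * a).im| = 2 * κ := by rw [hκ]; ring
    linarith
  obtain ⟨ni, z, hni, hz, hlim⟩ := hρ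
  have hev1 : ∀ᶠ i in atTop, ‖(ni i : ℝ)⁻¹ • (F^[ni i] (z i) - z i) - ρ‖ < κ / 4 := by
    have := (Metric.tendsto_nhds.mp hlim) (κ / 4) (by positivity)
    simpa only [dist_eq_norm] using this
  set B : ℝ := 1 + 4 * (c * P + |(M * a).im|) / κ + 8 * (d + A0) / (δ * κ) + 2 * |N0| / κ with hB
  have hev2 : ∀ᶠ i in atTop, B ≤ (ni i : ℝ) :=
    (tendsto_natCast_atTop_atTop.comp hni).eventually_ge_atTop B
  obtain ⟨i, hi1, hi2⟩ := (hev1.and hev2).exists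
  obtain ⟨u0, hu0, k0, hk0, hzk⟩ := hz i
  set n := ni i with hn
  have hp1 : 0 ≤ 4 * (c * P + |(M * a).im|) / κ := by positivity
  have hp2 : 0 ≤ 8 * (d + A0) / (δ * κ) := by positivity
  have hp3 : 0 ≤ 2 * |N0| / κ := by positivity
  have hnpos : (0:ℝ) < n := by linarith
  have hB1 : c * P + |(M * a).im| ≤ n * κ / 4 := by
    have h3 : 4 * (c * P + |(M * a).im|) / κ ≤ n := by linarith
    rw [div_le_iff₀ hκp] at h3; linarith
  have hB2 : d + A0 ≤ n * (δ * κ / 8) := by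
    have h3 : 8 * (d + A0) / (δ * κ) ≤ n := by linarith
    rw [div_le_iff₀ (by positivity)] at h3; linarith
  have hB3 : N0 ≤ n * κ / 2 := by
    have h3 : 2 * |N0| / κ ≤ n := by linarith
    rw [div_le_iff₀ hκp] at h3; linarith [le_abs_self N0]
  set q := n / P with hq
  set r := n % P with hr
  have hnqr : n = r + P * q := (Nat.mod_add_div n P).symm
  have hrP : r < P := Nat.mod_lt _ hP1
  have hrP' : (r:ℝ) ≤ P := by exact_mod_cast hrP.le
  have hnqr' : (n:ℝ) = r + P * q := by exact_mod_cast hnqr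
  have hr0 : (0:ℝ) ≤ r := Nat.cast_nonneg r
  let Gj : ℕ → ℂ → ℂ := fun j u => F^[P * j] u - j * M
  let AA : Set ℂ := ⋃ j ∈ Iic q, Gj j '' U
  have hGc : ∀ j, Continuous (Gj j) := fun j => (F.continuous.iterate _).sub continuous_const
  have hGo : ∀ j, IsOpenMap (Gj j) := fun j =>
    (Homeomorph.subRight ((j:ℂ) * M)).isOpenMap.comp (ei_openMap_it F _)
  have hAo : IsOpen AA := isOpen_biUnion fun j _ => hGo j _ hUo
  have hAc : IsPreconnected AA := by
    refine IsPreconnected.biUnion_of_chain ordConnected_Iic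
      (fun j _ => hUc.isPreconnected.image _ (hGc j).continuousOn) ?_
    intro j _ _
    refine ⟨Gj j b', ⟨b', hb', rfl⟩, b, hb, ?_⟩
    simp only [Gj, Nat.succ_eq_succ, Nat.succ_eq_add_one, Nat.mul_succ, Function.iterate_add_apply]
    rw [hret1, ei_it_add hF _ _ hM]; push_cast; ring
  have hxA : u0 ∈ AA := mem_biUnion (show (0:ℕ) ∈ Iic q by simp) ⟨u0, hu0, by simp [Gj]⟩
  have hyA : Gj q u0 ∈ AA := mem_biUnion (show q ∈ Iic q by simp) ⟨u0, hu0, rfl⟩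
  have hj : JoinedIn AA u0 (Gj q u0) :=
    (hAo.isConnected_iff_isPathConnected.mp ⟨⟨_, hxA⟩, hAc⟩).joinedIn _ hxA _ hyA
  -- length estimate
  have hlen : n * κ / 2 ≤ |(Gj q u0 * a).im - (u0 * a).im| := by
    have h3 : ‖(n : ℝ)⁻¹ • (F^[n] u0 - u0) - ρ‖ < κ / 4 := by
      rw [hzk, ei_it_add hF _ _ hk0] at hi1
      convert hi1 using 4; ring
    have h4 : |(n:ℝ)⁻¹ * ((F^[n] u0 - u0) * a).im - (ρ * a).im| < κ / 4 := by
      refine lt_of_le_of_lt ?_ h3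
      have h30 := ei_abs_im ha ((n : ℝ)⁻¹ • (F^[n] u0 - u0) - ρ)
      rw [sub_mul, Complex.sub_im, smul_mul_assoc, Complex.smul_im, smul_eq_mul] at h30
      exact h30
    have h5 : |((F^[n] u0 - F^[P * q] u0) * a).im| ≤ c * P := by
      refine (ei_abs_im ha _).trans ?_
      rw [hnqr, Function.iterate_add_apply]
      refine (ei_disp hc r _).trans ?_
      rw [mul_comm]; exact mul_le_mul_of_nonneg_left hrP' hc0
    set X := ((F^[n] u0 - u0) * a).im
    set Y := ((F^[n] u0 - F^[P * q] u0) * a).im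
    set m := (M * a).im
    have e : (Gj q u0 * a).im - (u0 * a).im = X - Y - q * m := by
      simp only [X, Y, m, Gj]
      rw [← Complex.sub_im, ← Complex.sub_im]
      have : (q:ℝ) * (M * a).im = ((q:ℂ) * (M * a)).im := by
        rw [← Complex.ofReal_natCast, Complex.im_ofReal_mul]
      rw [this, ← Complex.sub_im]; congr 1; ring
    rw [e]
    have e2 : X - Y - q * m = n * ((ρ * a).im - m / P) + n * ((n:ℝ)⁻¹ * X - (ρ * a).im) - Y
        + (r / P) * m := by
      have : (q:ℝ) = (n - r) / P := by rw [hnqr']; field_simp; ring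
      rw [this]; field_simp; ring
    have h6 : |(r / P) * m| ≤ |m| := by
      rw [abs_mul, abs_of_nonneg (by positivity)]
      have : (r:ℝ) / P ≤ 1 := (div_le_one hPpos).mpr hrP'
      nlinarith [abs_nonneg m]
    have h7 : |(n:ℝ) * ((n:ℝ)⁻¹ * X - (ρ * a).im)| ≤ n * (κ / 4) := by
      rw [abs_mul, abs_of_pos hnpos]; exact mul_le_mul_of_nonneg_left h4.le hnpos.le
    have h8 : n * κ ≤ |(n:ℝ) * ((ρ * a).im - m / P)| := by
      rw [abs_mul, abs_of_pos hnpos]; exact mul_le_mul_of_nonneg_left hρκ hnpos.le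
    rw [e2]
    have h9 : |(n:ℝ) * ((ρ * a).im - m / P)| ≤ |n * ((ρ * a).im - m / P) + n * ((n:ℝ)⁻¹ * X - (ρ * a).im) - Y
        + (r / P) * m| + |(n:ℝ) * ((n:ℝ)⁻¹ * X - (ρ * a).im)| + |Y| + |(r / P) * m| := by
      set p1 := (n:ℝ) * ((ρ * a).im - m / P)
      set p2 := (n:ℝ) * ((n:ℝ)⁻¹ * X - (ρ * a).im)
      set p4 := (r / P) * m
      have := abs_le.mp (le_refl |p1 + p2 - Y + p4|)
      have := abs_le.mp (le_refl |p2|)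
      have := abs_le.mp (le_refl |Y|)
      have := abs_le.mp (le_refl |p4|)
      rw [abs_le]; constructor <;> linarith
    linarith
  have hPM : |P * lam - (M * a).re| ≤ d + ε * P + A0 := by
    have h3 := hA P b (hUS b hb)
    have h4 := (ei_abs_re ha (b' - b)).trans (hd' b' hb' b hb)
    have e : ((F^[P] b - b) * a).re = ((b' - b) * a).re + (M * a).re := by
      rw [hret1, ← Complex.add_re]; congr 1; ring
    rw [e] at h3
    rw [abs_le] at h3 h4 ⊢
    constructor <;> linarith
  have hest : ∀ x ∈ AA, ∀ t : ℕ, (t:ℝ) ≤ n * κ / 2 →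
      |(F^[t] x * a).re - (u0 * a).re - t * lam| ≤ δ * (n * κ / 2) := by
    intro x hx t ht
    obtain ⟨j, hjq, u, hu, rfl⟩ := mem_iUnion₂.mp hx
    have hjq' : (j:ℝ) ≤ q := by exact_mod_cast hjq
    have hPj : (P:ℝ) * j ≤ n := by
      have := mul_le_mul_of_nonneg_left hjq' hPpos.le
      linarith
    have e : F^[t] (Gj j u) = F^[t + P * j] u - j * M := by
      simp only [Gj]
      have h3 := ei_it_add hF t (F^[P * j] u - j * M) (eiL_nat hM j)
      rw [sub_add_cancel] at h3
      rw [Function.iterate_add_apply, h3]; ring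
    have h3 := hA (t + P * j) u (hUS u hu)
    have h4 := (ei_abs_re ha (u - u0)).trans (hd' u hu u0 hu0)
    have h5 : |j * (P * lam - (M * a).re)| ≤ j * (d + ε * P + A0) := by
      rw [abs_mul, Nat.abs_cast]; exact mul_le_mul_of_nonneg_left hPM (Nat.cast_nonneg j)
    have e2 : (F^[t] (Gj j u) * a).re - (u0 * a).re - t * lam = ((u - u0) * a).re
        + (((F^[t + P * j] u - u) * a).re - ((t + P * j : ℕ):ℝ) * lam) + j * (P * lam - (M * a).re) := by
      rw [e]
      have : (j:ℝ) * (M * a).re = ((j:ℂ) * (M * a)).re := by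
        rw [← Complex.ofReal_natCast, Complex.re_ofReal_mul]
      rw [mul_sub, this]
      simp only [sub_mul, Complex.sub_re, mul_assoc]; push_cast; ring
    rw [e2]
    have h6 := (abs_add_three ((u - u0) * a).re (((F^[t + P * j] u - u) * a).re - ((t + P * j : ℕ):ℝ) * lam)
      (j * (P * lam - (M * a).re)))
    push_cast at h3 h6 ⊢
    have h7 : (j:ℝ) * (d + A0) ≤ n * (δ * κ / 8) := by
      calc (j:ℝ) * (d + A0) ≤ j * (P * (δ * κ / 8)) := mul_le_mul_of_nonneg_left hPd (Nat.cast_nonneg j)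
        _ = (P * j) * (δ * κ / 8) := by ring
        _ ≤ _ := mul_le_mul_of_nonneg_right hPj (by positivity)
    have h8 : ε * (t + P * j) + ε * (P * j) ≤ n * (δ * κ / 8) := by
      calc ε * (t + P * j) + ε * (P * j) ≤ ε * (n * κ / 2 + n) + ε * n := by gcongr
        _ = n * (ε * (κ / 2 + 2)) := by ring
        _ = _ := by rw [hεe]
    have h9 : 0 ≤ n * (δ * κ / 8) := by positivity
    have e3 : (j:ℝ) * (d + ε * P + A0) = j * (d + A0) + ε * (P * j) := by ring
    rw [e3] at h5
    linarith
  rcases le_total (u0 * a).im (Gj q u0 * a).im with hle | hle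
  · rw [abs_of_nonneg (by linarith)] at hlen
    exact ⟨n * κ / 2, hB3, AA, u0, Gj q u0, (u0 * a).re, hj, by linarith, hest⟩
  · rw [abs_of_nonpos (by linarith)] at hlen
    exact ⟨n * κ / 2, hB3, AA, Gj q u0, u0, (u0 * a).re, hj.symm, by linarith, hest⟩


lemma ei_unif_norm {F : ℂ → ℂ} {c : ℝ} (hc : ∀ z, ‖F z - z‖ ≤ c) {W : Set ℂ} {ρ0 : ℂ}
    (h : cRot F W = {ρ0}) {ε : ℝ} (hε : 0 < ε) :
    ∃ A, 0 ≤ A ∧ ∀ n : ℕ, ∀ u ∈ W, ‖F^[n] u - u - n * ρ0‖ ≤ ε * n + A := by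
  obtain ⟨n0, hn0, hn⟩ := ei_unif hc (W := W) (g := fun ρ => ‖ρ - ρ0‖) (by fun_prop)
    (fun ρ hρ => by rw [h, mem_singleton_iff] at hρ; rw [hρ, sub_self, norm_zero]) hε
  have hc0 : 0 ≤ c := (norm_nonneg _).trans (hc 0)
  refine ⟨n0 * (c + ‖ρ0‖), by positivity, fun n u hu => ?_⟩
  by_cases hnn : n0 ≤ n
  · have h1 := hn n hnn u hu
    have hpos : (0:ℝ) < n := by exact_mod_cast (by omega : 0 < n)
    have hne : (n:ℂ) ≠ 0 := by exact_mod_cast (by omega : n ≠ 0)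
    have e : F^[n] u - u - n * ρ0 = n * ((n:ℝ)⁻¹ • (F^[n] u - u) - ρ0) := by
      rw [Complex.real_smul]; push_cast; field_simp
    rw [abs_norm] at h1
    rw [e, norm_mul, Complex.norm_natCast]
    have : 0 ≤ n0 * (c + ‖ρ0‖) := by positivity
    nlinarith
  · have h1 := ei_disp hc n u
    have h2 : (n:ℝ) ≤ n0 := by exact_mod_cast (by omega : n ≤ n0)
    calc _ ≤ ‖F^[n] u - u‖ + ‖n * ρ0‖ := norm_sub_le _ _
      _ ≤ n * c + n * ‖ρ0‖ := by rw [norm_mul, Complex.norm_natCast]; linarith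
      _ = n * (c + ‖ρ0‖) := by ring
      _ ≤ n0 * (c + ‖ρ0‖) := mul_le_mul_of_nonneg_right h2 (by positivity)
      _ ≤ _ := by
        have : 0 ≤ ε * n := by positivity
        linarith

/-- The full orbit of the saturation. -/
def eiO (F : ℂ → ℂ) (U : Set ℂ) : Set ℂ := {x | ∃ i j : ℕ, ∃ u ∈ eiS U, F^[i] x = F^[j] u}

lemma eiS_open {U : Set ℂ} (hU : IsOpen U) : IsOpen (eiS U) := by
  have : eiS U = ⋃ k ∈ (eiL : Set ℂ), (· + k) '' U := by
    ext z; simp only [eiS, mem_ofPred_eq, mem_iUnion, mem_image, exists_prop, SetLike.mem_coe]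
    constructor
    · rintro ⟨u, hu, k, hk, rfl⟩; exact ⟨k, hk, u, hu, rfl⟩
    · rintro ⟨k, hk, u, hu, rfl⟩; exact ⟨u, hu, k, hk, rfl⟩
  rw [this]
  exact isOpen_biUnion fun k _ => (Homeomorph.addRight k).isOpenMap _ hU

lemma eiO_open (F : ℂ ≃ₜ ℂ) {U : Set ℂ} (hU : IsOpen U) : IsOpen (eiO F U) := by
  have : eiO F U = ⋃ i : ℕ, ⋃ j : ℕ, (F : ℂ → ℂ)^[i] ⁻¹' ((F : ℂ → ℂ)^[j] '' (eiS U)) := by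
    ext z; simp only [eiO, mem_ofPred_eq, mem_iUnion, mem_image, mem_preimage]
    constructor
    · rintro ⟨i, j, u, hu, h⟩; exact ⟨i, j, u, hu, h.symm⟩
    · rintro ⟨i, j, u, hu, h⟩; exact ⟨i, j, u, hu, h.symm⟩
  rw [this]
  exact isOpen_iUnion fun i => isOpen_iUnion fun j =>
    (ei_openMap_it F j _ (eiS_open hU)).preimage (F.continuous.iterate i)

lemma eiO_sub (F : ℂ → ℂ) (U : Set ℂ) : U ⊆ eiO F U := fun u hu =>
  ⟨0, 0, u, ⟨u, hu, 0, eiL.zero_mem, by simp⟩, rfl⟩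

lemma eiO_add {F : ℂ → ℂ} (hF : ∀ z, ∀ m ∈ eiL, F (z + m) = F z + m) {U : Set ℂ} {x k : ℂ}
    (hx : x ∈ eiO F U) (hk : k ∈ eiL) : x + k ∈ eiO F U := by
  obtain ⟨i, j, u, ⟨v, hv, m, hm, rfl⟩, h⟩ := hx
  refine ⟨i, j, v + m + k, ⟨v, hv, m + k, add_mem hm hk, by ring⟩, ?_⟩
  rw [ei_it_add hF _ _ hk, h, ei_it_add hF _ _ hk]

lemma eiO_map {F : ℂ → ℂ} {U : Set ℂ} {x : ℂ} : F x ∈ eiO F U ↔ x ∈ eiO F U := by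
  constructor
  · rintro ⟨i, j, u, hu, h⟩; exact ⟨i + 1, j, u, hu, by rw [Function.iterate_succ_apply, h]⟩
  · rintro ⟨i, j, u, hu, h⟩
    exact ⟨i, j + 1, u, hu, by
      rw [← Function.iterate_succ_apply, Function.iterate_succ_apply', h, Function.iterate_succ_apply']⟩

lemma eiO_map_it {F : ℂ → ℂ} {U : Set ℂ} {x : ℂ} (n : ℕ) : F^[n] x ∈ eiO F U ↔ x ∈ eiO F U := by
  induction n with
  | zero => rfl
  | succ n ih => rw [Function.iterate_succ_apply', eiO_map, ih]

lemma ei_it_homeo (F : ℂ ≃ₜ ℂ) (n : ℕ) : ∃ H : ℂ ≃ₜ ℂ, (H : ℂ → ℂ) = (F : ℂ → ℂ)^[n] := by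
  induction n with
  | zero => exact ⟨Homeomorph.refl ℂ, rfl⟩
  | succ n ih =>
    obtain ⟨H, hH⟩ := ih
    exact ⟨F.trans H, by rw [Function.iterate_succ, ← hH]; rfl⟩

lemma ei_compact_est {F : ℂ ≃ₜ ℂ} {c : ℝ}
    (hc : ∀ z, ‖F z - z‖ ≤ c) {U : Set ℂ} (hU : IsOpen U) {ρ0 : ℂ} {ε A0 : ℝ}
    (hA : ∀ n : ℕ, ∀ u ∈ eiS U, ‖F^[n] u - u - n * ρ0‖ ≤ ε * n + A0) {K : Set ℂ} (hK : IsCompact K)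
    (hKO : K ⊆ eiO F U) :
    ∃ A, 0 ≤ A ∧ ∀ x ∈ K, ∀ n : ℕ, ‖F^[n] x - x - n * ρ0‖ ≤ ε * n + A := by
  have hc0 : 0 ≤ c := (norm_nonneg _).trans (hc 0)
  refine hK.induction_on (p := fun s => ∃ A, 0 ≤ A ∧ ∀ x ∈ s, ∀ n : ℕ, ‖F^[n] x - x - n * ρ0‖ ≤ ε * n + A)
    ⟨0, le_rfl, by simp⟩ ?_ ?_ ?_
  · rintro s t hst ⟨A, hA0, hA⟩; exact ⟨A, hA0, fun x hx => hA x (hst hx)⟩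
  · rintro s t ⟨A, hA0, hA⟩ ⟨B, hB0, hB⟩
    refine ⟨A + B, by linarith, ?_⟩
    rintro x (hx | hx) n
    · have := hA x hx n; linarith
    · have := hB x hx n; linarith
  · intro x hx
    obtain ⟨i, j, u, hu, hij⟩ := hKO hx
    refine ⟨(F : ℂ → ℂ)^[i] ⁻¹' ((F : ℂ → ℂ)^[j] '' (eiS U)), mem_nhdsWithin_of_mem_nhds
      (((ei_openMap_it F j _ (eiS_open hU)).preimage (F.continuous.iterate i)).mem_nhds ⟨u, hu, hij.symm⟩),
      |A0| + 2 * ((i + j) * c), by positivity, ?_⟩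
    rintro y ⟨u, hu, huy⟩ n
    have key : ∀ n : ℕ, ‖F^[n] y - F^[n] u‖ ≤ (i + j) * c := by
      intro n
      have h1 := ei_disp hc i (F^[n] y)
      have h2 := ei_disp hc j (F^[n] u)
      have h3 : F^[i] (F^[n] y) = F^[j] (F^[n] u) := by
        rw [← Function.iterate_add_apply, add_comm, Function.iterate_add_apply, ← huy,
          ← Function.iterate_add_apply, ← Function.iterate_add_apply, add_comm]
      have e : F^[n] y - F^[n] u = -(F^[i] (F^[n] y) - F^[n] y) + (F^[j] (F^[n] u) - F^[n] u) := by
        rw [h3]; ring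
      rw [e]
      refine (norm_add_le _ _).trans ?_
      rw [norm_neg]; linarith
    have h1 := key n
    have h2 := key 0
    simp only [Function.iterate_zero, id] at h2
    have h3 := hA n u hu
    have e : F^[n] y - y - n * ρ0 = (F^[n] u - u - n * ρ0) + ((F^[n] y - F^[n] u) - (y - u)) := by ring
    rw [e]
    have h4 := norm_add_le (F^[n] u - u - n * ρ0) ((F^[n] y - F^[n] u) - (y - u))
    have h5 := norm_sub_le (F^[n] y - F^[n] u) (y - u)
    have := le_abs_self A0
    linarith

lemma ei_noloop {F : ℂ ≃ₜ ℂ} (hF : ∀ z, ∀ m ∈ eiL, F (z + m) = F z + m)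
    (hint : (interior (cRot F univ)).Nonempty) {U : Set ℂ} (hUo : IsOpen U) {ρ0 : ℂ}
    (h : cRot F (eiS U) = {ρ0}) {x k : ℂ} (hk : k ∈ eiL) (hk0 : k ≠ 0)
    (hj : JoinedIn (eiO F U) x (x + k)) : False := by
  obtain ⟨c, hc0, hc⟩ := ei_disp_bound F.continuous hF
  obtain ⟨γ, hγ⟩ := hj
  have hkp : 0 < ‖k‖ := norm_pos_iff.mpr hk0
  set K : Set ℂ := range γ with hKdef
  have hK : IsCompact K := isCompact_range γ.continuous
  have hKO : K ⊆ eiO F U := by rintro _ ⟨t, rfl⟩; exact hγ t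
  set a : ℂ := Complex.I * (starRingEnd ℂ) k * ((‖k‖⁻¹ : ℝ) : ℂ) with ha_def
  have ha : ‖a‖ = 1 := by
    rw [ha_def, norm_mul, norm_mul, Complex.norm_I, RCLike.norm_conj, Complex.norm_real, norm_inv,
      norm_norm]; field_simp
  have hka : k * a = (‖k‖ : ℝ) * Complex.I := by
    have h1 : k * (starRingEnd ℂ) k = ((‖k‖ ^ 2 : ℝ) : ℂ) := by
      rw [Complex.mul_conj, Complex.normSq_eq_norm_sq]
    calc k * a = (k * (starRingEnd ℂ) k) * Complex.I * ((‖k‖⁻¹ : ℝ) : ℂ) := by rw [ha_def]; ring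
      _ = ((‖k‖ ^ 2 * ‖k‖⁻¹ : ℝ) : ℂ) * Complex.I := by rw [h1]; push_cast; ring
      _ = _ := by congr 2; field_simp
  refine ei_X hF ha (lam := (ρ0 * a).re) ?_ hint
  intro δ hδ N0
  obtain ⟨A0, hA0, hA⟩ := ei_unif_norm hc h (ε := δ / 2) (by positivity)
  obtain ⟨A1, hA1, hA1'⟩ := ei_compact_est hc hUo hA hK hKO
  obtain ⟨d, hd⟩ := Metric.isBounded_iff.mp hK.isBounded
  have hxK : x ∈ K := ⟨0, γ.source⟩
  set AA : Set ℂ := {z | ∃ y ∈ K, ∃ j : ℕ, z = y + j * k} with hAA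
  have hjoin : ∀ J : ℕ, JoinedIn AA x (x + J * k) := by
    intro J
    induction J with
    | zero =>
      have hxA : x ∈ AA := ⟨x, hxK, 0, by simp⟩
      simpa using JoinedIn.refl hxA
    | succ J ih =>
      refine ih.trans ?_
      have e : x + ((J + 1 : ℕ) : ℂ) * k = x + k + J * k := by push_cast; ring
      rw [e]
      exact ⟨γ.map (f := fun z => z + J * k) (by fun_prop), fun t => ⟨γ t, ⟨t, rfl⟩, J, rfl⟩⟩
  obtain ⟨J, hJ⟩ := exists_nat_ge ((|N0| + 2 * (A1 + d) / δ) / ‖k‖)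
  rw [div_le_iff₀ hkp] at hJ
  have hd0 : 0 ≤ d := dist_nonneg.trans (hd hxK hxK)
  have hp : 0 ≤ 2 * (A1 + d) / δ := by positivity
  refine ⟨J * ‖k‖, by linarith [le_abs_self N0], AA, x, x + J * k, (x * a).re, hjoin J, ?_, ?_⟩
  · have : (x + J * k) * a = x * a + ((J * ‖k‖ : ℝ) : ℂ) * Complex.I := by
      rw [add_mul, mul_assoc, hka]; push_cast; ring
    rw [this, Complex.add_im, Complex.im_ofReal_mul]; simp
  · rintro _ ⟨y, hy, j, rfl⟩ n hn
    rw [ei_it_add hF n y (eiL_nat hk j)]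
    have h1 := (ei_abs_re ha _).trans (hA1' y hy n)
    have h20 : ‖y - x‖ ≤ d := by rw [← dist_eq_norm]; exact hd hy hxK
    have h2 := (ei_abs_re ha (y - x)).trans h20
    have e : ((F^[n] y + j * k) * a).re - (x * a).re - n * (ρ0 * a).re
        = ((F^[n] y - y - n * ρ0) * a).re + ((y - x) * a).re := by
      have e1 : (F^[n] y + j * k) * a = F^[n] y * a + ((j * ‖k‖ : ℝ) : ℂ) * Complex.I := by
        rw [add_mul, mul_assoc, hka]; push_cast; ring
      have e2 : (n:ℝ) * (ρ0 * a).re = ((n:ℂ) * (ρ0 * a)).re := by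
        rw [← Complex.ofReal_natCast, Complex.re_ofReal_mul]
      rw [e1, e2, Complex.add_re, Complex.re_ofReal_mul]
      simp only [sub_mul, Complex.sub_re, mul_assoc, Complex.I_re]; ring
    rw [e]
    refine (abs_add_le _ _).trans ?_
    have h3 : 2 * (A1 + d) / δ ≤ J * ‖k‖ := by linarith [abs_nonneg N0]
    rw [div_le_iff₀ hδ] at h3
    have h4 : δ / 2 * n ≤ δ / 2 * (J * ‖k‖) := mul_le_mul_of_nonneg_left hn (by positivity)
    linarith

lemma ei_single {F : ℂ ≃ₜ ℂ} (hF : ∀ z, ∀ m ∈ eiL, F (z + m) = F z + m)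
    (hret : ∀ V : Set ℂ, IsOpen V → V.Nonempty → ∀ N : ℕ, ∃ n ≥ N, ∃ b ∈ V, ∃ b' ∈ V, ∃ m ∈ eiL,
      F^[n] b = b' + m)
    (hint : (interior (cRot F univ)).Nonempty) {U : Set ℂ} (hUo : IsOpen U) (hUc : IsConnected U)
    (hUb : Bornology.IsBounded U) {ρ0 : ℂ} (h : cRot F (eiS U) = {ρ0}) :
    ∃ p : ℕ, 1 ≤ p ∧ ∃ m ∈ eiL, (p : ℂ) * ρ0 = m ∧ ∃ D : Set ℂ, IsOpen D ∧ IsConnected D ∧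
      IsSimplyConnected D ∧ U ⊆ D ∧ (∀ k ∈ eiL, k ≠ 0 → Disjoint D ((· + k) '' D)) ∧
      (∀ z ∈ D, F^[p] z - m ∈ D) ∧ (∀ z ∈ D, ∃ y ∈ D, F^[p] y = z + m) ∧ ∃ z ∈ D, F^[p] z = z + m := by
  obtain ⟨c, hc0, hc⟩ := ei_disp_bound F.continuous hF
  set O := eiO F U with hO
  have hOo : IsOpen O := eiO_open F hUo
  let cc : ℂ → Set ℂ := connectedComponentIn O
  have hccT : ∀ x ∈ O, ∀ k ∈ eiL, (· + k) '' cc x = cc (x + k) := by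
    intro x hx k hk
    have h1 := (Homeomorph.addRight k).image_connectedComponentIn hx
    have h2 : (Homeomorph.addRight k) '' O = O := by
      apply Subset.antisymm
      · rintro _ ⟨y, hy, rfl⟩; exact eiO_add hF hy hk
      · intro y hy
        exact ⟨y + -k, eiO_add hF hy (neg_mem hk), by simp⟩
    rw [h2] at h1
    exact h1
  have hccF : ∀ x ∈ O, ∀ n : ℕ, (F : ℂ → ℂ)^[n] '' cc x = cc (F^[n] x) := by
    intro x hx n
    obtain ⟨H, hH⟩ := ei_it_homeo F n
    have h1 := H.image_connectedComponentIn hx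
    have h2 : H '' O = O := by
      apply Subset.antisymm
      · rintro _ ⟨y, hy, rfl⟩; rw [hH]; exact (eiO_map_it n).mpr hy
      · intro y hy
        refine ⟨H.symm y, (eiO_map_it n).mp ?_, by simp⟩
        rw [← hH]; simpa using hy
    rw [h2, hH] at h1
    exact h1
  have hTcc : ∀ x ∈ O, ∀ y ∈ O, ∀ k ∈ eiL, cc x = cc y → cc (x + k) = cc (y + k) := by
    intro x hx y hy k hk hxy
    rw [← hccT x hx k hk, ← hccT y hy k hk, hxy]
  have hFcc : ∀ x ∈ O, ∀ y ∈ O, ∀ n : ℕ, cc x = cc y → cc (F^[n] x) = cc (F^[n] y) := by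
    intro x hx y hy n hxy
    rw [← hccF x hx n, ← hccF y hy n, hxy]
  have hmem : ∀ x ∈ O, x ∈ cc x := fun x hx => mem_connectedComponentIn hx
  have hopen : ∀ x, IsOpen (cc x) := fun x => hOo.connectedComponentIn
  have hsubO : ∀ x, cc x ⊆ O := fun x => connectedComponentIn_subset _ _
  have hceq : ∀ x y, y ∈ cc x → cc x = cc y := fun x y hy => connectedComponentIn_eq hy
  have hnl : ∀ x ∈ O, ∀ k ∈ eiL, cc x = cc (x + k) → k = 0 := by
    intro x hx k hk hxk
    by_contra hk0
    have h1 : IsConnected (cc x) := isConnected_connectedComponentIn_iff.mpr hx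
    have h2 : x + k ∈ cc x := by rw [hxk]; exact hmem _ (eiO_add hF hx hk)
    exact ei_noloop hF hint hUo h hk hk0
      ((((hopen x).isConnected_iff_isPathConnected.mp h1).joinedIn x (hmem x hx) _ h2).mono (hsubO x))
  obtain ⟨x0, hx0⟩ := hUc.nonempty
  have hUO : U ⊆ O := eiO_sub F U
  have hx0O : x0 ∈ O := hUO hx0
  set W := cc x0 with hW
  have hUW : U ⊆ W := hUc.isPreconnected.subset_connectedComponentIn hx0 hUO
  have hcW : ∀ y ∈ W, cc y = cc x0 := fun y hy => (hceq x0 y hy).symm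
  -- return relation
  have hretW : ∀ n : ℕ, ∀ b ∈ W, ∀ b' ∈ W, ∀ k ∈ eiL, F^[n] b = b' + k → cc (F^[n] x0) = cc (x0 + k) := by
    intro n b hb b' hb' k hk hbk
    rw [hFcc x0 hx0O b (hsubO _ hb) n (hcW b hb).symm, hbk]
    exact hTcc b' (hsubO _ hb') x0 hx0O k hk (hcW b' hb')
  have hex : ∃ n : ℕ, 1 ≤ n ∧ ∃ m ∈ eiL, cc (F^[n] x0) = cc (x0 + m) := by
    obtain ⟨n, hn, b, hb, b', hb', m, hm, hbm⟩ := hret U hUo hUc.nonempty 1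
    exact ⟨n, hn, m, hm, hretW n b (hUW hb) b' (hUW hb') m hm hbm⟩
  classical
  set p := Nat.find hex with hp
  obtain ⟨hp1, m, hm, hpm⟩ := Nat.find_spec hex
  have hmin : ∀ r, r < p → ¬ (1 ≤ r ∧ ∃ m ∈ eiL, cc (F^[r] x0) = cc (x0 + m)) := fun r hr =>
    Nat.find_min hex hr
  rw [← hp] at hp1 hpm
  have hFO : ∀ n : ℕ, ∀ x ∈ O, F^[n] x ∈ O := fun n x hx => (eiO_map_it n).mpr hx
  have hTO : ∀ x ∈ O, ∀ k ∈ eiL, x + k ∈ O := fun x hx k hk => eiO_add hF hx hk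
  have hpow : ∀ q : ℕ, cc (F^[p * q] x0) = cc (x0 + q * m) := by
    intro q
    induction q with
    | zero => simp
    | succ q ih =>
      rw [Nat.mul_succ, Function.iterate_add_apply,
        hFcc _ (hFO p x0 hx0O) _ (hTO x0 hx0O m hm) (p * q) hpm, ei_it_add hF _ _ hm,
        hTcc _ (hFO _ x0 hx0O) _ (hTO x0 hx0O _ (eiL_nat hm q)) m hm ih]
      congr 1; push_cast; ring
  have hdiv : ∀ n : ℕ, ∀ k ∈ eiL, cc (F^[n] x0) = cc (x0 + k) → n = p * (n / p) ∧ k = (n / p : ℕ) * m := by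
    intro n k hk hnk
    set q := n / p
    set r := n % p
    have hnqr : n = r + p * q := (Nat.mod_add_div n p).symm
    have hqm := eiL_nat hm q
    have h1 : cc (F^[r] x0 + q * m) = cc (x0 + k) := by
      rw [← hnk, hnqr, Function.iterate_add_apply,
        hFcc _ (hFO _ x0 hx0O) _ (hTO x0 hx0O _ hqm) r (hpow q), ei_it_add hF _ _ hqm]
    have h2 : cc (F^[r] x0) = cc (x0 + (k - q * m)) := by
      have := hTcc _ (hTO _ (hFO r x0 hx0O) _ hqm) _ (hTO x0 hx0O k hk) _ (neg_mem hqm) h1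
      convert this using 2 <;> ring
    have hkq : k - q * m ∈ eiL := sub_mem hk hqm
    have hr0 : r = 0 := by
      by_contra hr
      exact hmin r (Nat.mod_lt _ hp1) ⟨by omega, _, hkq, h2⟩
    refine ⟨by omega, ?_⟩
    rw [hr0] at h2
    have := hnl x0 hx0O _ hkq h2
    exact sub_eq_zero.mp this
  have hpC : (p:ℂ) ≠ 0 := by exact_mod_cast (by omega : p ≠ 0)
  -- the rotation vector
  have hρ : (p : ℂ) * ρ0 = m := by
    by_contra hne
    set η := ‖m - p * ρ0‖ with hη
    have hηp : 0 < η := norm_pos_iff.mpr (sub_ne_zero.mpr (Ne.symm hne))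
    have hpR : (0:ℝ) < p := by exact_mod_cast hp1
    obtain ⟨A, hA0, hA⟩ := ei_unif_norm hc h (ε := η / (2 * p)) (by positivity)
    obtain ⟨d, hd⟩ := Metric.isBounded_iff.mp hUb
    obtain ⟨N, hN⟩ := exists_nat_gt ((A + |d|) * (2 * p) / η)
    obtain ⟨n, hn, b, hb, b', hb', k, hk, hbk⟩ := hret U hUo hUc.nonempty N
    obtain ⟨h1, h2⟩ := hdiv n k hk (hretW n b (hUW hb) b' (hUW hb') k hk hbk)
    have h3 := hA n b ⟨b, hb, 0, eiL.zero_mem, by simp⟩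
    set q := n / p
    have hnq : (n:ℂ) = p * q := by exact_mod_cast h1
    have hnq' : (n:ℝ) = p * q := by exact_mod_cast h1
    have e : F^[n] b - b - n * ρ0 = q * (m - p * ρ0) - (b - b') := by
      rw [hbk, h2, hnq]; ring
    rw [e] at h3
    have h4 : ‖(q:ℂ) * (m - p * ρ0)‖ = q * η := by rw [norm_mul, Complex.norm_natCast]
    have h5 := norm_sub_norm_le ((q:ℂ) * (m - p * ρ0)) (b - b')
    have h6 : ‖b - b'‖ ≤ d := by rw [← dist_eq_norm]; exact hd hb hb'
    have h7 : (A + |d|) * (2 * p) / η < n := hN.trans_le (by exact_mod_cast hn)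
    rw [div_lt_iff₀ hηp] at h7
    have h8 : η / (2 * p) * n = q * η / 2 := by rw [hnq']; field_simp
    rw [hnq'] at h7
    have h9 : (p:ℝ) * (2 * (A + |d|)) < p * (q * η) := by linarith
    have h10 := lt_of_mul_lt_mul_left h9 hpR.le
    linarith [le_abs_self d]
  refine ⟨p, hp1, m, hm, hρ, eiFill W, ?_⟩
  have hWo : IsOpen W := hopen x0
  have hWc : IsConnected W := isConnected_connectedComponentIn_iff.mpr hx0O
  have hDo := eiFill_open hWo
  have hDc := eiFill_conn hWo hWc
  have hDs : IsSimplyConnected (eiFill W) := ei_simply hDo hDc (fun z hz => eiFill_compl hz)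
  obtain ⟨H, hH⟩ := ei_it_homeo F p
  let g : ℂ ≃ₜ ℂ := H.trans (Homeomorph.subRight m)
  have hg : ∀ z, g z = F^[p] z - m := by intro z; rw [← hH]; rfl
  have hgM : ∀ z, ‖g z - z‖ ≤ p * c + ‖m‖ := by
    intro z
    rw [hg]
    have e : F^[p] z - m - z = (F^[p] z - z) - m := by ring
    rw [e]
    exact (norm_sub_le _ _).trans (by linarith [ei_disp hc p z])
  have hgW : g '' W = W := by
    have h1 := hccF x0 hx0O p
    rw [hpm, ← hccT x0 hx0O m hm] at h1
    apply Subset.antisymm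
    · rintro _ ⟨z, hz, rfl⟩
      have h2 : F^[p] z ∈ (· + m) '' cc x0 := by rw [← h1]; exact ⟨z, hz, rfl⟩
      obtain ⟨y, hy, hyz⟩ := h2
      rw [hg, ← hyz]; simpa using hy
    · intro z hz
      have h2 : z + m ∈ (F : ℂ → ℂ)^[p] '' cc x0 := by rw [h1]; exact ⟨z, hz, rfl⟩
      obtain ⟨y, hy, hyz⟩ := h2
      exact ⟨y, hy, by rw [hg, hyz]; ring⟩
  have hgD : g '' (eiFill W) = eiFill W := by rw [eiFill_map g hgM, hgW]
  have hgit : ∀ (q : ℕ) (z : ℂ), g^[q] z = F^[p * q] z - q * m := by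
    intro q
    induction q with
    | zero => intro z; simp
    | succ q ih =>
      intro z
      rw [Function.iterate_succ_apply, ih, hg, Nat.mul_succ, Function.iterate_add_apply]
      have := ei_it_add hF (p * q) (F^[p] z - m) hm
      rw [sub_add_cancel] at this
      rw [this]; push_cast; ring
  have hfix : ∃ z ∈ eiFill W, g z = z := by
    refine ei_fixed g.continuous g.injective hgM hDs hDo ?_ (eiFill_sub W) hWo hWc ?_ ?_
    · intro z hz; rw [← hgD]; exact ⟨z, hz, rfl⟩
    · intro z hz; rw [← hgW]; exact ⟨z, hz, rfl⟩
    · intro V hVW hVo hVn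
      obtain ⟨n, hn, b, hb, b', hb', k, hk, hbk⟩ := hret V hVo hVn 1
      obtain ⟨h1, h2⟩ := hdiv n k hk (hretW n b (hVW hb) b' (hVW hb') k hk hbk)
      refine ⟨n / p, ?_, b, hb, ?_⟩
      · rcases Nat.eq_zero_or_pos (n / p) with h0 | h0
        · rw [h0] at h1; omega
        · exact h0
      · rw [hgit, ← h1, hbk, ← h2]; simpa using hb'
  refine ⟨hDo, hDc, hDs, hUW.trans (eiFill_sub W), ?_, ?_, ?_, ?_⟩
  · intro k hk hk0
    refine eiFill_disj hWo hWc hk0 ?_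
    rw [Set.disjoint_left]
    rintro z hz hz2
    rw [hccT x0 hx0O k hk] at hz2
    exact hk0 (hnl x0 hx0O k hk ((hceq _ _ hz).trans (hceq _ _ hz2).symm))
  · intro z hz; rw [← hg, ← hgD]; exact ⟨z, hz, rfl⟩
  · intro z hz
    rw [← hgD] at hz
    obtain ⟨y, hy, rfl⟩ := hz
    exact ⟨y, hy, by rw [hg]; ring⟩
  · obtain ⟨z, hz, hzz⟩ := hfix
    exact ⟨z, hz, by rw [hg] at hzz; rw [← sub_eq_iff_eq_add]; exact hzz⟩


/-- Either the rotation subset is a point, or its convex hull has interior. -/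
lemma ei_main {F : ℂ ≃ₜ ℂ} (hF : ∀ z, ∀ m ∈ eiL, F (z + m) = F z + m)
    (hret : ∀ V : Set ℂ, IsOpen V → V.Nonempty → ∀ N : ℕ, ∃ n ≥ N, ∃ b ∈ V, ∃ b' ∈ V, ∃ m ∈ eiL,
      F^[n] b = b' + m)
    (hint : (interior (cRot F univ)).Nonempty) {U : Set ℂ} (hUo : IsOpen U) (hUc : IsConnected U)
    (hUb : Bornology.IsBounded U) :
    (∃ ρ0, cRot F (eiS U) = {ρ0}) ∨ (interior (convexHull ℝ (cRot F (eiS U)))).Nonempty := by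
  by_cases hI : (interior (convexHull ℝ (cRot F (eiS U)))).Nonempty
  · exact Or.inr hI
  left
  obtain ⟨c, hc0, hc⟩ := ei_disp_bound F.continuous hF
  have hne : (cRot F (eiS U)).Nonempty := by
    refine ei_rot_nonempty hc ?_
    obtain ⟨u, hu⟩ := hUc.nonempty
    exact ⟨u, u, hu, 0, eiL.zero_mem, by simp⟩
  rw [interior_convexHull_nonempty_iff_affineSpan_eq_top] at hI
  have hne' := hne
  obtain ⟨ρ1, h1⟩ := hne'
  have hdir : vectorSpan ℝ (cRot F (eiS U)) < ⊤ := by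
    rw [lt_top_iff_ne_top]
    intro ht
    apply hI
    rw [← AffineSubspace.direction_eq_top_iff_of_nonempty ((affineSpan_nonempty ℝ).2 hne),
      direction_affineSpan, ht]
  obtain ⟨g, hg0, hg⟩ := Submodule.exists_le_ker_of_lt_top _ hdir
  set a' : ℂ := ⟨g 1, - g Complex.I⟩ with ha'
  have hga : ∀ z, g z = (z * a').re := by
    intro z
    have : z = z.re • (1:ℂ) + z.im • Complex.I := by
      apply Complex.ext <;> simp
    conv_lhs => rw [this]
    rw [map_add, map_smul, map_smul, Complex.mul_re, ha']
    simp
  have ha0 : a' ≠ 0 := by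
    intro h0
    apply hg0
    ext z <;> simp [hga, h0]
  have hn : ‖a'‖ ≠ 0 := by simpa using ha0
  have hsub := ei_propA hF hret hint hUo hUc hUb (a := (‖a'‖ : ℂ)⁻¹ * a') (lam := (ρ1 * ((‖a'‖ : ℂ)⁻¹ * a')).re)
    (by simp [hn]) (by
      intro ρ hρ
      have h2 : g (ρ - ρ1) = 0 := by
        have := hg (vsub_mem_vectorSpan ℝ hρ h1)
        simpa using this
      rw [map_sub, hga, hga, sub_eq_zero] at h2
      have h3 : ∀ w : ℂ, (w * ((‖a'‖ : ℂ)⁻¹ * a')).re = ‖a'‖⁻¹ * (w * a').re := by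
        intro w
        rw [← Complex.re_ofReal_mul]
        congr 1
        push_cast
        ring
      rw [h3, h3, h2])
  exact ⟨ρ1, hsub.eq_singleton_of_mem h1⟩

lemma ei_torus {X : Type*} [TopologicalSpace X] {P : ℂ → X} (hPc : Continuous P) (hPo : IsOpenMap P)
    (hPs : Function.Surjective P) (hP : ∀ x y, P x = P y ↔ y - x ∈ eiL) {F : ℂ ≃ₜ ℂ} {f : X → X}
    (hf : ∀ z, P (F z) = f (P z)) (hF : ∀ z, ∀ m ∈ eiL, F (z + m) = F z + m)
    (hnw : ∀ V : Set X, IsOpen V → V.Nonempty → ∃ n : ℕ, 1 ≤ n ∧ (f^[n] '' V ∩ V).Nonempty)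
    (hint : (interior (cRot F univ)).Nonempty) {U : Set X} (hUo : IsOpen U) (hUc : IsConnected U)
    (hUb : ∀ z ∈ P ⁻¹' U, Bornology.IsBounded (connectedComponentIn (P ⁻¹' U) z)) :
    (∃ ρ0 : ℂ, ((∃ q : ℚ, ρ0.re = q) ∧ ∃ q : ℚ, ρ0.im = q) ∧ cRot F (P ⁻¹' U) = {ρ0} ∧
      ∃ (p : ℕ) (D : Set X), 1 ≤ p ∧ U ⊆ D ∧ IsOpen D ∧ IsConnected D ∧
        SimplyConnectedSpace D ∧ f^[p] '' D = D ∧ ∃ z ∈ D, f^[p] z = z) ∨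
    (interior (convexHull ℝ (cRot F (P ⁻¹' U)))).Nonempty := by
  have hfn : ∀ n z, P (F^[n] z) = f^[n] (P z) := by
    intro n
    induction n with
    | zero => intro z; rfl
    | succ k ih => intro z; rw [Function.iterate_succ_apply, Function.iterate_succ_apply, ih, hf]
  have hPadd : ∀ z, ∀ m ∈ eiL, P (z + m) = P z := by
    intro z m hm
    rw [hP]
    simpa using eiL.neg_mem hm
  have hret1 : ∀ V : Set ℂ, IsOpen V → V.Nonempty → ∃ n ≥ 1, ∃ b ∈ V, ∃ b' ∈ V, ∃ m ∈ eiL,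
      F^[n] b = b' + m := by
    intro V hV hVn
    obtain ⟨n, hn, x, ⟨y, ⟨b, hb, rfl⟩, hy⟩, ⟨b', hb', hx⟩⟩ := hnw (P '' V) (hPo V hV) (hVn.image P)
    refine ⟨n, hn, b, hb, b', hb', F^[n] b - b', ?_, by ring⟩
    rw [← hP, hfn, hx, hy]
  have hret : ∀ V : Set ℂ, IsOpen V → V.Nonempty → ∀ N : ℕ, ∃ n ≥ N, ∃ b ∈ V, ∃ b' ∈ V, ∃ m ∈ eiL,
      F^[n] b = b' + m := by
    intro V hV hVn N
    induction N generalizing V with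
    | zero =>
      obtain ⟨n, hn, h⟩ := hret1 V hV hVn
      exact ⟨n, Nat.zero_le _, h⟩
    | succ k ih =>
      obtain ⟨n, hn, b, hb, b', hb', m, hm, h⟩ := hret1 V hV hVn
      have hV1 : IsOpen (V ∩ (fun z => F^[n] z - m) ⁻¹' V) :=
        hV.inter (hV.preimage ((F.continuous.iterate n).sub continuous_const))
      obtain ⟨j, hj, c, hc, c', hc', m', hm', h'⟩ := ih _ hV1 ⟨b, hb, by simpa [h] using hb'⟩
      refine ⟨n + j, by omega, c, hc.1, _, hc'.2, m + m', eiL.add_mem hm hm', ?_⟩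
      rw [Function.iterate_add_apply, h', ei_it_add hF _ _ hm']
      ring
  obtain ⟨u0, hu0⟩ := hUc.nonempty
  obtain ⟨x0, rfl⟩ := hPs u0
  set W := P ⁻¹' U with hW
  have hWo : IsOpen W := hUo.preimage hPc
  have hWT : ∀ m ∈ eiL, (Homeomorph.addRight m) '' W = W := by
    intro m hm
    ext z
    constructor
    · rintro ⟨w, hw, rfl⟩
      show P (w + m) ∈ U
      rw [hPadd _ _ hm]; exact hw
    · intro hz
      refine ⟨z - m, ?_, by simp⟩
      show P (z - m) ∈ U
      rw [sub_eq_add_neg, hPadd _ _ (eiL.neg_mem hm)]; exact hz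
  have hcT : ∀ x ∈ W, ∀ m ∈ eiL, (· + m) '' connectedComponentIn W x = connectedComponentIn W (x + m) := by
    intro x hx m hm
    have := (Homeomorph.addRight m).image_connectedComponentIn hx
    rw [hWT m hm] at this
    exact this
  have hcW : ∀ x, connectedComponentIn W x ⊆ W := fun x => connectedComponentIn_subset _ _
  have hco : ∀ x, IsOpen (connectedComponentIn W x) := fun x => hWo.connectedComponentIn
  set C := connectedComponentIn W x0 with hC
  have hPC : P '' C = U := by
    apply Subset.antisymm
    · rintro _ ⟨z, hz, rfl⟩; exact hcW _ hz
    · intro u hu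
      by_contra hn
      obtain ⟨z, hz, hz1, hz2⟩ := hUc.isPreconnected (P '' C) (⋃ y ∈ {y | y ∈ W ∧ P y ∉ P '' C}, P '' connectedComponentIn W y)
        (hPo _ (hco _)) (isOpen_biUnion fun y _ => hPo _ (hco _)) (by
          intro v hv
          by_cases hvC : v ∈ P '' C
          · exact Or.inl hvC
          · right
            obtain ⟨y, rfl⟩ := hPs v
            exact mem_biUnion (show y ∈ {y | y ∈ W ∧ P y ∉ P '' C} from ⟨hv, hvC⟩)
              ⟨y, mem_connectedComponentIn hv, rfl⟩)
        ⟨P x0, hu0, x0, mem_connectedComponentIn hu0, rfl⟩ (by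
          obtain ⟨y, rfl⟩ := hPs u
          exact ⟨P y, hu, mem_biUnion (show y ∈ {y | y ∈ W ∧ P y ∉ P '' C} from ⟨hu, hn⟩)
              ⟨y, mem_connectedComponentIn hu, rfl⟩⟩)
      simp only [mem_iUnion] at hz2
      obtain ⟨y, ⟨hyW, hyC⟩, w, hw, hwz⟩ := hz2
      obtain ⟨v, hv, rfl⟩ := hz1
      apply hyC
      have hm := (hP _ _).1 hwz
      have hvw : v = w + (v - w) := by ring
      have h1 : connectedComponentIn W (y + (v - w)) = C := by
        have : v ∈ connectedComponentIn W (y + (v - w)) := by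
          rw [← hcT y hyW _ hm]
          exact ⟨w, hw, by simp⟩
        rw [connectedComponentIn_eq this, ← connectedComponentIn_eq hv]
      refine ⟨y + (v - w), ?_, hPadd _ _ hm⟩
      rw [← h1]
      apply mem_connectedComponentIn
      show P _ ∈ U
      rw [hPadd _ _ hm]; exact hyW
  have hSC : eiS C = W := by
    ext z
    constructor
    · rintro ⟨u, hu, k, hk, rfl⟩
      show P _ ∈ U
      rw [hPadd _ _ hk]; exact hcW _ hu
    · intro hz
      have : P z ∈ P '' C := by rw [hPC]; exact hz
      obtain ⟨u, hu, huz⟩ := this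
      exact ⟨u, hu, z - u, (hP _ _).1 huz, by ring⟩
  have hCc : IsConnected C := isConnected_connectedComponentIn_iff.2 hu0
  rcases ei_main hF hret hint (hco x0) hCc (hUb x0 hu0) with ⟨ρ0, h0⟩ | h
  swap
  · right; rw [← hSC]; exact h
  left
  obtain ⟨p, hp, m, hm, hpm, D, hDo, hDc, hDs, hCD, hDd, hD1, hD2, z0, hz0, hz0'⟩ :=
    ei_single hF hret hint (hco x0) hCc (hUb x0 hu0) h0
  have hp0 : (p:ℝ) ≠ 0 := by positivity
  refine ⟨ρ0, ?_, by rw [← hSC]; exact h0, p, P '' D, hp, ?_, hPo _ hDo, hDc.image _ hPc.continuousOn, ?_, ?_, ?_⟩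
  · obtain ⟨⟨a, ha⟩, ⟨b, hb⟩⟩ := hm
    rw [← hpm] at ha hb
    refine ⟨⟨a / p, ?_⟩, ⟨b / p, ?_⟩⟩
    · push_cast; rw [← ha]; simp; field_simp
    · push_cast; rw [← hb]; simp; field_simp
  · rw [← hPC]; exact image_mono hCD
  · have hinj : Function.Injective (D.domRestrict P) := by
      rintro ⟨x, hx⟩ ⟨y, hy⟩ hxy
      have hk := (hP _ _).1 (show P x = P y from hxy)
      by_contra hne
      have hne' : y - x ≠ 0 := by
        intro h; apply hne; rw [Subtype.mk.injEq]; exact (sub_eq_zero.1 h).symm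
      exact disjoint_left.1 (hDd _ hk hne') hy ⟨x, hx, by simp⟩
    have hemb : IsOpenEmbedding (D.domRestrict P) :=
      IsOpenEmbedding.of_continuous_injective_isOpenMap (hPc.comp continuous_subtype_val) hinj
        (hPo.comp hDo.isOpenMap_subtype_val)
    have hs : SimplyConnectedSpace D := hDs
    have hr : range (D.domRestrict P) = P '' D := range_domRestrict P D
    rw [← hr]
    exact hemb.isEmbedding.toHomeomorph.symm.toHomotopyEquiv.simplyConnectedSpace
  · ext v
    constructor
    · rintro ⟨_, ⟨z, hz, rfl⟩, rfl⟩
      refine ⟨_, hD1 z hz, ?_⟩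
      rw [sub_eq_add_neg, hPadd _ _ (eiL.neg_mem hm), hfn]
    · rintro ⟨z, hz, rfl⟩
      obtain ⟨y, hy, h⟩ := hD2 z hz
      refine ⟨P y, ⟨y, hy, rfl⟩, ?_⟩
      rw [← hfn, h, hPadd _ _ hm]
  · exact ⟨P z0, ⟨z0, hz0, rfl⟩, by rw [← hfn, hz0', hPadd _ _ hm]⟩

/-- **Main theorem (elliptic islands dichotomy).**
If `f` is non-wandering and `ρ(F)` has non-empty interior, then for every open,
bounded and connected `U ⊆ T²` either (i) `ρ_U(F)` is a single rational vector and
`U` lies in a periodic embedded open topological disk containing a periodic point,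
or (ii) the convex hull of `ρ_U(F)` has non-empty interior. -/
theorem elliptic_islands_dichotomy
    (F : E 2 ≃ₜ E 2) (f : T 2 ≃ₜ T 2) (hlift : IsLift F f)
    (hnw : ∀ V : Set (T 2), IsOpen V → V.Nonempty →
      ∃ n : ℕ, 1 ≤ n ∧ ((⇑f)^[n] '' V ∩ V).Nonempty)
    (hint : (interior (rotSet (⇑F))).Nonempty)
    (U : Set (T 2)) (hUopen : IsOpen U) (hUbdd : BoundedSet U) (hUconn : IsConnected U) :
    (∃ ρ : E 2, RatVec ρ ∧ rotU (⇑F) U = {ρ} ∧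
      ∃ (p : ℕ) (D : Set (T 2)), 1 ≤ p ∧ U ⊆ D ∧ IsOpen D ∧ IsConnected D ∧
        SimplyConnectedSpace D ∧ (⇑f)^[p] '' D = D ∧ ∃ z ∈ D, (⇑f)^[p] z = z) ∨
    (interior (convexHull ℝ (rotU (⇑F) U))).Nonempty := by
  let φ := Complex.orthonormalBasisOneI.repr
  have hφ0 : ∀ z, (φ z) 0 = z.re := fun z => by simp [φ, Complex.orthonormalBasisOneI_repr_apply]
  have hφ1 : ∀ z, (φ z) 1 = z.im := fun z => by simp [φ, Complex.orthonormalBasisOneI_repr_apply]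
  have hφL : ∀ z, φ z ∈ ZLat 2 ↔ z ∈ eiL := by
    intro z
    constructor
    · intro h
      refine ⟨?_, ?_⟩
      · have := h 0
        rwa [hφ0] at this
      · have := h 1
        rwa [hφ1] at this
    · rintro ⟨h0, h1⟩ i
      fin_cases i
      · simpa [hφ0] using h0
      · simpa [hφ1] using h1
  let H : ℂ ≃ₜ E 2 := φ.toHomeomorph
  have hH : ∀ z, H z = φ z := fun z => rfl
  have hHs : ∀ z, H.symm z = φ.symm z := fun z => rfl
  let G : ℂ ≃ₜ ℂ := (H.trans F).trans H.symm
  have hG : ∀ z, G z = φ.symm (F (φ z)) := fun z => rfl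
  have hGn : ∀ n z, φ (G^[n] z) = F^[n] (φ z) := by
    intro n
    induction n with
    | zero => intro z; rfl
    | succ k ih =>
      intro z
      rw [Function.iterate_succ_apply, Function.iterate_succ_apply, ih, hG,
        LinearIsometryEquiv.apply_symm_apply]
  have hrot : ∀ W : Set (E 2), rotRel F W = φ '' cRot G (φ ⁻¹' W) := by
    intro W
    ext ρ
    constructor
    · rintro ⟨n, z, hn, hz, ht⟩
      refine ⟨φ.symm ρ, ⟨n, fun i => φ.symm (z i), hn, fun i => by simpa using hz i, ?_⟩, by simp⟩
      have := (φ.symm.continuous.tendsto ρ).comp ht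
      refine this.congr fun i => ?_
      have h5 : G^[n i] (φ.symm (z i)) = φ.symm (F^[n i] (z i)) := by
        apply φ.injective
        rw [hGn, LinearIsometryEquiv.apply_symm_apply, LinearIsometryEquiv.apply_symm_apply]
      rw [h5, Function.comp_apply, map_smul, map_sub]
    · rintro ⟨ρ, ⟨n, z, hn, hz, ht⟩, rfl⟩
      refine ⟨n, fun i => φ (z i), hn, hz, ?_⟩
      have := (φ.continuous.tendsto ρ).comp ht
      refine this.congr fun i => ?_
      rw [Function.comp_apply, map_smul, map_sub, hGn]
  let P : ℂ → T 2 := fun z => tpi 2 (φ z)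
  have key := ei_torus (P := P) (F := G) (f := f) (U := U)
    (QuotientAddGroup.continuous_mk.comp φ.continuous)
    ((QuotientAddGroup.isOpenMap_coe).comp H.isOpenMap)
    ((QuotientAddGroup.mk_surjective).comp φ.surjective)
    (by
      intro x y
      rw [← hφL, map_sub, sub_eq_neg_add]
      exact QuotientAddGroup.eq)
    (by
      intro z
      show tpi 2 (φ (φ.symm (F (φ z)))) = _
      rw [LinearIsometryEquiv.apply_symm_apply, hlift.1])
    (by
      intro z m hm
      rw [hG, hG, map_add, hlift.2 _ _ ((hφL m).2 hm), map_add, LinearIsometryEquiv.symm_apply_apply])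
    hnw
    (by
      have h := hint
      rw [rotSet, hrot, preimage_univ] at h
      have h2 : φ '' cRot G univ = H '' cRot G univ := rfl
      rw [h2, ← H.image_interior] at h
      exact h.of_image)
    hUopen hUconn
    (by
      intro z hz
      have h1 := hUbdd (φ z) hz
      have h2 : P ⁻¹' U = H ⁻¹' (tpi 2 ⁻¹' U) := rfl
      have h3 := H.image_connectedComponentIn (s := P ⁻¹' U) hz
      rw [h2, H.image_preimage, hH] at h3
      rw [← h3] at h1
      rw [h2]
      have h4 := φ.symm.isometry.lipschitz.isBounded_image h1
      rw [image_image] at h4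
      simpa [hH] using h4)
  have hrU : rotU F U = φ '' cRot G (P ⁻¹' U) := hrot _
  rcases key with ⟨ρ0, ⟨⟨a, ha⟩, ⟨b, hb⟩⟩, h0, hrest⟩ | h
  · left
    refine ⟨φ ρ0, ⟨⟨a, by rw [hφ0, ha]⟩, ⟨b, by rw [hφ1, hb]⟩⟩, ?_, hrest⟩
    rw [hrU, h0, image_singleton]
  · right
    rw [hrU]
    have h2 : convexHull ℝ (φ '' cRot G (P ⁻¹' U)) = H '' convexHull ℝ (cRot G (P ⁻¹' U)) :=
      (LinearMap.image_convexHull (φ.toLinearEquiv : ℂ →ₗ[ℝ] E 2) _).symm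
    rw [h2, ← H.image_interior]
    exact h.image _
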